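/- Let a ≥ 0 and let (q,r) and (q̃,r̃) be two a-admissible pairs, with conjugate exponents q̃', r̃'. There exists a constant C(a,r,r̃) > 0 such that for every φ ∈ 𝒮⁺ and F ∈ 𝕊⁺, the function u(x,t) = ∫₀^∞ S_a(x,y,t) φ(y) y^a dy + ∫₀^t ∫₀^∞ S_a(x,y,t−s) F(y,s) y^a dy ds satisfies ‖u‖_{L^q_t L^r_a} ≤ C(a,r,r̃) (‖φ‖_{L²_a} + ‖F‖_{L^{q̃'}_t L^{r̃'}_a}). -/

import Mathlib

open MeasureTheory Filter Set

noncomputable def besselJ (ν : ℂ) (z : ℝ) : ℂ :=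
  ∑' k : ℕ, ((-1 : ℂ) ^ k / (Complex.Gamma (k + 1) * Complex.Gamma (ν + k + 1))) *
    ((z : ℂ) / 2) ^ (2 * (k : ℂ) + ν)

noncomputable def DIter : ℕ → (ℝ → ℂ) → (ℝ → ℂ)
  | 0, φ => φ
  | k + 1, φ => fun x => (1 / (x : ℂ)) * deriv (DIter k φ) x

def SPlus (φ : ℝ → ℂ) : Prop :=
  ContDiffOn ℝ (⊤ : ℕ∞) φ (Ioi 0) ∧
  ∀ m k : ℕ, ∃ C : ℝ, ∀ x > (0:ℝ), ‖(x : ℂ) ^ m * DIter k φ x‖ ≤ C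

noncomputable def Skernel (a x y t : ℝ) : ℂ :=
  if 0 < t then
    Complex.exp (-(Complex.I) * (((a + 1) * Real.pi / 4 : ℝ) : ℂ)) *
      (((2 * |t|) ^ (-(a + 1) / 2) : ℝ) : ℂ) *
      (((x * y / (2 * |t|)) ^ ((1 - a) / 2) : ℝ) : ℂ) *
      besselJ (((a - 1) / 2 : ℝ) : ℂ) (x * y / (2 * |t|)) *
      Complex.exp (Complex.I * ((((x ^ 2 + y ^ 2) / (4 * |t|)) : ℝ) : ℂ))
  else
    Complex.exp ((Complex.I) * (((a + 1) * Real.pi / 4 : ℝ) : ℂ)) *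
      (((2 * |t|) ^ (-(a + 1) / 2) : ℝ) : ℂ) *
      (((x * y / (2 * |t|)) ^ ((1 - a) / 2) : ℝ) : ℂ) *
      besselJ (((a - 1) / 2 : ℝ) : ℂ) (x * y / (2 * |t|)) *
      Complex.exp (-(Complex.I) * ((((x ^ 2 + y ^ 2) / (4 * |t|)) : ℝ) : ℂ))

noncomputable def Sop (a t : ℝ) (φ : ℝ → ℂ) (x : ℝ) : ℂ :=
  ∫ y in Ioi (0:ℝ), Skernel a x y t * φ y * ((y ^ a : ℝ) : ℂ)

noncomputable def LrA (a r : ℝ) (f : ℝ → ℂ) : ℝ :=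
  (∫ x in Ioi (0:ℝ), ‖f x‖ ^ r * x ^ a) ^ (1 / r)

noncomputable def mixedNorm (a q r : ℝ) (u : ℝ → ℝ → ℂ) : ℝ :=
  (∫ t : ℝ, LrA a r (fun x => u x t) ^ q) ^ (1 / q)

def Admissible (a q r : ℝ) : Prop :=
  2 < r ∧ (1 < a → r < 2 * (a + 1) / (a - 1)) ∧ 2 / q = (a + 1) * (1 / 2 - 1 / r)

noncomputable def DxIter : ℕ → (ℝ → ℝ → ℂ) → (ℝ → ℝ → ℂ)
  | 0, F => F
  | k + 1, F => fun x t => (1 / (x : ℂ)) * deriv (fun x' => DxIter k F x' t) x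

noncomputable def DtIter (l : ℕ) (F : ℝ → ℝ → ℂ) : ℝ → ℝ → ℂ :=
  fun x t => iteratedDeriv l (fun t' => F x t') t

def SPlusT (F : ℝ → ℝ → ℂ) : Prop :=
  ContDiffOn ℝ (⊤ : ℕ∞) (fun p : ℝ × ℝ => F p.1 p.2) (Ioi 0 ×ˢ univ) ∧
  ∀ p : ℕ, ∃ C : ℝ, ∀ k l : ℕ, k + l ≤ p → ∀ x > (0:ℝ), ∀ t : ℝ,
    (1 + x ^ 2 + t ^ 2) ^ ((p : ℝ) / 2) * ‖DxIter k (DtIter l F) x t‖ ≤ C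

open scoped ENNReal

namespace Strichartz

open Real in
/-- Coefficients of the power series of `w ↦ z ^ (-ν) J_ν(z)` in the variable `w = z ^ 2`. -/
noncomputable def besselCoeff (ν : ℝ) (k : ℕ) : ℝ :=
  (-1) ^ k * (1 / 2) ^ (2 * k) * (1 / 2 : ℝ) ^ ν / (k.factorial * Gamma (ν + k + 1))

/-- The entire function `w ↦ z ^ (-ν) J_ν(z)` of `w = z ^ 2`. -/
noncomputable def besselSeries (ν w : ℝ) : ℝ := ∑' k, besselCoeff ν k * w ^ k

lemma half_Gamma_le {ν : ℝ} (hν : -1 / 2 ≤ ν) (k : ℕ) :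
    Real.Gamma (ν + 1) / 2 ≤ Real.Gamma (ν + k + 1) := by
  have hpos : 0 < Real.Gamma (ν + 1) := Real.Gamma_pos_of_pos (by linarith)
  induction k with
  | zero => simp; linarith
  | succ n ih =>
    rcases Nat.eq_zero_or_pos n with rfl | hn
    · have := Real.Gamma_add_one (s := ν + 1) (by linarith)
      simp only [zero_add, Nat.cast_one]
      rw [this]; nlinarith
    · have hn' : (1 : ℝ) ≤ n := by exact_mod_cast hn
      have := Real.Gamma_add_one (s := ν + n + 1) (by linarith)
      have e : ν + ((n + 1 : ℕ) : ℝ) + 1 = ν + n + 1 + 1 := by push_cast; ring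
      rw [e, this]; nlinarith

lemma abs_besselCoeff_le {ν : ℝ} (hν : -1 / 2 ≤ ν) (k : ℕ) :
    |besselCoeff ν k| ≤ (2 * (1 / 2 : ℝ) ^ ν / Real.Gamma (ν + 1)) / k.factorial := by
  have hpos : 0 < Real.Gamma (ν + 1) := Real.Gamma_pos_of_pos (by linarith)
  have h2 := half_Gamma_le hν k
  have h3 : 0 < Real.Gamma (ν + k + 1) := by linarith
  have hf : (0 : ℝ) < k.factorial := by exact_mod_cast k.factorial_pos
  have hp : (0 : ℝ) < (1 / 2 : ℝ) ^ ν := by positivity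
  unfold besselCoeff
  rw [abs_div, abs_mul, abs_mul, abs_pow, abs_neg, abs_one, one_pow, one_mul,
    abs_of_pos (by positivity : (0 : ℝ) < k.factorial * Real.Gamma (ν + k + 1)),
    abs_of_pos hp, abs_of_pos (by positivity), div_div, div_le_div_iff₀ (by positivity)
      (by positivity)]
  have h1 : ((1 : ℝ) / 2) ^ (2 * k) ≤ 1 := pow_le_one₀ (by norm_num) (by norm_num)
  calc (1 / 2 : ℝ) ^ (2 * k) * (1 / 2) ^ ν * (Real.Gamma (ν + 1) * k.factorial)
      ≤ 1 * (1 / 2) ^ ν * (Real.Gamma (ν + 1) * k.factorial) := by gcongr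
    _ ≤ 1 * (1 / 2) ^ ν * ((2 * Real.Gamma (ν + k + 1)) * k.factorial) := by gcongr; linarith
    _ = _ := by ring

lemma summable_besselSeries {ν : ℝ} (hν : -1 / 2 ≤ ν) (w : ℝ) :
    Summable fun k => besselCoeff ν k * w ^ k := by
  refine Summable.of_norm_bounded
    (g := fun k => (2 * (1 / 2 : ℝ) ^ ν / Real.Gamma (ν + 1)) * (|w| ^ k / k.factorial))
    ((Real.summable_pow_div_factorial _).mul_left _) fun k => ?_
  rw [norm_mul, norm_pow, Real.norm_eq_abs, Real.norm_eq_abs]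
  calc _ ≤ (2 * (1 / 2 : ℝ) ^ ν / Real.Gamma (ν + 1)) / k.factorial * |w| ^ k := by
        gcongr; exact abs_besselCoeff_le hν k
    _ = _ := by ring

lemma succ_mul_besselCoeff (ν : ℝ) (k : ℕ) :
    (k + 1) * besselCoeff ν (k + 1) = -(1 / 2) * besselCoeff (ν + 1) k := by
  unfold besselCoeff
  rw [Real.rpow_add_one (by norm_num), Nat.factorial_succ]
  have e : ν + ((k + 1 : ℕ) : ℝ) + 1 = ν + 1 + k + 1 := by push_cast; ring
  rw [e]
  push_cast
  have h1 : (k : ℝ) + 1 ≠ 0 := by positivity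
  have : ∀ A B G : ℝ, (k + 1 : ℝ) * (A / ((k + 1) * B * G)) = A / (B * G) := by
    intro A B G
    rw [mul_assoc, mul_div_assoc', mul_div_mul_left _ _ h1]
  rw [this]
  ring

lemma hasDerivAt_besselSeries {ν : ℝ} (hν : -1 / 2 ≤ ν) (w : ℝ) :
    HasDerivAt (besselSeries ν) (-(1 / 2) * besselSeries (ν + 1) w) w := by
  set R := |w| + 1
  set C := 2 * (1 / 2 : ℝ) ^ ν / Real.Gamma (ν + 1)
  have hC : 0 ≤ C := by
    have : 0 < Real.Gamma (ν + 1) := Real.Gamma_pos_of_pos (by linarith)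
    positivity
  have hu : Summable fun k : ℕ => C * (k / k.factorial * R ^ (k - 1)) := by
    refine Summable.mul_left _ ?_
    rw [← summable_nat_add_iff 1]
    refine (Real.summable_pow_div_factorial R).congr fun k => ?_
    rw [Nat.factorial_succ]
    push_cast
    have h1 : (k : ℝ) + 1 ≠ 0 := by positivity
    have h2 : (k.factorial : ℝ) ≠ 0 := by exact_mod_cast k.factorial_ne_zero
    field_simp
  have key := hasDerivAt_tsum_of_isPreconnected (𝕜 := ℝ) (F := ℝ)
    (g := fun k x => besselCoeff ν k * x ^ k)
    (g' := fun k x => besselCoeff ν k * (k * x ^ (k - 1))) hu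
    (t := Metric.ball 0 R) Metric.isOpen_ball (convex_ball _ _).isPreconnected
    (y₀ := 0) (y := w) (fun k x _ => (hasDerivAt_pow k x).const_mul _) ?_
    (by simp [R]; positivity) (summable_besselSeries hν 0) (by simp [R])
  · have hs : ∑' k : ℕ, besselCoeff ν k * (k * w ^ (k - 1)) = -(1 / 2) * besselSeries (ν + 1) w := by
      rw [besselSeries, ← tsum_mul_left, tsum_eq_zero_add']
      · simp only [CharP.cast_eq_zero, zero_mul, mul_zero, zero_add, Nat.add_sub_cancel]
        congr 1; ext k
        have := succ_mul_besselCoeff ν k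
        push_cast
        linear_combination w ^ k * this
      · refine ((summable_besselSeries (ν := ν + 1) (by linarith) w).mul_left (-(1 / 2))).congr
          fun k => ?_
        have := succ_mul_besselCoeff ν k
        simp only [Nat.add_sub_cancel]
        push_cast
        linear_combination -w ^ k * this
    rw [← hs]
    exact key
  · intro k x hx
    rw [norm_mul, norm_mul, norm_pow, Real.norm_eq_abs, RCLike.norm_natCast]
    have hx' : ‖x‖ ≤ R := by simpa using (mem_ball_zero_iff.mp hx).le
    calc _ ≤ C / k.factorial * (k * R ^ (k - 1)) := by
          gcongr
          exact abs_besselCoeff_le hν k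
      _ = _ := by ring

lemma besselSeries_recurrence {ν : ℝ} (hν : -1 / 2 ≤ ν) (w : ℝ) :
    w * besselSeries (ν + 2) w = 2 * (ν + 1) * besselSeries (ν + 1) w - besselSeries ν w := by
  have h0 := (summable_besselSeries hν w)
  have h1 := (summable_besselSeries (ν := ν + 1) (by linarith) w)
  have h2 := (summable_besselSeries (ν := ν + 2) (by linarith) w)
  have key : ∀ k : ℕ, besselCoeff (ν + 2) k =
      2 * (ν + 1) * besselCoeff (ν + 1) (k + 1) - besselCoeff ν (k + 1) := by
    intro k
    have e1 := succ_mul_besselCoeff (ν + 1) k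
    have e3 : besselCoeff ν (k + 1) = 2 * (ν + 1 + (k + 1)) * besselCoeff (ν + 1) (k + 1) := by
      unfold besselCoeff
      rw [Real.rpow_add_one (by norm_num)]
      have e : ν + 1 + ((k + 1 : ℕ) : ℝ) + 1 = (ν + ((k + 1 : ℕ) : ℝ) + 1) + 1 := by ring
      have hne : ν + ((k + 1 : ℕ) : ℝ) + 1 ≠ 0 := by
        push_cast; linarith [(Nat.cast_nonneg k : (0 : ℝ) ≤ k)]
      rw [e, Real.Gamma_add_one hne]
      have e' : ν + 1 + ((k : ℝ) + 1) = ν + ((k + 1 : ℕ) : ℝ) + 1 := by push_cast; ring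
      rw [e']
      have hG : Real.Gamma (ν + ((k + 1 : ℕ) : ℝ) + 1) ≠ 0 :=
        (Real.Gamma_pos_of_pos (by push_cast; linarith [(Nat.cast_nonneg k : (0 : ℝ) ≤ k)])).ne'
      field_simp
    have e2 : ν + 2 = ν + 1 + 1 := by ring
    rw [e2, e3]
    linarith
  have hz : 2 * (ν + 1) * besselCoeff (ν + 1) 0 - besselCoeff ν 0 = 0 := by
    unfold besselCoeff
    rw [Real.rpow_add_one (by norm_num)]
    simp only [Nat.cast_zero, add_zero, Nat.factorial_zero, mul_zero, pow_zero, Nat.cast_one]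
    rw [Real.Gamma_add_one (s := ν + 1) (by linarith)]
    have hG : Real.Gamma (ν + 1) ≠ 0 := (Real.Gamma_pos_of_pos (by linarith)).ne'
    have : ν + 1 ≠ 0 := by linarith
    field_simp
    simp
  simp only [besselSeries]
  rw [← tsum_mul_left, ← tsum_mul_left, ← (h1.mul_left _).tsum_sub h0,
    ((h1.mul_left (2 * (ν + 1))).sub h0).tsum_eq_zero_add]
  have : 2 * (ν + 1) * (besselCoeff (ν + 1) 0 * w ^ 0) - besselCoeff ν 0 * w ^ 0 = 0 := by
    simpa [mul_assoc] using hz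
  rw [this, zero_add]
  congr 1; ext k
  rw [key k]; ring

/-- The energy `j(z)² + j'(z)²` of `j(z) = z ^ (-ν) J_ν(z)` decreases, hence `|j(z)| ≤ |j(0)|`. -/
lemma abs_besselSeries_le {ν : ℝ} (hν : -1 / 2 ≤ ν) {w : ℝ} (hw : 0 ≤ w) :
    |besselSeries ν w| ≤ |besselSeries ν 0| := by
  set E : ℝ → ℝ := fun w => besselSeries ν w ^ 2 + w * besselSeries (ν + 1) w ^ 2
  have hE : ∀ w, HasDerivAt E (-(2 * ν + 1) * besselSeries (ν + 1) w ^ 2) w := by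
    intro w
    have h0 := hasDerivAt_besselSeries hν w
    have h1 := hasDerivAt_besselSeries (ν := ν + 1) (by linarith) w
    refine ((h0.pow 2).add ((hasDerivAt_id w).mul (h1.pow 2))).congr_deriv ?_
    have := besselSeries_recurrence hν w
    have e : ν + 1 + 1 = ν + 2 := by ring
    simp only [id, e, Pi.pow_apply]
    push_cast
    linear_combination -besselSeries (ν + 1) w * this
  have hanti : AntitoneOn E (Ici 0) := by
    refine antitoneOn_of_deriv_nonpos (convex_Ici 0)
      (fun x _ => (hE x).continuousAt.continuousWithinAt)
      (fun x _ => (hE x).differentiableAt.differentiableWithinAt) fun x _ => ?_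
    rw [(hE x).deriv]
    nlinarith [sq_nonneg (besselSeries (ν + 1) x)]
  have := hanti (mem_Ici.2 le_rfl) (mem_Ici.2 hw) hw
  rw [← sq_le_sq]
  simp only [E, zero_mul, add_zero] at this
  nlinarith [mul_nonneg hw (sq_nonneg (besselSeries (ν + 1) w))]

lemma continuous_besselSeries {ν : ℝ} (hν : -1 / 2 ≤ ν) : Continuous (besselSeries ν) :=
  continuous_iff_continuousAt.2 fun w => (hasDerivAt_besselSeries hν w).continuousAt

lemma rpow_mul_besselJ (ν : ℝ) {z : ℝ} (hz : 0 < z) :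
    ((z ^ (-ν) : ℝ) : ℂ) * besselJ (ν : ℂ) z = (besselSeries ν (z ^ 2) : ℂ) := by
  rw [besselJ, besselSeries, ← tsum_mul_left, Complex.ofReal_tsum]
  congr 1; ext k
  have h1 : ((z : ℂ) / 2) ^ (2 * (k : ℂ) + ν) = (((z / 2) ^ (2 * (k : ℝ) + ν) : ℝ) : ℂ) := by
    rw [Complex.ofReal_cpow (by positivity)]; push_cast; rfl
  have h2 : Complex.Gamma ((ν : ℂ) + k + 1) = ((Real.Gamma (ν + k + 1) : ℝ) : ℂ) := by
    rw [← Complex.Gamma_ofReal]; push_cast; rfl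
  have h4 : z ^ (-ν) * (z / 2) ^ (2 * (k : ℝ) + ν) =
      (1 / 2) ^ (2 * k) * (1 / 2 : ℝ) ^ ν * (z ^ 2) ^ k := by
    rw [Real.rpow_add (by positivity), div_eq_mul_one_div z 2, Real.mul_rpow hz.le (by norm_num),
      Real.mul_rpow hz.le (by norm_num), Real.rpow_neg hz.le]
    have hzν : z ^ ν ≠ 0 := by positivity
    have e : (2 * (k : ℝ)) = ((2 * k : ℕ) : ℝ) := by push_cast; ring
    rw [e, Real.rpow_natCast, Real.rpow_natCast, ← pow_mul]
    field_simp
  rw [h1, h2, Complex.Gamma_nat_eq_factorial]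
  rw [mul_left_comm, ← Complex.ofReal_mul, h4, besselCoeff]
  push_cast
  ring

/-- The measure `x ^ a dx` on `(0, ∞)`. -/
noncomputable def mu (a : ℝ) : Measure ℝ :=
  (volume.withDensity fun x => ENNReal.ofReal (x ^ a)).restrict (Ioi 0)

lemma measurable_density (a : ℝ) : Measurable fun x : ℝ => ENNReal.ofReal (x ^ a) := by
  fun_prop

lemma integral_mu {E : Type*} [NormedAddCommGroup E] [NormedSpace ℝ E] (a : ℝ) (f : ℝ → E) :
    ∫ x, f x ∂mu a = ∫ x in Ioi 0, (x ^ a) • f x := by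
  rw [mu, setIntegral_withDensity_eq_setIntegral_toReal_smul (measurable_density a)
    (by simp) f measurableSet_Ioi]
  refine setIntegral_congr_fun measurableSet_Ioi fun x hx => ?_
  rw [ENNReal.toReal_ofReal (Real.rpow_nonneg (le_of_lt hx) a)]

lemma integrable_mu {E : Type*} [NormedAddCommGroup E] [NormedSpace ℝ E] {a : ℝ} {f : ℝ → E} :
    Integrable f (mu a) ↔ IntegrableOn (fun x => (x ^ a) • f x) (Ioi 0) := by
  rw [mu, restrict_withDensity measurableSet_Ioi,
    integrable_withDensity_iff_integrable_smul' (measurable_density a) (by simp)]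
  refine integrableOn_congr_fun (fun x hx => ?_) measurableSet_Ioi
  rw [ENNReal.toReal_ofReal (Real.rpow_nonneg (le_of_lt hx) a)]

lemma lintegral_mu (a : ℝ) (f : ℝ → ENNReal) :
    ∫⁻ x, f x ∂mu a = ∫⁻ x in Ioi 0, ENNReal.ofReal (x ^ a) * f x := by
  rw [mu, restrict_withDensity measurableSet_Ioi,
    lintegral_withDensity_eq_lintegral_mul_non_measurable _ (measurable_density a) (by simp)]
  rfl

lemma ae_mu_pos (a : ℝ) : ∀ᵐ x ∂mu a, 0 < x := ae_restrict_mem measurableSet_Ioi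

lemma norm_exp_neg_mul_sq (c : ℂ) (x : ℝ) :
    ‖Complex.exp (-c * (x : ℂ) ^ 2)‖ = Real.exp (-c.re * x ^ 2) := by
  rw [Complex.norm_exp]
  congr 1
  rw [← Complex.ofReal_pow, neg_mul, Complex.neg_re, Complex.re_mul_ofReal, neg_mul]

lemma integrableOn_rpow_mul_cexp {b : ℝ} (hb : -1 < b) {c : ℂ} (hc : 0 < c.re) :
    IntegrableOn (fun x : ℝ => ((x ^ b : ℝ) : ℂ) * Complex.exp (-c * (x : ℂ) ^ 2)) (Ioi 0) := by
  refine (integrableOn_rpow_mul_exp_neg_mul_sq hc hb).mono' ?_ ?_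
  · exact Measurable.aestronglyMeasurable (by fun_prop)
  · filter_upwards [ae_restrict_mem measurableSet_Ioi] with x hx
    rw [norm_mul, norm_exp_neg_mul_sq, Complex.norm_real, Real.norm_of_nonneg
      (Real.rpow_nonneg (le_of_lt hx) b)]

lemma hasDerivAt_integral_rpow_mul_cexp {b : ℝ} (hb : -1 < b) {c : ℂ} (hc : 0 < c.re) :
    HasDerivAt (fun c : ℂ => ∫ x in Ioi (0 : ℝ), ((x ^ b : ℝ) : ℂ) * Complex.exp (-c * (x : ℂ) ^ 2))
      (∫ x in Ioi (0 : ℝ), ((x ^ b : ℝ) : ℂ) * (Complex.exp (-c * (x : ℂ) ^ 2) * -(x : ℂ) ^ 2)) c := by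
  have hball : Metric.ball c (c.re / 2) ∈ nhds c := Metric.ball_mem_nhds _ (by linarith)
  refine (hasDerivAt_integral_of_dominated_loc_of_deriv_le (μ := volume.restrict (Ioi 0))
    (F := fun (c : ℂ) (x : ℝ) => ((x ^ b : ℝ) : ℂ) * Complex.exp (-c * (x : ℂ) ^ 2))
    (F' := fun (c : ℂ) (x : ℝ) => ((x ^ b : ℝ) : ℂ) * (Complex.exp (-c * (x : ℂ) ^ 2) * -(x : ℂ) ^ 2))
    (bound := fun x : ℝ => x ^ (b + 2) * Real.exp (-(c.re / 2) * x ^ 2)) hball ?_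
    (integrableOn_rpow_mul_cexp hb hc) ?_ ?_
    (integrableOn_rpow_mul_exp_neg_mul_sq (by linarith) (by linarith)) ?_).2
  · exact Eventually.of_forall fun c => Measurable.aestronglyMeasurable (by fun_prop)
  · exact Measurable.aestronglyMeasurable (by fun_prop)
  · filter_upwards [ae_restrict_mem measurableSet_Ioi] with x hx z hz
    have hx' : 0 < x := hx
    have hre : c.re / 2 ≤ z.re := by
      have h1 := (Complex.abs_re_le_norm (z - c)).trans (mem_ball_iff_norm.1 hz).le
      rw [Complex.sub_re, abs_le] at h1
      linarith [h1.1]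
    rw [norm_mul, norm_mul, norm_exp_neg_mul_sq, Complex.norm_real, norm_neg, norm_pow,
      Complex.norm_real, Real.norm_of_nonneg (Real.rpow_nonneg hx'.le b), Real.norm_of_nonneg hx'.le,
      Real.rpow_add hx', Real.rpow_two]
    have : Real.exp (-z.re * x ^ 2) ≤ Real.exp (-(c.re / 2) * x ^ 2) :=
      Real.exp_le_exp.2 (by nlinarith [sq_nonneg x])
    calc x ^ b * (Real.exp (-z.re * x ^ 2) * x ^ 2)
        ≤ x ^ b * (Real.exp (-(c.re / 2) * x ^ 2) * x ^ 2) := by gcongr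
      _ = _ := by ring
  · refine Eventually.of_forall fun x z _ => HasDerivAt.const_mul _ ?_
    have := ((hasDerivAt_id z).neg.mul_const ((x : ℂ) ^ 2)).cexp
    simpa using this

lemma integral_rpow_mul_cexp {b : ℝ} (hb : -1 < b) {c : ℂ} (hc : 0 < c.re) :
    ∫ x in Ioi (0 : ℝ), ((x ^ b : ℝ) : ℂ) * Complex.exp (-c * (x : ℂ) ^ 2) =
      (1 / 2) * Real.Gamma ((b + 1) / 2) * c ^ (-((b + 1) / 2 : ℝ) : ℂ) := by
  have hopen : IsOpen {z : ℂ | 0 < z.re} := isOpen_lt continuous_const Complex.continuous_re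
  have hA : AnalyticOnNhd ℂ (fun c : ℂ => ∫ x in Ioi (0 : ℝ), ((x ^ b : ℝ) : ℂ) *
      Complex.exp (-c * (x : ℂ) ^ 2)) {z : ℂ | 0 < z.re} :=
    DifferentiableOn.analyticOnNhd (fun z hz =>
      (hasDerivAt_integral_rpow_mul_cexp hb hz).differentiableAt.differentiableWithinAt) hopen
  have hB : AnalyticOnNhd ℂ (fun c : ℂ => (1 / 2) * (Real.Gamma ((b + 1) / 2) : ℂ) *
      c ^ (-((b + 1) / 2 : ℝ) : ℂ)) {z : ℂ | 0 < z.re} :=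
    DifferentiableOn.analyticOnNhd (fun z hz =>
      ((differentiableAt_id.cpow_const (Or.inl hz)).const_mul _).differentiableWithinAt) hopen
  have hreal : ∀ r : ℝ, 0 < r → (∫ x in Ioi (0 : ℝ), ((x ^ b : ℝ) : ℂ) *
      Complex.exp (-(r : ℂ) * (x : ℂ) ^ 2)) =
      (1 / 2) * (Real.Gamma ((b + 1) / 2) : ℂ) * (r : ℂ) ^ (-((b + 1) / 2 : ℝ) : ℂ) := by
    intro r hr
    have h := integral_rpow_mul_exp_neg_mul_rpow (p := 2) (q := b) (b := r) two_pos hb hr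
    have e : (r : ℂ) ^ (-((b + 1) / 2 : ℝ) : ℂ) = ((r ^ (-(b + 1) / 2) : ℝ) : ℂ) := by
      rw [Complex.ofReal_cpow hr.le]; push_cast; ring_nf
    rw [e]
    have h' := congrArg (fun x : ℝ => (x : ℂ)) h
    simp only [← integral_complex_ofReal] at h'
    push_cast at h' ⊢
    rw [show (1 : ℂ) / 2 * (Real.Gamma ((b + 1) / 2) : ℂ) * ((r ^ (-(b + 1) / 2) : ℝ) : ℂ) =
      ((r ^ (-(b + 1) / 2) : ℝ) : ℂ) * (1 / 2) * (Real.Gamma ((b + 1) / 2) : ℂ) by ring, ← h']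
    refine setIntegral_congr_fun measurableSet_Ioi fun x hx => ?_
    simp
  refine hA.eqOn_of_preconnected_of_frequently_eq hB
    (convex_halfSpace_re_gt 0).isPreconnected (z₀ := 1) (by simp) ?_ hc
  have ht : Tendsto (fun n : ℕ => (1 : ℂ) + ((1 / (n + 1 : ℝ) : ℝ) : ℂ)) atTop
      (nhdsWithin 1 {1}ᶜ) := by
    refine tendsto_nhdsWithin_iff.2 ⟨?_, Eventually.of_forall fun n => ?_⟩
    · have := (Complex.continuous_ofReal.tendsto 0).comp tendsto_one_div_add_atTop_nhds_zero_nat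
      simpa using this.const_add 1
    · simp only [mem_compl_iff, mem_singleton_iff, add_eq_left, Complex.ofReal_eq_zero]
      positivity
  refine ht.frequently (Eventually.frequently (Eventually.of_forall fun n => ?_))
  have := hreal (1 + 1 / (n + 1 : ℝ)) (by positivity)
  rw [Complex.ofReal_add, Complex.ofReal_one] at this
  exact this

lemma gaussian_moment {a : ℝ} (ha : 0 ≤ a) (k : ℕ) {c : ℂ} (hc : 0 < c.re) :
    ∫ x, ((x : ℂ) ^ (2 * k)) * Complex.exp (-c * (x : ℂ) ^ 2) ∂mu a =
      (1 / 2) * Real.Gamma ((a - 1) / 2 + k + 1) * c ^ (-((a + 1) / 2 + k : ℝ) : ℂ) := by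
  rw [integral_mu]
  have h := integral_rpow_mul_cexp (b := a + 2 * k) (by
    have : (0 : ℝ) ≤ k := Nat.cast_nonneg k
    linarith) hc
  rw [show (a + 2 * k + 1) / 2 = (a - 1) / 2 + k + 1 by ring] at h
  rw [show (a + 1) / 2 + (k : ℝ) = (a - 1) / 2 + k + 1 by ring, ← h]
  refine setIntegral_congr_fun measurableSet_Ioi fun x hx => ?_
  have hx' : 0 < x := hx
  rw [Real.rpow_add hx', show (2 * (k : ℝ)) = ((2 * k : ℕ) : ℝ) by push_cast; ring,
    Real.rpow_natCast, Complex.real_smul]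
  push_cast
  ring

lemma integrable_gaussian_moment {a : ℝ} (ha : 0 ≤ a) (k : ℕ) {c : ℂ} (hc : 0 < c.re) :
    Integrable (fun x : ℝ => ((x : ℂ) ^ (2 * k)) * Complex.exp (-c * (x : ℂ) ^ 2)) (mu a) := by
  rw [integrable_mu]
  refine (integrableOn_rpow_mul_cexp (b := a + 2 * k) (by
    have : (0 : ℝ) ≤ k := Nat.cast_nonneg k
    linarith) hc).congr_fun (fun x hx => ?_) measurableSet_Ioi
  have hx' : 0 < x := hx
  simp only
  rw [Real.rpow_add hx', show (2 * (k : ℝ)) = ((2 * k : ℕ) : ℝ) by push_cast; ring,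
    Real.rpow_natCast, Complex.real_smul]
  push_cast
  ring

lemma integral_norm_gaussian_moment {a : ℝ} (ha : 0 ≤ a) (k : ℕ) {c : ℂ} (hc : 0 < c.re) :
    ∫ x, ‖((x : ℂ) ^ (2 * k)) * Complex.exp (-c * (x : ℂ) ^ 2)‖ ∂mu a =
      (1 / 2) * Real.Gamma ((a - 1) / 2 + k + 1) * c.re ^ (-((a + 1) / 2 + k)) := by
  have h := gaussian_moment ha k (c := (c.re : ℂ)) (by simpa using hc)
  rw [show (-(((a + 1) / 2 + k : ℝ) : ℂ)) = ((-((a + 1) / 2 + k) : ℝ) : ℂ) by push_cast; ring,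
    ← Complex.ofReal_cpow hc.le] at h
  apply Complex.ofReal_injective
  rw [← integral_complex_ofReal]
  push_cast
  rw [← h]
  refine integral_congr_ae (Eventually.of_forall fun x => ?_)
  simp only
  rw [norm_mul, norm_exp_neg_mul_sq, norm_pow, Complex.norm_real, Real.norm_eq_abs,
    pow_mul, sq_abs]
  push_cast
  rw [pow_mul]

lemma mul_cpow_of_re_nonneg_of_re_pos {u v : ℂ} (hu : 0 ≤ u.re) (hu0 : u ≠ 0) (hv : 0 < v.re)
    (w : ℂ) : (u * v) ^ w = u ^ w * v ^ w := by
  have hv0 : v ≠ 0 := by rintro rfl; simp at hv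
  have h1 := abs_le.1 (Complex.abs_arg_le_pi_div_two_iff.2 hu)
  have h2 := abs_lt.1 (Complex.abs_arg_lt_pi_div_two_iff.2 (Or.inl hv))
  rw [Complex.cpow_def_of_ne_zero (mul_ne_zero hu0 hv0), Complex.cpow_def_of_ne_zero hu0,
    Complex.cpow_def_of_ne_zero hv0, ← Complex.exp_add, ← add_mul,
    (Complex.log_mul_eq_add_log_iff hu0 hv0).2 ⟨by linarith [h1.1, h2.1], by linarith [h1.2, h2.2]⟩]

lemma hasSum_cexp (z : ℂ) : HasSum (fun k : ℕ => z ^ k / (k.factorial : ℂ)) (Complex.exp z) := by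
  rw [Complex.exp_eq_exp_ℂ]
  exact NormedSpace.expSeries_div_hasSum_exp z

lemma gaussian_bessel_integral {a : ℝ} (ha : 0 ≤ a) (b : ℝ) {c : ℂ} (hc : 0 < c.re) :
    ∫ y, (besselSeries ((a - 1) / 2) ((b * y) ^ 2) : ℂ) * Complex.exp (-c * (y : ℂ) ^ 2) ∂mu a =
      (2 * c) ^ (-((a + 1) / 2 : ℝ) : ℂ) * Complex.exp (-(b : ℂ) ^ 2 / (4 * c)) := by
  have hc0 : c ≠ 0 := by rintro rfl; simp at hc
  set ν := (a - 1) / 2 with hν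
  have hνa : (a + 1) / 2 = ν + 1 := by rw [hν]; ring
  have hGpos : ∀ k : ℕ, 0 < Real.Gamma (ν + k + 1) := fun k =>
    Real.Gamma_pos_of_pos (by have : (0 : ℝ) ≤ k := Nat.cast_nonneg k
                              rw [hν]; linarith)
  set f : ℕ → ℝ → ℂ := fun k y => ((besselCoeff ν k * b ^ (2 * k) : ℝ) : ℂ) *
    (((y : ℂ) ^ (2 * k)) * Complex.exp (-c * (y : ℂ) ^ 2)) with hf
  have hint : ∀ k, Integrable (f k) (mu a) := fun k =>
    (integrable_gaussian_moment ha k hc).const_mul _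
  have hsum : Summable fun k => ∫ y, ‖f k y‖ ∂mu a := by
    have e : ∀ k, ∫ y, ‖f k y‖ ∂mu a =
        ((1 / 2) * (1 / 2 : ℝ) ^ ν * c.re ^ (-(ν + 1))) * ((b ^ 2 / (4 * c.re)) ^ k / k.factorial) := by
      intro k
      have e1 : ∀ y, ‖f k y‖ = ‖((besselCoeff ν k * b ^ (2 * k) : ℝ) : ℂ)‖ *
          ‖((y : ℂ) ^ (2 * k)) * Complex.exp (-c * (y : ℂ) ^ 2)‖ := fun y => norm_mul _ _
      rw [integral_congr_ae (Eventually.of_forall e1), integral_const_mul,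
        integral_norm_gaussian_moment ha k hc, Complex.norm_real, hνa,
        neg_add, Real.rpow_add hc, Real.rpow_neg hc.le k, Real.rpow_natCast, ← hν, norm_mul,
        besselCoeff, norm_div, norm_mul, norm_mul, norm_pow, norm_neg, norm_one, one_pow]
      have hb : ‖b ^ (2 * k)‖ = (b ^ 2) ^ k := by
        rw [pow_mul, Real.norm_of_nonneg (by positivity)]
      have hf0 : (k.factorial : ℝ) ≠ 0 := by exact_mod_cast k.factorial_ne_zero
      rw [hb, Real.norm_of_nonneg (by positivity), Real.norm_of_nonneg (by positivity),
        Real.norm_of_nonneg (mul_nonneg (Nat.cast_nonneg _) (hGpos k).le), pow_mul _ 2,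
        div_pow (b ^ 2), mul_pow]
      have := (hGpos k).ne'
      have h4 : ((1 / 2 : ℝ) ^ 2) ^ k = 1 / 4 ^ k := by
        rw [← one_div_pow]; norm_num
      rw [h4]
      field_simp
    simp_rw [e]
    exact (Real.summable_pow_div_factorial _).mul_left _
  have hS := hasSum_integral_of_summable_integral_norm hint hsum
  have hval : ∀ k, ∫ y, f k y ∂mu a = (2 * c) ^ (-((a + 1) / 2 : ℝ) : ℂ) *
      ((-(b : ℂ) ^ 2 / (4 * c)) ^ k / k.factorial) := by
    intro k
    simp only [hf]
    rw [integral_const_mul, gaussian_moment ha k hc, hνa, ← hν, besselCoeff]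
    have h2c : (2 * c) ^ (-((ν + 1 : ℝ) : ℂ)) =
        ((1 / 2 : ℝ) ^ ν : ℝ) * (1 / 2) * c ^ (-((ν + 1 : ℝ) : ℂ)) := by
      rw [mul_cpow_of_re_nonneg_of_re_pos (by norm_num) two_ne_zero hc]
      congr 1
      rw [show (-((ν + 1 : ℝ) : ℂ)) = ((-(ν + 1) : ℝ) : ℂ) by push_cast; ring,
        show (2 : ℂ) = ((2 : ℝ) : ℂ) by norm_num, ← Complex.ofReal_cpow two_pos.le,
        Real.rpow_neg two_pos.le, Real.rpow_add two_pos, one_div, Real.inv_rpow two_pos.le]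
      push_cast
      rw [Real.rpow_one, mul_inv]
      norm_num
    have hck : c ^ (-((ν + 1 + k : ℝ) : ℂ)) = c ^ (-((ν + 1 : ℝ) : ℂ)) * (c ^ k)⁻¹ := by
      rw [← Complex.cpow_natCast, ← Complex.cpow_neg, ← Complex.cpow_add _ _ hc0]
      push_cast; ring_nf
    rw [h2c, hck]
    have hf0 : (k.factorial : ℂ) ≠ 0 := by exact_mod_cast k.factorial_ne_zero
    have hG : (Real.Gamma (ν + k + 1) : ℂ) ≠ 0 := by exact_mod_cast (hGpos k).ne'
    have h4 : ((1 / 2 : ℂ)) ^ (2 * k) = 1 / 4 ^ k := by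
      rw [pow_mul, ← one_div_pow]; norm_num
    have h1 : (-(b : ℂ) ^ 2 / (4 * c)) ^ k = (-1) ^ k * b ^ (2 * k) / (4 ^ k * c ^ k) := by
      rw [div_pow, mul_pow, neg_eq_neg_one_mul, mul_pow, pow_mul]
    rw [h1]
    push_cast
    rw [h4]
    field_simp
  have hexp : HasSum (fun k : ℕ => (2 * c) ^ (-((a + 1) / 2 : ℝ) : ℂ) *
      ((-(b : ℂ) ^ 2 / (4 * c)) ^ k / k.factorial))
      ((2 * c) ^ (-((a + 1) / 2 : ℝ) : ℂ) * Complex.exp (-(b : ℂ) ^ 2 / (4 * c))) :=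
    (hasSum_cexp _).mul_left _
  simp_rw [hval] at hS
  rw [← hS.unique hexp]
  refine integral_congr_ae (Eventually.of_forall fun y => ?_)
  simp only [hf]
  rw [besselSeries, Complex.ofReal_tsum, ← tsum_mul_right]
  congr 1; ext k
  push_cast
  rw [← pow_mul, mul_pow]
  ring

/-- The Schrödinger kernel, in a form that is defined for all real `x`, `y`. -/
noncomputable def kern (a t x y : ℝ) : ℂ :=
  (((2 * t : ℝ) : ℂ) * Complex.I) ^ (-((a + 1) / 2 : ℝ) : ℂ) *
    (besselSeries ((a - 1) / 2) ((x * y / (2 * t)) ^ 2) : ℂ) *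
    Complex.exp (Complex.I * (((x ^ 2 + y ^ 2) / (4 * t) : ℝ) : ℂ))

lemma two_mul_mul_I_ne_zero {t : ℝ} (ht : t ≠ 0) : (((2 * t : ℝ) : ℂ) * Complex.I) ≠ 0 := by
  simp [ht]

lemma ofReal_mul_cpow_neg {r : ℝ} (hr : 0 < r) (z : ℂ) (s : ℝ) :
    ((r : ℂ) * z) ^ (-((s : ℝ) : ℂ)) = ((r ^ (-s) : ℝ) : ℂ) * z ^ (-((s : ℝ) : ℂ)) := by
  rcases eq_or_ne z 0 with rfl | hz
  · rcases eq_or_ne s 0 with rfl | hs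
    · simp
    · have : (-(s : ℂ)) ≠ 0 := by simpa using hs
      simp [this, Complex.zero_cpow]
  · rw [Complex.cpow_def_of_ne_zero (mul_ne_zero (by exact_mod_cast hr.ne') hz),
      Complex.cpow_def_of_ne_zero hz, Complex.log_ofReal_mul hr hz, add_mul, Complex.exp_add]
    congr 1
    rw [Real.rpow_def_of_pos hr]
    push_cast
    rfl

lemma Skernel_eq_kern {a : ℝ} (ha : 0 ≤ a) {x y : ℝ} (hx : 0 < x) (hy : 0 < y) (t : ℝ) :
    Skernel a x y t = kern a t x y := by
  rcases eq_or_ne t 0 with rfl | ht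
  · have h1 : (-(a + 1) / 2) ≠ 0 := by linarith
    have h2 : (-((a + 1) / 2 : ℝ) : ℂ) ≠ 0 := by
      rw [Ne, neg_eq_zero, Complex.ofReal_eq_zero]; linarith
    simp only [Skernel, kern, lt_irrefl, abs_zero, mul_zero, Complex.ofReal_zero, zero_mul,
      Real.zero_rpow h1, Complex.zero_cpow h2, if_false]
  have hz : 0 < x * y / (2 * |t|) := by positivity
  have hJ := rpow_mul_besselJ ((a - 1) / 2) hz
  rw [show -((a - 1) / 2) = (1 - a) / 2 by ring] at hJ
  have hsq : (x * y / (2 * |t|)) ^ 2 = (x * y / (2 * t)) ^ 2 := by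
    rw [div_pow, mul_pow 2, sq_abs, div_pow, mul_pow 2 t]
  have hkey : ∀ (A B E : ℂ), A * B * (((x * y / (2 * |t|)) ^ ((1 - a) / 2) : ℝ) : ℂ) *
      besselJ (((a - 1) / 2 : ℝ) : ℂ) (x * y / (2 * |t|)) * E =
      (B * A) * (besselSeries ((a - 1) / 2) ((x * y / (2 * t)) ^ 2) : ℂ) * E := by
    intro A B E
    rw [← hsq, ← hJ]; ring
  unfold Skernel kern
  rw [hkey, hkey]
  rcases lt_or_gt_of_ne ht with h | h
  · rw [if_neg (not_lt.2 h.le), abs_of_neg h]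
    have e : (((2 * t : ℝ) : ℂ) * Complex.I) = ((2 * -t : ℝ) : ℂ) * (-Complex.I) := by
      push_cast; ring
    rw [e, ofReal_mul_cpow_neg (by linarith), Complex.cpow_def_of_ne_zero (by simp),
      Complex.log_neg_I]
    congr 2
    · congr 1
      · congr 2; ring
      · congr 1; push_cast; ring
    · rw [mul_neg 4, div_neg]; push_cast; ring
  · rw [if_pos h, abs_of_pos h, ofReal_mul_cpow_neg (by linarith),
      Complex.cpow_def_of_ne_zero (by simp), Complex.log_I]
    congr 3
    · congr 2; ring
    · congr 1; push_cast; ring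

lemma kern_zero {a : ℝ} (ha : 0 ≤ a) (x y : ℝ) : kern a 0 x y = 0 := by
  have h2 : (-((a + 1) / 2 : ℝ) : ℂ) ≠ 0 := by
    rw [Ne, neg_eq_zero, Complex.ofReal_eq_zero]; linarith
  simp only [kern, mul_zero, Complex.ofReal_zero, zero_mul, Complex.zero_cpow h2]

lemma measurable_kern {a : ℝ} (ha : 0 ≤ a) :
    Measurable fun p : ℝ × ℝ × ℝ => kern a p.1 p.2.1 p.2.2 := by
  unfold kern
  have hB : Measurable (besselSeries ((a - 1) / 2)) :=
    (continuous_besselSeries (by linarith)).measurable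
  have h1 : Measurable fun p : ℝ × ℝ × ℝ =>
      besselSeries ((a - 1) / 2) ((p.2.1 * p.2.2 / (2 * p.1)) ^ 2) :=
    hB.comp (by fun_prop)
  fun_prop

/-- The constant in the dispersive bound for `kern`. -/
noncomputable def kernBound (a : ℝ) : ℝ := 2 ^ (-((a + 1) / 2)) * |besselSeries ((a - 1) / 2) 0|

lemma norm_kern_le {a : ℝ} (ha : 0 ≤ a) (t x y : ℝ) :
    ‖kern a t x y‖ ≤ kernBound a * |t| ^ (-((a + 1) / 2)) := by
  rcases eq_or_ne t 0 with rfl | ht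
  · rw [kern_zero ha, norm_zero]; unfold kernBound; positivity
  unfold kern kernBound
  rw [norm_mul, norm_mul, mul_comm Complex.I, Complex.norm_exp_ofReal_mul_I, mul_one,
    Complex.norm_real, show (-((a + 1) / 2 : ℝ) : ℂ) = ((-((a + 1) / 2) : ℝ) : ℂ) by push_cast; ring,
    Complex.norm_cpow_real, norm_mul, Complex.norm_I, mul_one, Complex.norm_real, norm_mul,
    Real.norm_eq_abs, Real.norm_eq_abs, Real.norm_eq_abs,
    Real.mul_rpow (abs_nonneg _) (abs_nonneg _), abs_of_pos (two_pos : (0:ℝ) < 2)]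
  have := abs_besselSeries_le (ν := (a - 1) / 2) (by linarith) (sq_nonneg (x * y / (2 * t)))
  calc _ ≤ 2 ^ (-((a + 1) / 2)) * |t| ^ (-((a + 1) / 2)) * |besselSeries ((a - 1) / 2) 0| := by gcongr
    _ = _ := by ring

/-- The Schrödinger evolution operator applied to `f`. -/
noncomputable def evol (a t : ℝ) (f : ℝ → ℂ) (x : ℝ) : ℂ := ∫ y, kern a t x y * f y ∂mu a

/-- The Gaussian `x ↦ exp (- c x ^ 2)`. -/
noncomputable def gauss (c : ℂ) (x : ℝ) : ℂ := Complex.exp (-c * (x : ℂ) ^ 2)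

lemma evol_gauss {a : ℝ} (ha : 0 ≤ a) {t : ℝ} (ht : t ≠ 0) {c : ℝ} (hc : 0 < c) (x : ℝ) :
    evol a t (gauss c) x = (1 + 4 * t * c * Complex.I) ^ (-((a + 1) / 2 : ℝ) : ℂ) *
      gauss (c / (1 + 4 * t * c * Complex.I)) x := by
  have htC : (t : ℂ) ≠ 0 := by exact_mod_cast ht
  set d : ℂ := c - Complex.I / (4 * t) with hd
  have hdre : 0 < d.re := by
    have : (Complex.I / (4 * (t : ℂ))).re = 0 := by
      rw [show (4 * (t : ℂ)) = ((4 * t : ℝ) : ℂ) by push_cast; ring, Complex.div_ofReal_re]; simp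
    rw [hd, Complex.sub_re, this]; simpa using hc
  have h := gaussian_bessel_integral ha (x / (2 * t)) hdre
  have e : ∀ y : ℝ, kern a t x y * gauss c y =
      ((((2 * t : ℝ) : ℂ) * Complex.I) ^ (-((a + 1) / 2 : ℝ) : ℂ) *
        Complex.exp (Complex.I * ((x ^ 2 / (4 * t) : ℝ) : ℂ))) *
      ((besselSeries ((a - 1) / 2) ((x / (2 * t) * y) ^ 2) : ℂ) *
        Complex.exp (-d * (y : ℂ) ^ 2)) := by
    intro y
    unfold kern gauss
    have e1 : Complex.exp (Complex.I * (((x ^ 2 + y ^ 2) / (4 * t) : ℝ) : ℂ)) *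
        Complex.exp (-c * (y : ℂ) ^ 2) = Complex.exp (Complex.I * ((x ^ 2 / (4 * t) : ℝ) : ℂ)) *
        Complex.exp (-d * (y : ℂ) ^ 2) := by
      rw [← Complex.exp_add, ← Complex.exp_add]
      congr 1
      rw [hd]; push_cast; ring
    rw [show x / (2 * t) * y = x * y / (2 * t) by ring, mul_assoc _ _ (Complex.exp (-c * _)), e1]
    ring
  have hdne : 1 + 4 * t * c * Complex.I ≠ 0 := by
    intro h0
    have := congrArg Complex.re h0
    simp at this
  unfold evol
  simp_rw [e]
  rw [integral_const_mul, h, show ∀ p q r s : ℂ, (p * q) * (r * s) = (p * r) * (q * s) by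
    intros; ring, ← mul_cpow_of_re_nonneg_of_re_pos (by simp) (two_mul_mul_I_ne_zero ht)
      (by simpa using hdre)]
  congr 1
  · congr 1
    rw [hd]; push_cast; field_simp
    linear_combination (-4 : ℂ) * Complex.I_sq
  · unfold gauss
    rw [← Complex.exp_add]
    congr 1
    have hd' : d = (1 + 4 * t * c * Complex.I) / (4 * t * Complex.I) := by
      rw [hd]; field_simp
      linear_combination (-1 : ℂ) * Complex.I_sq
    obtain ⟨m, hm⟩ : ∃ m, m = 1 + 4 * t * c * Complex.I := ⟨_, rfl⟩
    rw [hd', ← hm]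
    rw [← hm] at hdne
    push_cast
    field_simp
    rw [hm]
    ring_nf
    simp only [Complex.I_sq]
    ring

lemma measurable_kern_right {a : ℝ} (ha : 0 ≤ a) (t x : ℝ) : Measurable (kern a t x) :=
  (measurable_kern ha).comp (f := fun y : ℝ => (t, x, y)) (by fun_prop)

lemma integrable_kern_mul {a : ℝ} (ha : 0 ≤ a) (t x : ℝ) {f : ℝ → ℂ} (hf : Integrable f (mu a)) :
    Integrable (fun y => kern a t x y * f y) (mu a) :=
  hf.bdd_mul (measurable_kern_right ha t x).aestronglyMeasurable
    (Eventually.of_forall fun y => norm_kern_le ha t x y)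

lemma evol_sub {a : ℝ} (ha : 0 ≤ a) (t x : ℝ) {f g : ℝ → ℂ} (hf : Integrable f (mu a))
    (hg : Integrable g (mu a)) : evol a t (f - g) x = evol a t f x - evol a t g x := by
  unfold evol
  rw [← integral_sub (integrable_kern_mul ha t x hf) (integrable_kern_mul ha t x hg)]
  simp only [Pi.sub_apply, mul_sub]

lemma measurable_gauss (c : ℂ) : Measurable (gauss c) := by unfold gauss; fun_prop

lemma integrable_gauss {a : ℝ} (ha : 0 ≤ a) {c : ℂ} (hc : 0 < c.re) :
    Integrable (gauss c) (mu a) := by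
  have := integrable_gaussian_moment ha 0 hc
  refine this.congr (Eventually.of_forall fun x => ?_)
  simp [gauss]

lemma norm_gauss (c : ℂ) (x : ℝ) : ‖gauss c x‖ = Real.exp (-c.re * x ^ 2) :=
  norm_exp_neg_mul_sq c x

lemma memLp_gauss {a : ℝ} (ha : 0 ≤ a) {c : ℂ} (hc : 0 < c.re) : MemLp (gauss c) 2 (mu a) := by
  rw [memLp_two_iff_integrable_sq_norm (measurable_gauss c).aestronglyMeasurable]
  have := (integrable_gauss ha (c := 2 * c) (by simpa using hc)).norm
  refine this.congr (Eventually.of_forall fun x => ?_)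
  simp only [norm_gauss]
  rw [← Real.exp_nat_mul]
  congr 1
  simp
  ring

lemma integral_gauss {a : ℝ} (ha : 0 ≤ a) {c : ℂ} (hc : 0 < c.re) :
    ∫ x, gauss c x ∂mu a = (1 / 2) * Real.Gamma ((a - 1) / 2 + 1) * c ^ (-((a + 1) / 2 : ℝ) : ℂ) := by
  have := gaussian_moment ha 0 hc
  simpa [gauss] using this

/-- The Schrödinger flow, including time zero. -/
noncomputable def flow (a t : ℝ) (f : ℝ → ℂ) : ℝ → ℂ := if t = 0 then f else evol a t f

lemma flow_of_ne {a t : ℝ} (ht : t ≠ 0) (f : ℝ → ℂ) : flow a t f = evol a t f := if_neg ht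

lemma flow_zero (a : ℝ) (f : ℝ → ℂ) : flow a 0 f = f := if_pos rfl

lemma flow_gauss {a : ℝ} (ha : 0 ≤ a) (t : ℝ) {c : ℝ} (hc : 0 < c) :
    flow a t (gauss c) = fun x => (1 + 4 * t * c * Complex.I) ^ (-((a + 1) / 2 : ℝ) : ℂ) *
      gauss (c / (1 + 4 * t * c * Complex.I)) x := by
  ext x
  rcases eq_or_ne t 0 with rfl | ht
  · simp [flow_zero]
  · rw [flow_of_ne ht, evol_gauss ha ht hc]

lemma one_add_ofReal_mul_I (r : ℝ) :
    (1 + (r : ℂ) * Complex.I).re = 1 ∧ (1 + (r : ℂ) * Complex.I).im = r := by simp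

lemma re_ofReal_div_pos {c : ℝ} (hc : 0 < c) {u : ℂ} (hu : 0 < u.re) : 0 < ((c : ℂ) / u).re := by
  have hu0 : u ≠ 0 := by rintro rfl; simp at hu
  rw [div_eq_mul_inv, Complex.re_ofReal_mul, Complex.inv_re]
  have := Complex.normSq_pos.2 hu0
  positivity

lemma conj_gauss (c : ℂ) (x : ℝ) : (starRingEnd ℂ) (gauss c x) = gauss ((starRingEnd ℂ) c) x := by
  unfold gauss
  rw [← Complex.exp_conj]; simp

lemma gauss_mul_gauss (c d : ℂ) (x : ℝ) : gauss c x * gauss d x = gauss (c + d) x := by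
  unfold gauss
  rw [← Complex.exp_add]; congr 1; ring

lemma re_one_add {τ c : ℝ} : 0 < (1 + 4 * τ * c * Complex.I : ℂ).re := by
  have := (one_add_ofReal_mul_I (4 * τ * c)).1
  push_cast at this
  rw [this]; exact one_pos

lemma pairing_gauss {a : ℝ} (ha : 0 ≤ a) (τ σ : ℝ) {c d : ℝ} (hc : 0 < c) (hd : 0 < d) :
    ∫ x, flow a τ (gauss c) x * (starRingEnd ℂ) (flow a σ (gauss d) x) ∂mu a =
      (1 / 2) * Real.Gamma ((a - 1) / 2 + 1) *
        (((c + d : ℝ) : ℂ) + ((4 * (τ - σ) * c * d : ℝ) : ℂ) * Complex.I) ^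
          (-((a + 1) / 2 : ℝ) : ℂ) := by
  set w : ℂ := (-((a + 1) / 2 : ℝ) : ℂ) with hw
  set u : ℂ := 1 + 4 * τ * c * Complex.I with hu
  set v : ℂ := 1 + 4 * ((-σ : ℝ) : ℂ) * d * Complex.I with hv
  set z : ℂ := (((c + d : ℝ) : ℂ) + ((4 * (τ - σ) * c * d : ℝ) : ℂ) * Complex.I) with hz
  have hure : 0 < u.re := re_one_add
  have hvre : 0 < v.re := re_one_add
  have hzre : 0 < z.re := by rw [hz]; simp; linarith
  have hu0 : u ≠ 0 := by intro h; simp [h] at hure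
  have hv0 : v ≠ 0 := by intro h; simp [h] at hvre
  have hconj : (starRingEnd ℂ) (1 + 4 * σ * d * Complex.I : ℂ) = v := by
    rw [hv, map_add, map_mul, map_mul, map_mul, map_one, Complex.conj_I, Complex.conj_ofReal,
      Complex.conj_ofReal, map_ofNat]
    push_cast; ring
  have hvw : (starRingEnd ℂ) ((1 + 4 * σ * d * Complex.I : ℂ) ^ w) = v ^ w := by
    have harg : (1 + 4 * σ * d * Complex.I : ℂ).arg ≠ Real.pi := by
      intro h
      have h1 := (Complex.arg_eq_pi_iff.1 h).1
      linarith [re_one_add (τ := σ) (c := d)]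
    have := Complex.conj_cpow (1 + 4 * σ * d * Complex.I : ℂ) w harg
    rw [hconj] at this
    rw [show (starRingEnd ℂ) w = w by rw [hw, map_neg, Complex.conj_ofReal]] at this
    exact this.symm
  have hm : 0 < ((c : ℂ) / u + d / v).re := by
    rw [Complex.add_re]
    exact add_pos (re_ofReal_div_pos hc hure) (re_ofReal_div_pos hd hvre)
  have e : ∀ x, flow a τ (gauss c) x * (starRingEnd ℂ) (flow a σ (gauss d) x) =
      (u ^ w * v ^ w) * gauss (c / u + d / v) x := by
    intro x
    rw [flow_gauss ha τ hc, flow_gauss ha σ hd, map_mul, hvw, conj_gauss, map_div₀, hconj,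
      Complex.conj_ofReal, ← gauss_mul_gauss]
    ring
  simp_rw [e]
  rw [integral_const_mul, integral_gauss ha hm]
  have hvm : v * (c / u + d / v) = z * u⁻¹ := by
    field_simp
    rw [hu, hv, hz]; push_cast
    ring
  have huarg : u.arg ≠ Real.pi := by
    intro h
    have h1 := (Complex.arg_eq_pi_iff.1 h).1
    linarith
  have huinv : 0 < (u⁻¹).re := by
    have := re_ofReal_div_pos one_pos hure
    simpa using this
  have h1 : v ^ w * (c / u + d / v) ^ w = z ^ w * (u ^ w)⁻¹ := by
    rw [← mul_cpow_of_re_nonneg_of_re_pos hvre.le hv0 hm, hvm,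
      mul_cpow_of_re_nonneg_of_re_pos hzre.le (by intro h; simp [h] at hzre) huinv,
      Complex.inv_cpow _ _ huarg]
  have huw : u ^ w ≠ 0 := by
    rw [Complex.cpow_def_of_ne_zero hu0]; exact Complex.exp_ne_zero _
  calc u ^ w * v ^ w * (1 / 2 * (Real.Gamma ((a - 1) / 2 + 1) : ℂ) * (c / u + d / v) ^ w)
      = u ^ w * (1 / 2 * (Real.Gamma ((a - 1) / 2 + 1) : ℂ)) * (v ^ w * (c / u + d / v) ^ w) := by
        ring
    _ = _ := by rw [h1]; field_simp

lemma pairing_gauss_eq {a : ℝ} (ha : 0 ≤ a) (τ σ : ℝ) {c d : ℝ} (hc : 0 < c) (hd : 0 < d) :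
    ∫ x, flow a τ (gauss c) x * (starRingEnd ℂ) (flow a σ (gauss d) x) ∂mu a =
    ∫ x, flow a (τ - σ) (gauss c) x * (starRingEnd ℂ) (gauss d x) ∂mu a := by
  have h := pairing_gauss ha (τ - σ) 0 hc hd
  rw [flow_zero, sub_zero] at h
  rw [h, pairing_gauss ha τ σ hc hd]

lemma memLp_flow_gauss {a : ℝ} (ha : 0 ≤ a) (t : ℝ) {c : ℝ} (hc : 0 < c) :
    MemLp (flow a t (gauss c)) 2 (mu a) := by
  rw [flow_gauss ha t hc]
  exact (memLp_gauss ha (re_ofReal_div_pos hc re_one_add)).const_mul _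

/-- A linear combination of Gaussians with positive integer exponents. -/
noncomputable def gaussSum (α : ℕ → ℂ) (N : ℕ) (x : ℝ) : ℂ :=
  ∑ k ∈ Finset.range N, α k * gauss ((k + 1 : ℝ) : ℂ) x

lemma flow_gaussSum {a : ℝ} (ha : 0 ≤ a) (t : ℝ) (α : ℕ → ℂ) (N : ℕ) :
    flow a t (gaussSum α N) =
      fun x => ∑ k ∈ Finset.range N, α k * flow a t (gauss ((k + 1 : ℝ) : ℂ)) x := by
  ext x
  rcases eq_or_ne t 0 with rfl | ht
  · simp only [flow_zero]; rfl
  · simp only [flow_of_ne ht]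
    unfold evol
    simp_rw [← integral_const_mul]
    rw [← integral_finsetSum]
    · refine integral_congr_ae (Eventually.of_forall fun y => ?_)
      simp only [gaussSum, Finset.mul_sum]
      refine Finset.sum_congr rfl fun k _ => by ring
    · intro k _
      exact (integrable_kern_mul ha t x (integrable_gauss ha (by
        simp only [Complex.ofReal_re]; positivity))).const_mul _

lemma memLp_flow_gaussSum {a : ℝ} (ha : 0 ≤ a) (t : ℝ) (α : ℕ → ℂ) (N : ℕ) :
    MemLp (flow a t (gaussSum α N)) 2 (mu a) := by
  rw [flow_gaussSum ha]
  exact memLp_finsetSum _ fun k _ => (memLp_flow_gauss ha t (by positivity)).const_mul _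

lemma pairing_gaussSum {a : ℝ} (ha : 0 ≤ a) (τ σ : ℝ) (α β : ℕ → ℂ) (M N : ℕ) :
    ∫ x, flow a τ (gaussSum α M) x * (starRingEnd ℂ) (flow a σ (gaussSum β N) x) ∂mu a =
    ∫ x, flow a (τ - σ) (gaussSum α M) x * (starRingEnd ℂ) (gaussSum β N x) ∂mu a := by
  have key : ∀ τ σ : ℝ,
      ∫ x, flow a τ (gaussSum α M) x * (starRingEnd ℂ) (flow a σ (gaussSum β N) x) ∂mu a =
      ∑ j ∈ Finset.range M, ∑ k ∈ Finset.range N, α j * (starRingEnd ℂ) (β k) *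
        ∫ x, flow a τ (gauss ((j + 1 : ℝ) : ℂ)) x *
          (starRingEnd ℂ) (flow a σ (gauss ((k + 1 : ℝ) : ℂ)) x) ∂mu a := by
    intro τ σ
    have hI : ∀ j k : ℕ, Integrable (fun x => flow a τ (gauss ((j + 1 : ℝ) : ℂ)) x *
          (starRingEnd ℂ) (flow a σ (gauss ((k + 1 : ℝ) : ℂ)) x)) (mu a) := fun j k =>
      (memLp_flow_gauss ha τ (by positivity)).integrable_mul
        (memLp_flow_gauss ha σ (by positivity)).star
    simp_rw [← integral_const_mul]
    have h1 : ∀ j ∈ Finset.range M, ∑ k ∈ Finset.range N, ∫ x, α j * (starRingEnd ℂ) (β k) *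
          (flow a τ (gauss ((j + 1 : ℝ) : ℂ)) x *
          (starRingEnd ℂ) (flow a σ (gauss ((k + 1 : ℝ) : ℂ)) x)) ∂mu a =
        ∫ x, ∑ k ∈ Finset.range N, α j * (starRingEnd ℂ) (β k) *
          (flow a τ (gauss ((j + 1 : ℝ) : ℂ)) x *
          (starRingEnd ℂ) (flow a σ (gauss ((k + 1 : ℝ) : ℂ)) x)) ∂mu a := fun j _ =>
      (integral_finsetSum _ fun k _ => (hI j k).const_mul _).symm
    rw [Finset.sum_congr rfl h1, ← integral_finsetSum _ fun j _ =>
      integrable_finsetSum _ fun k _ => (hI j k).const_mul _]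
    refine integral_congr_ae (Eventually.of_forall fun x => ?_)
    simp only [flow_gaussSum ha, map_sum, map_mul, Finset.sum_mul_sum]
    refine Finset.sum_congr rfl fun j _ => Finset.sum_congr rfl fun k _ => by ring
  have h := key (τ - σ) 0
  rw [flow_zero] at h
  rw [h, key]
  refine Finset.sum_congr rfl fun j _ => Finset.sum_congr rfl fun k _ => ?_
  rw [pairing_gauss_eq ha τ σ (by positivity) (by positivity), flow_zero]

/-- A polynomial weight whose inverse is integrable for `mu a`. -/
noncomputable def wt (a x : ℝ) : ℝ := 1 + x ^ (2 * (⌈a⌉₊ + 1))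

lemma one_le_wt (a x : ℝ) : 1 ≤ wt a x := by
  unfold wt
  rw [pow_mul]
  have : (0 : ℝ) ≤ (x ^ 2) ^ (⌈a⌉₊ + 1) := by positivity
  linarith

lemma wt_pos (a x : ℝ) : 0 < wt a x := one_pos.trans_le (one_le_wt a x)

lemma continuous_wt (a : ℝ) : Continuous (wt a) := by unfold wt; fun_prop

lemma measurable_wt (a : ℝ) : Measurable (wt a) := (continuous_wt a).measurable

/-- The measure `mu a` multiplied by the weight `wt a`. -/
noncomputable def rho (a : ℝ) : Measure ℝ := (mu a).withDensity fun x => ENNReal.ofReal (wt a x)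

lemma isLocallyFiniteMeasure_mu {a : ℝ} (ha : 0 ≤ a) : IsLocallyFiniteMeasure (mu a) := by
  have : IsLocallyFiniteMeasure ((volume : Measure ℝ).withDensity fun x => ENNReal.ofReal (x ^ a)) :=
    IsLocallyFiniteMeasure.withDensity_ofReal (Real.continuous_rpow_const ha)
  unfold mu
  infer_instance

lemma isLocallyFiniteMeasure_rho {a : ℝ} (ha : 0 ≤ a) : IsLocallyFiniteMeasure (rho a) := by
  have := isLocallyFiniteMeasure_mu ha
  exact IsLocallyFiniteMeasure.withDensity_ofReal (continuous_wt a)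

lemma mu_le_rho (a : ℝ) : mu a ≤ rho a := by
  unfold rho
  calc mu a = (mu a).withDensity 1 := withDensity_one.symm
    _ ≤ _ := withDensity_mono (Eventually.of_forall fun x => by
      simpa using ENNReal.ofReal_le_ofReal (one_le_wt a x))

lemma lintegral_rho (a : ℝ) (f : ℝ → ℝ≥0∞) :
    ∫⁻ x, f x ∂rho a = ∫⁻ x, ENNReal.ofReal (wt a x) * f x ∂mu a := by
  rw [rho, lintegral_withDensity_eq_lintegral_mul_non_measurable _
    (measurable_wt a).ennreal_ofReal (by simp)]
  rfl

lemma integrable_wt_inv {a : ℝ} (ha : 0 ≤ a) : Integrable (fun x => (wt a x)⁻¹) (mu a) := by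
  have hm : Measurable fun x : ℝ => (x ^ a) • (wt a x)⁻¹ := by
    have := measurable_wt a
    exact (by fun_prop : Measurable fun x : ℝ => x ^ a).smul this.inv
  rw [integrable_mu, ← Ioc_union_Ioi_eq_Ioi (zero_le_one (α := ℝ))]
  refine IntegrableOn.union ?_ ?_
  · refine Measure.integrableOn_of_bounded (M := 1) (by simp) hm.aestronglyMeasurable ?_
    filter_upwards [ae_restrict_mem measurableSet_Ioc] with x hx
    rw [norm_smul, Real.norm_of_nonneg (Real.rpow_nonneg hx.1.le a),
      Real.norm_of_nonneg (inv_nonneg.2 (wt_pos a x).le)]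
    exact mul_le_one₀ (Real.rpow_le_one hx.1.le hx.2 ha) (inv_nonneg.2 (wt_pos a x).le)
      (inv_le_one_of_one_le₀ (one_le_wt a x))
  · refine Integrable.mono' (integrableOn_Ioi_rpow_of_lt (a := a - (2 * (⌈a⌉₊ + 1) : ℕ)) ?_ one_pos)
      hm.aestronglyMeasurable ?_
    · have := Nat.le_ceil a
      push_cast; linarith
    · filter_upwards [ae_restrict_mem measurableSet_Ioi] with x hx
      have hx0 : (0 : ℝ) < x := one_pos.trans hx
      rw [norm_smul, Real.norm_of_nonneg (Real.rpow_nonneg hx0.le a),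
        Real.norm_of_nonneg (inv_nonneg.2 (wt_pos a x).le), Real.rpow_sub hx0, div_eq_mul_inv,
        Real.rpow_natCast]
      refine mul_le_mul_of_nonneg_left ?_ (Real.rpow_nonneg hx0.le a)
      refine inv_anti₀ (by positivity) ?_
      unfold wt; linarith

/-- The constant in the embedding of `L²(rho a)` into `L¹(mu a)`. -/
noncomputable def embBound (a : ℝ) : ℝ≥0∞ := (∫⁻ x, ENNReal.ofReal (wt a x)⁻¹ ∂mu a) ^ (1 / 2 : ℝ)

lemma embBound_ne_top {a : ℝ} (ha : 0 ≤ a) : embBound a ≠ ∞ := by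
  refine ENNReal.rpow_ne_top_of_nonneg (by norm_num) ?_
  exact ((hasFiniteIntegral_iff_ofReal (Eventually.of_forall fun x =>
    inv_nonneg.2 (wt_pos a x).le)).1 (integrable_wt_inv ha).2).ne

lemma memLp_mu_of_rho {a : ℝ} {f : ℝ → ℂ} (hf : MemLp f 2 (rho a)) : MemLp f 2 (mu a) :=
  hf.mono_measure (mu_le_rho a)

lemma lintegral_enorm_le {a : ℝ} {f : ℝ → ℂ} (hf : AEStronglyMeasurable f (rho a)) :
    ∫⁻ x, ‖f x‖ₑ ∂mu a ≤ eLpNorm f 2 (rho a) * embBound a := by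
  have h1 : ∫⁻ x, ‖f x‖ₑ ∂mu a =
      ∫⁻ x, ((fun x => ‖f x‖ₑ) * fun x => ENNReal.ofReal (wt a x)⁻¹) x ∂rho a := by
    rw [lintegral_rho]
    refine lintegral_congr fun x => ?_
    simp only [Pi.mul_apply]
    rw [mul_left_comm, ← ENNReal.ofReal_mul (wt_pos a x).le, mul_inv_cancel₀ (wt_pos a x).ne',
      ENNReal.ofReal_one, mul_one]
  rw [h1]
  refine (ENNReal.lintegral_mul_le_Lp_mul_Lq _ (Real.HolderConjugate.two_two) hf.enorm
    (measurable_wt a).inv.ennreal_ofReal.aemeasurable).trans_eq ?_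
  congr 1
  · rw [eLpNorm_eq_lintegral_rpow_enorm_toReal two_ne_zero ENNReal.ofNat_ne_top]; simp
  · rw [embBound, lintegral_rho]
    congr 1
    refine lintegral_congr fun x => ?_
    rw [Pi.inv_apply, ENNReal.rpow_two, sq, ← mul_assoc, ← ENNReal.ofReal_mul (wt_pos a x).le,
      mul_inv_cancel₀ (wt_pos a x).ne', ENNReal.ofReal_one, one_mul]

lemma integrable_of_rho {a : ℝ} (ha : 0 ≤ a) {f : ℝ → ℂ} (hf : MemLp f 2 (rho a)) :
    Integrable f (mu a) :=
  ⟨(memLp_mu_of_rho hf).1, (lintegral_enorm_le hf.1).trans_lt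
    (ENNReal.mul_lt_top hf.2 (embBound_ne_top ha).lt_top)⟩

lemma memLp_gauss_rho {a : ℝ} (ha : 0 ≤ a) {c : ℂ} (hc : 0 < c.re) : MemLp (gauss c) 2 (rho a) := by
  rw [memLp_two_iff_integrable_sq_norm (measurable_gauss c).aestronglyMeasurable, rho,
    integrable_withDensity_iff_integrable_smul' (measurable_wt a).ennreal_ofReal (by simp)]
  have h2c : 0 < (2 * c).re := by simpa using hc
  have := ((integrable_gaussian_moment ha 0 h2c).norm).add
    (integrable_gaussian_moment ha (⌈a⌉₊ + 1) h2c).norm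
  refine this.congr (Eventually.of_forall fun x => ?_)
  simp only [Pi.add_apply, norm_mul, norm_exp_neg_mul_sq, norm_gauss, smul_eq_mul,
    ENNReal.toReal_ofReal (wt_pos a x).le, mul_zero, pow_zero, one_mul, norm_pow,
    Complex.norm_real, Real.norm_eq_abs]
  rw [← Real.exp_nat_mul, pow_mul, sq_abs, wt, pow_mul]
  simp only [Complex.mul_re, Complex.re_ofNat, Complex.im_ofNat, zero_mul, sub_zero, Nat.cast_ofNat]
  ring_nf

lemma memLp_gaussSum_rho {a : ℝ} (ha : 0 ≤ a) (α : ℕ → ℂ) (N : ℕ) :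
    MemLp (gaussSum α N) 2 (rho a) :=
  memLp_finsetSum _ fun k _ => (memLp_gauss_rho ha (by
    simp only [Complex.ofReal_re]; positivity)).const_mul _

lemma exists_polynomial_near {g : ℝ → ℝ} (hg : Continuous g) (hs : HasCompactSupport g) {ε : ℝ}
    (hε : 0 < ε) : ∃ p : Polynomial ℝ, ∀ x : ℝ, 0 < x →
      |g x - Real.exp (-x ^ 2) * p.eval (Real.exp (-x ^ 2))| ≤ ε * Real.exp (-x ^ 2) := by
  set G : ℝ → ℝ := fun s => g (√(-Real.log s)) / s with hG
  have hcont : ContinuousOn G (Icc 0 1) := by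
    intro s hs01
    rcases eq_or_lt_of_le hs01.1 with rfl | h0
    · obtain ⟨R, hR⟩ := hs.isCompact.isBounded.subset_closedBall 0
      have hev : G =ᶠ[nhdsWithin 0 (Icc 0 1)] fun _ => 0 := by
        have : Iio (Real.exp (-(|R| + 1) ^ 2)) ∈ nhdsWithin (0 : ℝ) (Icc 0 1) :=
          mem_nhdsWithin_of_mem_nhds (Iio_mem_nhds (Real.exp_pos _))
        filter_upwards [this, self_mem_nhdsWithin] with s h1 h2
        rcases eq_or_lt_of_le h2.1 with rfl | h0
        · simp [hG]
        · have hlog : Real.log s < -(|R| + 1) ^ 2 := (Real.log_lt_iff_lt_exp h0).2 h1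
          have hsq : |R| + 1 ≤ √(-Real.log s) := Real.le_sqrt_of_sq_le (by linarith)
          have : g (√(-Real.log s)) = 0 := by
            by_contra hne
            have := hR (subset_tsupport g hne)
            rw [mem_closedBall_zero_iff, Real.norm_eq_abs, abs_of_nonneg (Real.sqrt_nonneg _)] at this
            linarith [le_abs_self R]
          simp [hG, this]
      refine (continuousWithinAt_const (b := (0 : ℝ))).congr_of_eventuallyEq hev ?_
      simp [hG]
    · refine ContinuousAt.continuousWithinAt ?_
      have : ContinuousAt Real.log s := Real.continuousAt_log h0.ne'
      exact ((hg.continuousAt.comp (Real.continuous_sqrt.continuousAt.comp this.neg))).div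
        continuousAt_id h0.ne'
  obtain ⟨p, hp⟩ := exists_polynomial_near_of_continuousOn 0 1 G hcont ε hε
  refine ⟨p, fun x hx => ?_⟩
  have hpos := Real.exp_pos (-x ^ 2)
  have h := (hp (Real.exp (-x ^ 2)) ⟨hpos.le, Real.exp_le_one_iff.2 (by nlinarith)⟩).le
  have hGx : G (Real.exp (-x ^ 2)) = g x / Real.exp (-x ^ 2) := by
    simp only [hG, Real.log_exp, neg_neg, Real.sqrt_sq hx.le]
  rw [hGx] at h
  have e : g x - Real.exp (-x ^ 2) * p.eval (Real.exp (-x ^ 2)) =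
      -(Real.exp (-x ^ 2) * (p.eval (Real.exp (-x ^ 2)) - g x / Real.exp (-x ^ 2))) := by
    field_simp; ring
  rw [e, abs_neg, abs_mul, abs_of_pos hpos, mul_comm]
  gcongr

lemma exp_mul_eval (p : Polynomial ℝ) {N : ℕ} (hN : p.natDegree < N) (x : ℝ) :
    ((Real.exp (-x ^ 2) * p.eval (Real.exp (-x ^ 2)) : ℝ) : ℂ) =
      gaussSum (fun k => (p.coeff k : ℂ)) N x := by
  rw [Polynomial.eval_eq_sum_range' hN, Finset.mul_sum, gaussSum]
  push_cast
  refine Finset.sum_congr rfl fun k _ => ?_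
  unfold gauss
  rw [mul_left_comm, ← Complex.exp_nat_mul, ← Complex.exp_add]
  congr 2
  ring

lemma exists_gaussSum_near {g : ℝ → ℂ} (hg : Continuous g) (hs : HasCompactSupport g) {ε : ℝ}
    (hε : 0 < ε) : ∃ α N, ∀ x : ℝ, 0 < x → ‖g x - gaussSum α N x‖ ≤ ε * ‖gauss 1 x‖ := by
  obtain ⟨p, hp⟩ := exists_polynomial_near (g := fun x => (g x).re) (by fun_prop)
    (hs.comp_left (g := Complex.re) rfl) (half_pos hε)
  obtain ⟨q, hq⟩ := exists_polynomial_near (g := fun x => (g x).im) (by fun_prop)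
    (hs.comp_left (g := Complex.im) rfl) (half_pos hε)
  set N := max p.natDegree q.natDegree + 1
  refine ⟨fun k => p.coeff k + Complex.I * q.coeff k, N, fun x hx => ?_⟩
  have e : gaussSum (fun k => p.coeff k + Complex.I * q.coeff k) N x =
      ((Real.exp (-x ^ 2) * p.eval (Real.exp (-x ^ 2)) : ℝ) : ℂ) +
      ((Real.exp (-x ^ 2) * q.eval (Real.exp (-x ^ 2)) : ℝ) : ℂ) * Complex.I := by
    rw [exp_mul_eval p (N := N) (by omega), exp_mul_eval q (N := N) (by omega)]
    simp only [gaussSum]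
    rw [Finset.sum_mul, ← Finset.sum_add_distrib]
    refine Finset.sum_congr rfl fun k _ => by ring
  have hx1 := hp x hx
  have hx2 := hq x hx
  rw [e, norm_gauss]
  refine (Complex.norm_le_abs_re_add_abs_im _).trans ?_
  simp only [Complex.sub_re, Complex.add_re, Complex.sub_im, Complex.add_im, Complex.ofReal_re,
    Complex.ofReal_im, Complex.re_ofReal_mul, Complex.im_ofReal_mul, Complex.I_re, Complex.I_im,
    mul_zero, mul_one, add_zero, zero_add, Complex.one_re, neg_mul, one_mul]
  linarith

lemma exists_gaussSum_eLpNorm_le {a : ℝ} (ha : 0 ≤ a) {f : ℝ → ℂ} (hf : MemLp f 2 (rho a))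
    {ε : ℝ≥0∞} (hε : ε ≠ 0) : ∃ α N, eLpNorm (f - gaussSum α N) 2 (rho a) ≤ ε := by
  have := isLocallyFiniteMeasure_rho ha
  obtain ⟨g, hgs, hg, hgc, hgm⟩ := hf.exists_hasCompactSupport_eLpNorm_sub_le
    ENNReal.ofNat_ne_top (ENNReal.half_pos hε).ne'
  have hG := memLp_gauss_rho ha (c := 1) (by simp)
  set Q := eLpNorm (gauss 1) 2 (rho a) with hQ
  have hQt : Q ≠ ∞ := hG.2.ne
  obtain ⟨δ, hδ, hδQ⟩ : ∃ δ : ℝ, 0 < δ ∧ ENNReal.ofReal δ * Q ≤ ε / 2 := by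
    obtain ⟨δ, hδ0, hδ⟩ := ENNReal.exists_nnreal_pos_mul_lt hQt (ENNReal.half_pos hε).ne'
    exact ⟨δ, hδ0, by simpa using hδ.le⟩
  obtain ⟨α, N, h⟩ := exists_gaussSum_near hgc hgs hδ
  refine ⟨α, N, ?_⟩
  have h2 : eLpNorm (g - gaussSum α N) 2 (rho a) ≤ ENNReal.ofReal δ * Q := by
    refine eLpNorm_le_mul_eLpNorm_of_ae_le_mul ?_ 2
    have hpos : ∀ᵐ x ∂rho a, 0 < x := withDensity_absolutelyContinuous _ _ (ae_mu_pos a)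
    filter_upwards [hpos] with x hx using h x hx
  calc eLpNorm (f - gaussSum α N) 2 (rho a)
      = eLpNorm ((f - g) + (g - gaussSum α N)) 2 (rho a) := by rw [sub_add_sub_cancel]
    _ ≤ eLpNorm (f - g) 2 (rho a) + eLpNorm (g - gaussSum α N) 2 (rho a) :=
        eLpNorm_add_le (hf.1.sub hgm.1) (hgm.1.sub (memLp_gaussSum_rho ha α N).1) (by norm_num)
    _ ≤ ε / 2 + ε / 2 := add_le_add hg (h2.trans hδQ)
    _ = ε := ENNReal.add_halves ε

lemma exists_gaussSum_tendsto {a : ℝ} (ha : 0 ≤ a) {f : ℝ → ℂ} (hf : MemLp f 2 (rho a)) :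
    ∃ (α : ℕ → ℕ → ℂ) (N : ℕ → ℕ),
      Tendsto (fun n => eLpNorm (f - gaussSum (α n) (N n)) 2 (rho a)) atTop (nhds 0) := by
  have h : ∀ n : ℕ, ∃ α N, eLpNorm (f - gaussSum α N) 2 (rho a) ≤ (n : ℝ≥0∞)⁻¹ := fun n =>
    exists_gaussSum_eLpNorm_le ha hf (ENNReal.inv_ne_zero.2 (ENNReal.natCast_ne_top n))
  choose α N h using h
  exact ⟨α, N, tendsto_of_tendsto_of_tendsto_of_le_of_le tendsto_const_nhds
    ENNReal.tendsto_inv_nat_nhds_zero (fun _ => zero_le) h⟩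

lemma integral_mul_conj_eq_inner {α : Type*} [MeasurableSpace α] {μ : Measure α} {u v : α → ℂ}
    (hu : MemLp u 2 μ) (hv : MemLp v 2 μ) :
    ∫ x, u x * (starRingEnd ℂ) (v x) ∂μ = inner ℂ (hv.toLp v) (hu.toLp u) := by
  rw [L2.inner_def]
  refine integral_congr_ae ?_
  filter_upwards [hu.coeFn_toLp, hv.coeFn_toLp] with x h1 h2
  rw [h1, h2, RCLike.inner_apply]

lemma eLpNorm_eq_of_integral_mul_conj {α : Type*} [MeasurableSpace α] {μ : Measure α} {u v : α → ℂ}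
    (hu : MemLp u 2 μ) (hv : MemLp v 2 μ)
    (h : ∫ x, u x * (starRingEnd ℂ) (u x) ∂μ = ∫ x, v x * (starRingEnd ℂ) (v x) ∂μ) :
    eLpNorm u 2 μ = eLpNorm v 2 μ := by
  rw [integral_mul_conj_eq_inner hu hu, integral_mul_conj_eq_inner hv hv,
    inner_self_eq_norm_sq_to_K, inner_self_eq_norm_sq_to_K] at h
  have h' : ‖hu.toLp u‖ ^ 2 = ‖hv.toLp v‖ ^ 2 := by exact_mod_cast h
  have h'' : ‖hu.toLp u‖ = ‖hv.toLp v‖ :=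
    (pow_left_inj₀ (norm_nonneg _) (norm_nonneg _) two_ne_zero).1 h'
  rw [Lp.norm_toLp, Lp.norm_toLp] at h''
  exact (ENNReal.toReal_eq_toReal_iff' hu.2.ne hv.2.ne).1 h''

lemma tendsto_integral_mul_conj {α : Type*} [MeasurableSpace α] {μ : Measure α} {u v : α → ℂ}
    {U V : ℕ → α → ℂ} (hu : MemLp u 2 μ) (hv : MemLp v 2 μ) (hU : ∀ n, MemLp (U n) 2 μ)
    (hV : ∀ n, MemLp (V n) 2 μ)
    (hUu : Tendsto (fun n => eLpNorm (U n - u) 2 μ) atTop (nhds 0))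
    (hVv : Tendsto (fun n => eLpNorm (V n - v) 2 μ) atTop (nhds 0)) :
    Tendsto (fun n => ∫ x, U n x * (starRingEnd ℂ) (V n x) ∂μ) atTop
      (nhds (∫ x, u x * (starRingEnd ℂ) (v x) ∂μ)) := by
  simp_rw [fun n => integral_mul_conj_eq_inner (hU n) (hV n)]
  rw [integral_mul_conj_eq_inner hu hv]
  exact ((Lp.tendsto_Lp_iff_tendsto_eLpNorm'' V hV v hv).2 hVv).inner
    ((Lp.tendsto_Lp_iff_tendsto_eLpNorm'' U hU u hu).2 hUu)

lemma eLpNorm_flow_gaussSum {a : ℝ} (ha : 0 ≤ a) (t : ℝ) (α : ℕ → ℂ) (N : ℕ) :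
    eLpNorm (flow a t (gaussSum α N)) 2 (mu a) = eLpNorm (gaussSum α N) 2 (mu a) := by
  refine eLpNorm_eq_of_integral_mul_conj (memLp_flow_gaussSum ha t α N)
    (memLp_mu_of_rho (memLp_gaussSum_rho ha α N)) ?_
  rw [pairing_gaussSum ha, sub_self, flow_zero]

lemma enorm_evol_le {a : ℝ} (ha : 0 ≤ a) (t x : ℝ) {f : ℝ → ℂ} (hf : MemLp f 2 (rho a)) :
    ‖evol a t f x‖ₑ ≤ ENNReal.ofReal (kernBound a * |t| ^ (-((a + 1) / 2))) *
      (eLpNorm f 2 (rho a) * embBound a) := by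
  have h0 : 0 ≤ kernBound a * |t| ^ (-((a + 1) / 2)) := (norm_nonneg _).trans (norm_kern_le ha t x 0)
  refine (enorm_integral_le_lintegral_enorm _).trans ?_
  calc ∫⁻ y, ‖kern a t x y * f y‖ₑ ∂mu a
      ≤ ∫⁻ y, ENNReal.ofReal (kernBound a * |t| ^ (-((a + 1) / 2))) * ‖f y‖ₑ ∂mu a := by
        refine lintegral_mono fun y => ?_
        rw [enorm_mul]
        gcongr
        rw [← ofReal_norm]
        exact ENNReal.ofReal_le_ofReal (norm_kern_le ha t x y)
    _ = ENNReal.ofReal (kernBound a * |t| ^ (-((a + 1) / 2))) * ∫⁻ y, ‖f y‖ₑ ∂mu a :=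
        lintegral_const_mul' _ _ ENNReal.ofReal_ne_top
    _ ≤ _ := by gcongr; exact lintegral_enorm_le hf.1

lemma tendsto_evol {a : ℝ} (ha : 0 ≤ a) (t x : ℝ) {f : ℝ → ℂ} (hf : MemLp f 2 (rho a))
    {g : ℕ → ℝ → ℂ} (hg : ∀ n, MemLp (g n) 2 (rho a))
    (h : Tendsto (fun n => eLpNorm (f - g n) 2 (rho a)) atTop (nhds 0)) :
    Tendsto (fun n => evol a t (g n) x) atTop (nhds (evol a t f x)) := by
  rw [tendsto_iff_edist_tendsto_0]
  have hlim : Tendsto (fun n => ENNReal.ofReal (kernBound a * |t| ^ (-((a + 1) / 2))) *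
      (eLpNorm (f - g n) 2 (rho a) * embBound a)) atTop (nhds 0) := by
    have := ENNReal.Tendsto.const_mul (a := ENNReal.ofReal (kernBound a * |t| ^ (-((a + 1) / 2))))
      (ENNReal.Tendsto.mul_const h (Or.inr (embBound_ne_top ha))) (Or.inr ENNReal.ofReal_ne_top)
    simpa using this
  refine tendsto_of_tendsto_of_tendsto_of_le_of_le tendsto_const_nhds hlim (fun _ => zero_le)
    fun n => ?_
  rw [edist_comm, edist_eq_enorm_sub, ← evol_sub ha t x (integrable_of_rho ha hf)
    (integrable_of_rho ha (hg n))]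
  exact enorm_evol_le ha t x (hf.sub (hg n))

lemma eLpNorm_flow_le_aux {a : ℝ} (ha : 0 ≤ a) {t : ℝ} (ht : t ≠ 0) {f : ℝ → ℂ}
    (hf : MemLp f 2 (rho a)) :
    AEStronglyMeasurable (evol a t f) (mu a) ∧
      eLpNorm (evol a t f) 2 (mu a) ≤ eLpNorm f 2 (mu a) := by
  obtain ⟨α, N, h⟩ := exists_gaussSum_tendsto ha hf
  have hG : ∀ n, MemLp (gaussSum (α n) (N n)) 2 (rho a) := fun n => memLp_gaussSum_rho ha _ _
  have hlim := fun x => tendsto_evol ha t x hf hG h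
  have hmeas : ∀ n, AEStronglyMeasurable (evol a t (gaussSum (α n) (N n))) (mu a) := fun n => by
    rw [← flow_of_ne ht]; exact (memLp_flow_gaussSum ha t _ _).1
  refine ⟨aestronglyMeasurable_of_tendsto_ae atTop hmeas (Eventually.of_forall hlim), ?_⟩
  refine (Lp.eLpNorm_lim_le_liminf_eLpNorm hmeas _ (Eventually.of_forall hlim)).trans ?_
  have hb : ∀ n, eLpNorm (evol a t (gaussSum (α n) (N n))) 2 (mu a) ≤
      eLpNorm f 2 (mu a) + eLpNorm (f - gaussSum (α n) (N n)) 2 (rho a) := by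
    intro n
    rw [← flow_of_ne ht, eLpNorm_flow_gaussSum ha]
    calc eLpNorm (gaussSum (α n) (N n)) 2 (mu a)
        = eLpNorm (f - (f - gaussSum (α n) (N n))) 2 (mu a) := by rw [sub_sub_cancel]
      _ ≤ eLpNorm f 2 (mu a) + eLpNorm (f - gaussSum (α n) (N n)) 2 (mu a) :=
        eLpNorm_sub_le (memLp_mu_of_rho hf).1 (memLp_mu_of_rho (hf.sub (hG n))).1 (by norm_num)
      _ ≤ _ := by gcongr; exact mu_le_rho a
  have hl : Tendsto (fun n => eLpNorm f 2 (mu a) + eLpNorm (f - gaussSum (α n) (N n)) 2 (rho a))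
      atTop (nhds (eLpNorm f 2 (mu a))) := by
    simpa using h.const_add (eLpNorm f 2 (mu a))
  rw [← hl.liminf_eq]
  exact liminf_le_liminf (Eventually.of_forall hb)

lemma eLpNorm_flow_le {a : ℝ} (ha : 0 ≤ a) (t : ℝ) {f : ℝ → ℂ} (hf : MemLp f 2 (rho a)) :
    eLpNorm (flow a t f) 2 (mu a) ≤ eLpNorm f 2 (mu a) := by
  rcases eq_or_ne t 0 with rfl | ht
  · rw [flow_zero]
  · rw [flow_of_ne ht]; exact (eLpNorm_flow_le_aux ha ht hf).2

lemma memLp_flow {a : ℝ} (ha : 0 ≤ a) (t : ℝ) {f : ℝ → ℂ} (hf : MemLp f 2 (rho a)) :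
    MemLp (flow a t f) 2 (mu a) := by
  refine ⟨?_, (eLpNorm_flow_le ha t hf).trans_lt (memLp_mu_of_rho hf).2⟩
  rcases eq_or_ne t 0 with rfl | ht
  · rw [flow_zero]; exact (memLp_mu_of_rho hf).1
  · rw [flow_of_ne ht]; exact (eLpNorm_flow_le_aux ha ht hf).1

lemma flow_sub {a : ℝ} (ha : 0 ≤ a) (t : ℝ) {f g : ℝ → ℂ} (hf : MemLp f 2 (rho a))
    (hg : MemLp g 2 (rho a)) : flow a t (f - g) = flow a t f - flow a t g := by
  rcases eq_or_ne t 0 with rfl | ht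
  · simp only [flow_zero]
  · simp only [flow_of_ne ht]
    ext x
    exact evol_sub ha t x (integrable_of_rho ha hf) (integrable_of_rho ha hg)

/-- The Schrödinger flow is unitary and satisfies the group law. -/
theorem pairing_flow {a : ℝ} (ha : 0 ≤ a) (τ σ : ℝ) {f g : ℝ → ℂ} (hf : MemLp f 2 (rho a))
    (hg : MemLp g 2 (rho a)) :
    ∫ x, flow a τ f x * (starRingEnd ℂ) (flow a σ g x) ∂mu a =
      ∫ x, flow a (τ - σ) f x * (starRingEnd ℂ) (g x) ∂mu a := by
  obtain ⟨α, M, hα⟩ := exists_gaussSum_tendsto ha hf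
  obtain ⟨β, N, hβ⟩ := exists_gaussSum_tendsto ha hg
  have key : ∀ (f : ℝ → ℂ), MemLp f 2 (rho a) → ∀ (α : ℕ → ℕ → ℂ) (M : ℕ → ℕ),
      Tendsto (fun n => eLpNorm (f - gaussSum (α n) (M n)) 2 (rho a)) atTop (nhds 0) → ∀ t,
      Tendsto (fun n => eLpNorm (flow a t (gaussSum (α n) (M n)) - flow a t f) 2 (mu a)) atTop
        (nhds 0) := by
    intro f hf α M h t
    refine tendsto_of_tendsto_of_tendsto_of_le_of_le tendsto_const_nhds h (fun _ => zero_le)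
      fun n => ?_
    simp only
    rw [eLpNorm_sub_comm, ← flow_sub ha t hf (memLp_gaussSum_rho ha _ _)]
    exact (eLpNorm_flow_le ha t (hf.sub (memLp_gaussSum_rho ha _ _))).trans
      (eLpNorm_mono_measure _ (mu_le_rho a))
  have h1 := tendsto_integral_mul_conj (memLp_flow ha τ hf) (memLp_flow ha σ hg)
    (fun n => memLp_flow ha τ (memLp_gaussSum_rho ha (α n) (M n)))
    (fun n => memLp_flow ha σ (memLp_gaussSum_rho ha (β n) (N n)))
    (key f hf α M hα τ) (key g hg β N hβ σ)
  have h2 := tendsto_integral_mul_conj (memLp_flow ha (τ - σ) hf) (memLp_flow ha 0 hg)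
    (fun n => memLp_flow ha (τ - σ) (memLp_gaussSum_rho ha (α n) (M n)))
    (fun n => memLp_flow ha 0 (memLp_gaussSum_rho ha (β n) (N n)))
    (key f hf α M hα (τ - σ)) (key g hg β N hβ 0)
  simp only [flow_zero] at h2
  simp_rw [pairing_gaussSum ha] at h1
  exact tendsto_nhds_unique h1 h2

instance instSFiniteMu (a : ℝ) : SFinite (mu a) := by unfold mu; infer_instance

/-- Measurable functions dominated by the inverse of the weight `wt a`. -/
def Dec (a : ℝ) (f : ℝ → ℂ) : Prop := Measurable f ∧ ∃ M : ℝ, ∀ x, ‖f x‖ ≤ M * (wt a x)⁻¹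

lemma Dec.memLp_rho {a : ℝ} (ha : 0 ≤ a) {f : ℝ → ℂ} (hf : Dec a f) : MemLp f 2 (rho a) := by
  obtain ⟨hm, M, hM⟩ := hf
  rw [memLp_two_iff_integrable_sq_norm hm.aestronglyMeasurable, rho,
    integrable_withDensity_iff_integrable_smul' (measurable_wt a).ennreal_ofReal (by simp)]
  refine ((integrable_wt_inv ha).const_mul (M ^ 2)).mono' ?_ (Eventually.of_forall fun x => ?_)
  · have := measurable_wt a
    exact ((measurable_wt a).ennreal_ofReal.ennreal_toReal.smul
      (hm.norm.pow_const 2)).aestronglyMeasurable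
  · have hw := wt_pos a x
    rw [ENNReal.toReal_ofReal hw.le, norm_smul, Real.norm_of_nonneg hw.le, norm_pow, norm_norm]
    calc wt a x * ‖f x‖ ^ 2 ≤ wt a x * (M * (wt a x)⁻¹) ^ 2 := by gcongr; exact hM x
      _ = M ^ 2 * (wt a x)⁻¹ := by field_simp

lemma Dec.memLp {a : ℝ} (ha : 0 ≤ a) {f : ℝ → ℂ} (hf : Dec a f) : MemLp f 2 (mu a) :=
  memLp_mu_of_rho (hf.memLp_rho ha)

lemma Dec.integrable {a : ℝ} (ha : 0 ≤ a) {f : ℝ → ℂ} (hf : Dec a f) : Integrable f (mu a) :=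
  integrable_of_rho ha (hf.memLp_rho ha)

lemma Dec.mono {a : ℝ} {f g : ℝ → ℂ} (hf : Dec a f) (hg : Measurable g) {c : ℝ} (hc : 0 ≤ c)
    (h : ∀ x, ‖g x‖ ≤ c * ‖f x‖) : Dec a g := by
  obtain ⟨_, M, hM⟩ := hf
  refine ⟨hg, c * M, fun x => (h x).trans ?_⟩
  rw [mul_assoc]
  exact mul_le_mul_of_nonneg_left (hM x) hc

/-- The sesquilinear form of the Schrödinger evolution. -/
noncomputable def form (a t : ℝ) (f g : ℝ → ℂ) : ℂ :=
  ∫ x, evol a t f x * (starRingEnd ℂ) (g x) ∂mu a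

lemma enorm_conj (z : ℂ) : ‖(starRingEnd ℂ) z‖ₑ = ‖z‖ₑ := by
  rw [← ofReal_norm, ← ofReal_norm, RCLike.norm_conj]

lemma lintegral_mul_le_eLpNorm_two {α : Type*} [MeasurableSpace α] {μ : Measure α} {u v : α → ℂ}
    (hu : AEStronglyMeasurable u μ) (hv : AEStronglyMeasurable v μ) :
    ∫⁻ x, ‖u x‖ₑ * ‖v x‖ₑ ∂μ ≤ eLpNorm u 2 μ * eLpNorm v 2 μ := by
  refine (ENNReal.lintegral_mul_le_Lp_mul_Lq _ (Real.HolderConjugate.two_two) hu.enorm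
    hv.enorm).trans_eq ?_
  rw [eLpNorm_eq_lintegral_rpow_enorm_toReal two_ne_zero ENNReal.ofNat_ne_top,
    eLpNorm_eq_lintegral_rpow_enorm_toReal two_ne_zero ENNReal.ofNat_ne_top]
  simp

lemma eLpNorm_evol_le {a : ℝ} (ha : 0 ≤ a) {t : ℝ} (ht : t ≠ 0) {f : ℝ → ℂ} (hf : Dec a f) :
    eLpNorm (evol a t f) 2 (mu a) ≤ eLpNorm f 2 (mu a) :=
  (eLpNorm_flow_le_aux ha ht (hf.memLp_rho ha)).2

lemma memLp_evol {a : ℝ} (ha : 0 ≤ a) {t : ℝ} (ht : t ≠ 0) {f : ℝ → ℂ} (hf : Dec a f) :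
    MemLp (evol a t f) 2 (mu a) := by
  rw [← flow_of_ne ht]; exact memLp_flow ha t (hf.memLp_rho ha)

lemma lintegral_evol_mul_le {a : ℝ} (ha : 0 ≤ a) {t : ℝ} (ht : t ≠ 0) {f g : ℝ → ℂ} (hf : Dec a f)
    (hg : Dec a g) :
    ∫⁻ x, ‖evol a t f x‖ₑ * ‖g x‖ₑ ∂mu a ≤ eLpNorm f 2 (mu a) * eLpNorm g 2 (mu a) :=
  (lintegral_mul_le_eLpNorm_two (memLp_evol ha ht hf).1 hg.1.aestronglyMeasurable).trans
    (mul_le_mul_left (eLpNorm_evol_le ha ht hf) _)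

lemma enorm_form_le_lintegral (a t : ℝ) (f g : ℝ → ℂ) :
    ‖form a t f g‖ₑ ≤ ∫⁻ x, ‖evol a t f x‖ₑ * ‖g x‖ₑ ∂mu a := by
  refine (enorm_integral_le_lintegral_enorm _).trans_eq (lintegral_congr fun x => ?_)
  rw [enorm_mul, enorm_conj]

lemma enorm_form_le_two {a : ℝ} (ha : 0 ≤ a) {t : ℝ} (ht : t ≠ 0) {f g : ℝ → ℂ} (hf : Dec a f)
    (hg : Dec a g) : ‖form a t f g‖ₑ ≤ eLpNorm f 2 (mu a) * eLpNorm g 2 (mu a) :=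
  (enorm_form_le_lintegral a t f g).trans (lintegral_evol_mul_le ha ht hf hg)

/-- The dispersive decay factor. -/
noncomputable def decay (a t : ℝ) : ℝ := kernBound a * |t| ^ (-((a + 1) / 2))

lemma enorm_evol_le_lintegral {a : ℝ} (ha : 0 ≤ a) (t x : ℝ) (f : ℝ → ℂ) :
    ‖evol a t f x‖ₑ ≤ ENNReal.ofReal (decay a t) * ∫⁻ y, ‖f y‖ₑ ∂mu a := by
  refine (enorm_integral_le_lintegral_enorm _).trans ?_
  rw [← lintegral_const_mul' _ _ ENNReal.ofReal_ne_top]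
  refine lintegral_mono fun y => ?_
  rw [enorm_mul]
  gcongr
  rw [← ofReal_norm]
  exact ENNReal.ofReal_le_ofReal (norm_kern_le ha t x y)

lemma enorm_form_le_one {a : ℝ} (ha : 0 ≤ a) (t : ℝ) (f : ℝ → ℂ) {g : ℝ → ℂ} (hg : Measurable g) :
    ‖form a t f g‖ₑ ≤ ENNReal.ofReal (decay a t) * (∫⁻ y, ‖f y‖ₑ ∂mu a) * ∫⁻ x, ‖g x‖ₑ ∂mu a := by
  refine (enorm_form_le_lintegral a t f g).trans ?_
  rw [← lintegral_const_mul _ hg.enorm]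
  exact lintegral_mono fun x => mul_le_mul_left (enorm_evol_le_lintegral ha t x f) _

lemma integrable_evol_mul_conj {a : ℝ} (ha : 0 ≤ a) {t : ℝ} (ht : t ≠ 0) {f g : ℝ → ℂ}
    (hf : Dec a f) (hg : Dec a g) :
    Integrable (fun x => evol a t f x * (starRingEnd ℂ) (g x)) (mu a) :=
  (memLp_evol ha ht hf).integrable_mul (hg.memLp ha).star

lemma form_add_right {a : ℝ} (ha : 0 ≤ a) {t : ℝ} (ht : t ≠ 0) {f g g' : ℝ → ℂ} (hf : Dec a f)
    (hg : Dec a g) (hg' : Dec a g') : form a t f (g + g') = form a t f g + form a t f g' := by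
  unfold form
  rw [← integral_add (integrable_evol_mul_conj ha ht hf hg) (integrable_evol_mul_conj ha ht hf hg')]
  simp only [Pi.add_apply, map_add, mul_add]

/-- The layer of `f` at height `l`: the phase of `f` on the set where `l < ‖f‖`. -/
noncomputable def layer (f : ℝ → ℂ) (l : ℝ) (y : ℝ) : ℂ :=
  if l < ‖f y‖ then f y / (‖f y‖ : ℂ) else 0

lemma measurable_layer_uncurry {f : ℝ → ℂ} (hf : Measurable f) :
    Measurable fun p : ℝ × ℝ => layer f p.1 p.2 := by
  unfold layer
  have h1 : Measurable fun p : ℝ × ℝ => f p.2 := hf.comp measurable_snd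
  refine Measurable.ite (measurableSet_lt measurable_fst h1.norm) ?_ measurable_const
  exact h1.div (Complex.measurable_ofReal.comp h1.norm)

lemma measurable_layer {f : ℝ → ℂ} (hf : Measurable f) (l : ℝ) : Measurable (layer f l) :=
  (measurable_layer_uncurry hf).comp (f := fun y : ℝ => (l, y)) (by fun_prop)

lemma enorm_layer (f : ℝ → ℂ) {l : ℝ} (hl : 0 < l) (y : ℝ) :
    ‖layer f l y‖ₑ = if l < ‖f y‖ then 1 else 0 := by
  unfold layer
  split_ifs with h
  · have : ‖f y‖ ≠ 0 := (hl.trans h).ne'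
    rw [← ofReal_norm, norm_div, Complex.norm_real, norm_norm, div_self this, ENNReal.ofReal_one]
  · simp

lemma dec_layer {a : ℝ} {f : ℝ → ℂ} (hf : Dec a f) {l : ℝ} (hl : 0 < l) : Dec a (layer f l) := by
  refine hf.mono (measurable_layer hf.1 l) (inv_nonneg.2 hl.le) fun y => ?_
  unfold layer
  split_ifs with h
  · rw [norm_div, Complex.norm_real, norm_norm, div_self (hl.trans h).ne', ← div_eq_inv_mul,
      one_le_div hl]
    exact h.le
  · rw [norm_zero]; positivity

lemma lintegral_rpow_Ioi_ite {β : ℝ} (hβ : -1 < β) {c : ℝ} (hc : 0 ≤ c) :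
    ∫⁻ l in Ioi (0 : ℝ), (if l < c then ENNReal.ofReal (l ^ β) else 0) =
      ENNReal.ofReal (c ^ (β + 1) / (β + 1)) := by
  have e : ∫⁻ l in Ioi (0 : ℝ), (if l < c then ENNReal.ofReal (l ^ β) else 0) =
      ∫⁻ l in Ioo (0 : ℝ) c, ENNReal.ofReal (l ^ β) := by
    rw [← Ioi_inter_Iio, inter_comm, ← setLIntegral_indicator measurableSet_Iio]
    rfl
  have hI : IntegrableOn (fun l : ℝ => l ^ β) (Ioo 0 c) :=
    ((intervalIntegrable_iff_integrableOn_Ioc_of_le hc).1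
      (intervalIntegral.intervalIntegrable_rpow' hβ)).mono_set Ioo_subset_Ioc_self
  rw [e, ← ofReal_integral_eq_lintegral_ofReal hI]
  · congr 1
    rw [← integral_Ioc_eq_integral_Ioo, ← intervalIntegral.integral_of_le hc,
      integral_rpow (Or.inl hβ), Real.zero_rpow (by linarith), sub_zero]
  · filter_upwards [ae_restrict_mem measurableSet_Ioo] with l hl using Real.rpow_nonneg hl.1.le _

lemma lintegral_Ioi_ite_one {c : ℝ} (hc : 0 ≤ c) :
    ∫⁻ l in Ioi (0 : ℝ), (if l < c then (1 : ℝ≥0∞) else 0) = ENNReal.ofReal c := by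
  have := lintegral_rpow_Ioi_ite (β := 0) (by norm_num) hc
  simpa using this

lemma lintegral_enorm_layer (f : ℝ → ℂ) (y : ℝ) :
    ∫⁻ l in Ioi (0 : ℝ), ‖layer f l y‖ₑ = ‖f y‖ₑ := by
  rw [setLIntegral_congr_fun measurableSet_Ioi (fun l hl => enorm_layer f hl y),
    lintegral_Ioi_ite_one (norm_nonneg _), ofReal_norm]

lemma integral_layer (f : ℝ → ℂ) (y : ℝ) : ∫ l in Ioi (0 : ℝ), layer f l y = f y := by
  have e : ∀ l, layer f l y = (Iio ‖f y‖).indicator (fun _ => f y / (‖f y‖ : ℂ)) l := fun l => by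
    simp [layer, indicator]
  simp_rw [e]
  rw [setIntegral_indicator measurableSet_Iio, Ioi_inter_Iio, setIntegral_const]
  rcases eq_or_ne (f y) 0 with h | h
  · simp [h]
  · have : (‖f y‖ : ℂ) ≠ 0 := by simpa using h
    simp only [measureReal_def, Real.volume_Ioo, sub_zero, ENNReal.toReal_ofReal (norm_nonneg _),
      Complex.real_smul]
    field_simp

lemma evol_eq_integral_layer {a : ℝ} (ha : 0 ≤ a) (t x : ℝ) {f : ℝ → ℂ} (hf : Dec a f) :
    evol a t f x = ∫ l in Ioi (0 : ℝ), evol a t (layer f l) x := by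
  have h1 : evol a t f x = ∫ y, (∫ l in Ioi (0 : ℝ), kern a t x y * layer f l y) ∂mu a := by
    unfold evol
    refine integral_congr_ae (Eventually.of_forall fun y => ?_)
    simp only
    rw [integral_const_mul, integral_layer]
  rw [h1, integral_integral_swap]
  · rfl
  have hm : Measurable fun p : ℝ × ℝ => kern a t x p.1 * layer f p.2 p.1 :=
    ((measurable_kern_right ha t x).comp measurable_fst).mul
      ((measurable_layer_uncurry hf.1).comp measurable_swap)
  refine ⟨hm.aestronglyMeasurable, ?_⟩
  unfold HasFiniteIntegral
  simp only [Function.uncurry]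
  rw [lintegral_prod _ hm.enorm.aemeasurable]
  calc ∫⁻ y, (∫⁻ l in Ioi (0 : ℝ), ‖kern a t x y * layer f l y‖ₑ) ∂mu a
      ≤ ∫⁻ y, ENNReal.ofReal (decay a t) * ‖f y‖ₑ ∂mu a := by
        refine lintegral_mono fun y => ?_
        rw [← lintegral_enorm_layer, ← lintegral_const_mul' _ _ ENNReal.ofReal_ne_top]
        refine lintegral_mono fun l => ?_
        rw [enorm_mul]
        gcongr
        rw [← ofReal_norm]
        exact ENNReal.ofReal_le_ofReal (norm_kern_le ha t x y)
    _ < ∞ := by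
      rw [lintegral_const_mul' _ _ ENNReal.ofReal_ne_top]
      exact ENNReal.mul_lt_top ENNReal.ofReal_lt_top (hf.integrable ha).2

lemma form_eq_integral_layer {a : ℝ} (ha : 0 ≤ a) (t : ℝ) {f g : ℝ → ℂ} (hf : Dec a f)
    (hg : Dec a g) : form a t f g = ∫ l in Ioi (0 : ℝ), form a t (layer f l) g := by
  have h1 : form a t f g =
      ∫ x, (∫ l in Ioi (0 : ℝ), evol a t (layer f l) x * (starRingEnd ℂ) (g x)) ∂mu a := by
    unfold form
    refine integral_congr_ae (Eventually.of_forall fun x => ?_)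
    simp only
    rw [integral_mul_const, evol_eq_integral_layer ha t x hf]
  rw [h1, integral_integral_swap]
  · rfl
  have hm3 : Measurable fun p : (ℝ × ℝ) × ℝ => kern a t p.1.1 p.2 * layer f p.1.2 p.2 :=
    ((measurable_kern ha).comp (f := fun p : (ℝ × ℝ) × ℝ => (t, p.1.1, p.2)) (by fun_prop)).mul
      ((measurable_layer_uncurry hf.1).comp (f := fun p : (ℝ × ℝ) × ℝ => (p.1.2, p.2)) (by fun_prop))
  have hm : Measurable fun p : ℝ × ℝ => evol a t (layer f p.2) p.1 * (starRingEnd ℂ) (g p.1) :=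
    (hm3.stronglyMeasurable.integral_prod_right (ν := mu a)).measurable.mul
      (Complex.continuous_conj.measurable.comp (hg.1.comp measurable_fst))
  refine ⟨hm.aestronglyMeasurable, ?_⟩
  unfold HasFiniteIntegral
  simp only [Function.uncurry]
  rw [lintegral_prod _ hm.enorm.aemeasurable]
  have hswap : ∫⁻ l in Ioi (0 : ℝ), ∫⁻ y, ‖layer f l y‖ₑ ∂mu a = ∫⁻ y, ‖f y‖ₑ ∂mu a := by
    rw [lintegral_lintegral_swap (measurable_layer_uncurry hf.1).enorm.aemeasurable]
    exact lintegral_congr fun y => lintegral_enorm_layer f y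
  calc ∫⁻ x, (∫⁻ l in Ioi (0 : ℝ), ‖evol a t (layer f l) x * (starRingEnd ℂ) (g x)‖ₑ) ∂mu a
      ≤ ∫⁻ x, (ENNReal.ofReal (decay a t) * ∫⁻ y, ‖f y‖ₑ ∂mu a) * ‖g x‖ₑ ∂mu a := by
        refine lintegral_mono fun x => ?_
        rw [← hswap, ← lintegral_const_mul' _ _ ENNReal.ofReal_ne_top,
          ← lintegral_mul_const' _ _ enorm_ne_top]
        refine lintegral_mono fun l => ?_
        simp only [enorm_mul, enorm_conj]
        gcongr
        exact enorm_evol_le_lintegral ha t x _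
    _ < ∞ := by
      rw [lintegral_const_mul _ hg.1.enorm]
      exact ENNReal.mul_lt_top (ENNReal.mul_lt_top ENNReal.ofReal_lt_top (hf.integrable ha).2)
        (hg.integrable ha).2

lemma mul_le_mul_sq_add (A D : ℝ≥0∞) {c : ℝ≥0∞} (h0 : c ≠ 0) (ht : c ≠ ∞) :
    A * D ≤ c * A ^ 2 + c⁻¹ * D ^ 2 := by
  rcases le_total D (c * A) with h | h
  · calc A * D ≤ A * (c * A) := by gcongr
      _ = c * A ^ 2 := by ring
      _ ≤ _ := le_self_add
  · have : A ≤ c⁻¹ * D := by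
      rw [mul_comm, ← div_eq_mul_inv, ENNReal.le_div_iff_mul_le (Or.inl h0) (Or.inl ht), mul_comm]
      exact h
    calc A * D ≤ (c⁻¹ * D) * D := by gcongr
      _ = c⁻¹ * D ^ 2 := by ring
      _ ≤ _ := le_add_self

lemma eLpNorm_two_sq {α : Type*} [MeasurableSpace α] (μ : Measure α) (u : α → ℂ) :
    eLpNorm u 2 μ ^ 2 = ∫⁻ x, ‖u x‖ₑ ^ 2 ∂μ := by
  rw [eLpNorm_eq_lintegral_rpow_enorm_toReal two_ne_zero ENNReal.ofNat_ne_top, ← ENNReal.rpow_natCast,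
    ← ENNReal.rpow_mul]
  simp

lemma lintegral_rpow_layer {a : ℝ} {f : ℝ → ℂ} (hf : Measurable f) {p : ℝ} (hp : 0 < p) :
    ∫⁻ l in Ioi (0 : ℝ), ENNReal.ofReal (l ^ (p - 1)) * ∫⁻ y, ‖layer f l y‖ₑ ∂mu a =
      ENNReal.ofReal (1 / p) * ∫⁻ y, ‖f y‖ₑ ^ p ∂mu a := by
  have hm : Measurable fun q : ℝ × ℝ => ENNReal.ofReal (q.1 ^ (p - 1)) * ‖layer f q.1 q.2‖ₑ :=
    ((measurable_fst.pow_const _).ennreal_ofReal).mul (measurable_layer_uncurry hf).enorm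
  simp_rw [← fun l : ℝ => lintegral_const_mul (μ := mu a) (ENNReal.ofReal (l ^ (p - 1)))
    (measurable_layer hf l).enorm]
  rw [lintegral_lintegral_swap hm.aemeasurable, ← lintegral_const_mul _ (hf.enorm.pow_const p)]
  refine lintegral_congr fun y => ?_
  have : ∀ l ∈ Ioi (0 : ℝ), ENNReal.ofReal (l ^ (p - 1)) * ‖layer f l y‖ₑ =
      if l < ‖f y‖ then ENNReal.ofReal (l ^ (p - 1)) else 0 := fun l hl => by
    rw [enorm_layer f hl]; split_ifs <;> simp
  rw [setLIntegral_congr_fun measurableSet_Ioi this,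
    lintegral_rpow_Ioi_ite (by linarith) (norm_nonneg _), sub_add_cancel, div_eq_mul_one_div,
    mul_comm, ENNReal.ofReal_mul (by positivity), ← ENNReal.ofReal_rpow_of_nonneg (norm_nonneg _) hp.le,
    ofReal_norm]

/-- The part of `g` of height below `1 / l`. -/
noncomputable def lowPart (g : ℝ → ℂ) (l x : ℝ) : ℂ := if l * ‖g x‖ < 1 then g x else 0

lemma measurable_lowPart_uncurry {g : ℝ → ℂ} (hg : Measurable g) :
    Measurable fun q : ℝ × ℝ => lowPart g q.1 q.2 := by
  have h1 : Measurable fun q : ℝ × ℝ => g q.2 := hg.comp measurable_snd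
  exact Measurable.ite (measurableSet_lt (measurable_fst.mul h1.norm) measurable_const) h1
    measurable_const

lemma measurable_lowPart {g : ℝ → ℂ} (hg : Measurable g) (l : ℝ) : Measurable (lowPart g l) :=
  (measurable_lowPart_uncurry hg).comp (f := fun y : ℝ => (l, y)) (by fun_prop)

lemma dec_lowPart {a : ℝ} {g : ℝ → ℂ} (hg : Dec a g) (l : ℝ) : Dec a (lowPart g l) := by
  refine hg.mono (measurable_lowPart hg.1 l) zero_le_one fun y => ?_
  unfold lowPart; split_ifs <;> simp

lemma dec_sub_lowPart {a : ℝ} {g : ℝ → ℂ} (hg : Dec a g) (l : ℝ) : Dec a (g - lowPart g l) := by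
  refine hg.mono (hg.1.sub (measurable_lowPart hg.1 l)) zero_le_one fun y => ?_
  simp only [Pi.sub_apply, lowPart]; split_ifs <;> simp

lemma lintegral_rpow_lowPart {a : ℝ} {g : ℝ → ℂ} (hg : Measurable g) {p : ℝ} (hp0 : 0 < p)
    (hp : p < 2) :
    ∫⁻ l in Ioi (0 : ℝ), ENNReal.ofReal (l ^ (1 - p)) * ∫⁻ x, ‖lowPart g l x‖ₑ ^ 2 ∂mu a =
      ENNReal.ofReal (1 / (2 - p)) * ∫⁻ x, ‖g x‖ₑ ^ p ∂mu a := by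
  have hm : Measurable fun q : ℝ × ℝ => ENNReal.ofReal (q.1 ^ (1 - p)) * ‖lowPart g q.1 q.2‖ₑ ^ 2 :=
    ((measurable_fst.pow_const _).ennreal_ofReal).mul
      ((measurable_lowPart_uncurry hg).enorm.pow_const 2)
  simp_rw [← fun l : ℝ => lintegral_const_mul (μ := mu a) (ENNReal.ofReal (l ^ (1 - p)))
    ((measurable_lowPart hg l).enorm.pow_const 2)]
  rw [lintegral_lintegral_swap hm.aemeasurable, ← lintegral_const_mul _ (hg.enorm.pow_const p)]
  refine lintegral_congr fun y => ?_
  rcases eq_or_ne (g y) 0 with h0 | h0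
  · simp [lowPart, h0, hp0]
  have hpos : 0 < ‖g y‖ := norm_pos_iff.2 h0
  have : ∀ l ∈ Ioi (0 : ℝ), ENNReal.ofReal (l ^ (1 - p)) * ‖lowPart g l y‖ₑ ^ 2 =
      ‖g y‖ₑ ^ 2 * if l < 1 / ‖g y‖ then ENNReal.ofReal (l ^ (1 - p)) else 0 := fun l hl => by
    unfold lowPart
    simp only [lt_div_iff₀ hpos]
    split_ifs
    · rw [mul_comm]
    · simp
  rw [setLIntegral_congr_fun measurableSet_Ioi this, lintegral_const_mul' _ _ (by simp),
    lintegral_rpow_Ioi_ite (by linarith) (by positivity), ← ofReal_norm,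
    ← ENNReal.ofReal_pow hpos.le, ← ENNReal.ofReal_mul (by positivity),
    ENNReal.ofReal_rpow_of_nonneg hpos.le hp0.le, ← ENNReal.ofReal_mul (by simp; linarith)]
  congr 1
  have e : 1 - p + 1 = 2 - p := by ring
  have : ‖g y‖ ^ 2 * (1 / ‖g y‖) ^ (2 - p) = ‖g y‖ ^ p := by
    rw [one_div, Real.inv_rpow hpos.le, ← Real.rpow_neg hpos.le, ← Real.rpow_natCast,
      ← Real.rpow_add hpos]
    congr 1; push_cast; ring
  rw [e, ← mul_div_assoc, this]; ring

lemma enorm_sub_lowPart_le (g : ℝ → ℂ) {l : ℝ} (hl : 0 < l) {p : ℝ} (hp : 1 < p) (x : ℝ) :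
    ‖(g - lowPart g l) x‖ₑ ≤ ENNReal.ofReal (l ^ (p - 1)) * ‖g x‖ₑ ^ p := by
  simp only [Pi.sub_apply, lowPart]
  split_ifs with h
  · simp
  push Not at h
  have hg : 0 ≤ ‖g x‖ := norm_nonneg _
  rw [sub_zero, ← ofReal_norm, ENNReal.ofReal_rpow_of_nonneg hg (by linarith),
    ← ENNReal.ofReal_mul (by positivity)]
  refine ENNReal.ofReal_le_ofReal ?_
  have e : l ^ (p - 1) * ‖g x‖ ^ p = (l * ‖g x‖) ^ (p - 1) * ‖g x‖ := by
    rw [Real.mul_rpow hl.le hg, mul_assoc, ← Real.rpow_add_one' hg (by linarith), sub_add_cancel]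
  rw [e]
  exact le_mul_of_one_le_left hg (Real.one_le_rpow h (by linarith))

lemma enorm_form_layer_le {a : ℝ} (ha : 0 ≤ a) {t : ℝ} (ht : t ≠ 0) {f g : ℝ → ℂ} (hf : Dec a f)
    (hg : Dec a g) {p : ℝ} (hp : 1 < p) {l : ℝ} (hl : 0 < l) :
    ‖form a t (layer f l) g‖ₑ ≤
      (1 + ENNReal.ofReal (decay a t) * ∫⁻ x, ‖g x‖ₑ ^ p ∂mu a) *
        (ENNReal.ofReal (l ^ (p - 1)) * ∫⁻ y, ‖layer f l y‖ₑ ∂mu a) +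
      ENNReal.ofReal (l ^ (1 - p)) * ∫⁻ x, ‖lowPart g l x‖ₑ ^ 2 ∂mu a := by
  have hlay := dec_layer hf hl
  have hsplit : form a t (layer f l) g =
      form a t (layer f l) (lowPart g l) + form a t (layer f l) (g - lowPart g l) := by
    rw [← form_add_right ha ht hlay (dec_lowPart hg l) (dec_sub_lowPart hg l), add_sub_cancel]
  have hc : ENNReal.ofReal (l ^ (1 - p)) = (ENNReal.ofReal (l ^ (p - 1)))⁻¹ := by
    rw [← ENNReal.ofReal_inv_of_pos (by positivity), ← Real.rpow_neg hl.le, neg_sub]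
  have hsq : ∫⁻ y, ‖layer f l y‖ₑ ∂mu a = eLpNorm (layer f l) 2 (mu a) ^ 2 := by
    rw [eLpNorm_two_sq]
    refine lintegral_congr fun y => ?_
    rw [enorm_layer f hl]; split_ifs <;> simp
  have h1 : ‖form a t (layer f l) (lowPart g l)‖ₑ ≤
      ENNReal.ofReal (l ^ (p - 1)) * ∫⁻ y, ‖layer f l y‖ₑ ∂mu a +
      ENNReal.ofReal (l ^ (1 - p)) * ∫⁻ x, ‖lowPart g l x‖ₑ ^ 2 ∂mu a := by
    rw [hsq, hc, ← eLpNorm_two_sq]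
    refine (enorm_form_le_two ha ht hlay (dec_lowPart hg l)).trans (mul_le_mul_sq_add _ _ ?_ ?_)
    · simpa using Real.rpow_pos_of_pos hl _
    · simp
  have h2 : ‖form a t (layer f l) (g - lowPart g l)‖ₑ ≤
      ENNReal.ofReal (decay a t) * (∫⁻ y, ‖layer f l y‖ₑ ∂mu a) *
        (ENNReal.ofReal (l ^ (p - 1)) * ∫⁻ x, ‖g x‖ₑ ^ p ∂mu a) := by
    refine (enorm_form_le_one ha t _ (dec_sub_lowPart hg l).1).trans ?_
    gcongr
    rw [← lintegral_const_mul _ (hg.1.enorm.pow_const p)]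
    exact lintegral_mono fun x => enorm_sub_lowPart_le g hl hp x
  rw [hsplit]
  refine (enorm_add_le _ _).trans ((add_le_add h1 h2).trans_eq ?_)
  ring

lemma enorm_form_le_aux {a : ℝ} (ha : 0 ≤ a) {t : ℝ} (ht : t ≠ 0) {f g : ℝ → ℂ} (hf : Dec a f)
    (hg : Dec a g) {p : ℝ} (hp : 1 < p) (hp2 : p < 2) :
    ‖form a t f g‖ₑ ≤
      (1 + ENNReal.ofReal (decay a t) * ∫⁻ x, ‖g x‖ₑ ^ p ∂mu a) *
        (ENNReal.ofReal (1 / p) * ∫⁻ y, ‖f y‖ₑ ^ p ∂mu a) +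
      ENNReal.ofReal (1 / (2 - p)) * ∫⁻ x, ‖g x‖ₑ ^ p ∂mu a := by
  rw [form_eq_integral_layer ha t hf hg, ← lintegral_rpow_layer hf.1 (by linarith),
    ← lintegral_rpow_lowPart hg.1 (by linarith) hp2]
  have hm : Measurable fun l : ℝ =>
      ENNReal.ofReal (l ^ (p - 1)) * ∫⁻ y, ‖layer f l y‖ₑ ∂mu a :=
    (measurable_id.pow_const _).ennreal_ofReal.mul
      (measurable_layer_uncurry hf.1).enorm.lintegral_prod_right'
  rw [← lintegral_const_mul _ hm, ← lintegral_add_left (hm.const_mul _)]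
  refine (enorm_integral_le_lintegral_enorm _).trans
    (setLIntegral_mono' measurableSet_Ioi fun l hl => ?_)
  exact enorm_form_layer_le ha ht hf hg hp hl

lemma Dec.lintegral_rpow_lt_top {a : ℝ} (ha : 0 ≤ a) {f : ℝ → ℂ} (hf : Dec a f) {p : ℝ}
    (hp : 1 ≤ p) : ∫⁻ x, ‖f x‖ₑ ^ p ∂mu a < ∞ := by
  obtain ⟨hm, M, hM⟩ := hf
  have hM0 : 0 ≤ M := by
    have := (norm_nonneg _).trans (hM 0)
    exact nonneg_of_mul_nonneg_left this (inv_pos.2 (wt_pos a 0))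
  refine lt_of_le_of_lt (lintegral_mono fun x => ?_)
    ((integrable_wt_inv ha).const_mul (M ^ p)).lintegral_lt_top
  have hw := one_le_wt a x
  rw [← ofReal_norm, ENNReal.ofReal_rpow_of_nonneg (norm_nonneg _) (by linarith)]
  refine ENNReal.ofReal_le_ofReal ?_
  calc ‖f x‖ ^ p ≤ (M * (wt a x)⁻¹) ^ p := by gcongr; exact hM x
    _ = M ^ p * ((wt a x)⁻¹) ^ p := Real.mul_rpow hM0 (by positivity)
    _ ≤ M ^ p * ((wt a x)⁻¹) ^ (1 : ℝ) := by
      refine mul_le_mul_of_nonneg_left ?_ (by positivity)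
      exact Real.rpow_le_rpow_of_exponent_ge (by positivity) (inv_le_one_of_one_le₀ hw) hp
    _ = _ := by rw [Real.rpow_one]

lemma kernBound_nonneg {a : ℝ} (ha : 0 ≤ a) : 0 ≤ kernBound a := by
  have := (norm_nonneg _).trans (norm_kern_le ha 1 0 0)
  simpa using this

lemma form_const_mul (a t : ℝ) (f g : ℝ → ℂ) (c d : ℝ) :
    form a t (fun x => (c : ℂ) * f x) (fun x => (d : ℂ) * g x) = ((c * d : ℝ) : ℂ) * form a t f g := by
  unfold form evol
  rw [← integral_const_mul]
  refine integral_congr_ae (Eventually.of_forall fun x => ?_)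
  simp only [map_mul, Complex.conj_ofReal]
  have : ∀ y, kern a t x y * ((c : ℂ) * f y) = (c : ℂ) * (kern a t x y * f y) := fun y => by ring
  simp_rw [this]
  rw [integral_const_mul]
  push_cast
  ring

lemma form_eq_zero_of_left (a t : ℝ) {f g : ℝ → ℂ} (hf : f =ᵐ[mu a] 0) : form a t f g = 0 := by
  have : ∀ x, evol a t f x = 0 := fun x => by
    refine integral_eq_zero_of_ae ?_
    filter_upwards [hf] with y hy
    simp [hy]
  simp [form, this]

lemma form_eq_zero_of_right (a t : ℝ) {f g : ℝ → ℂ} (hg : g =ᵐ[mu a] 0) : form a t f g = 0 := by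
  refine integral_eq_zero_of_ae ?_
  filter_upwards [hg] with y hy
  simp [hy]

lemma ae_eq_zero_of_lintegral_rpow {a : ℝ} {f : ℝ → ℂ} (hf : Measurable f) {p : ℝ} (hp : 0 < p)
    (h : ∫⁻ x, ‖f x‖ₑ ^ p ∂mu a = 0) : f =ᵐ[mu a] 0 := by
  rw [lintegral_eq_zero_iff (hf.enorm.pow_const p)] at h
  filter_upwards [h] with x hx
  simpa [hp, hp.not_gt] using hx

lemma lintegral_const_mul_rpow {a : ℝ} {f : ℝ → ℂ} {c : ℝ} (hc : 0 ≤ c) {p : ℝ} (hp : 0 ≤ p) :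
    ∫⁻ x, ‖(c : ℂ) * f x‖ₑ ^ p ∂mu a = ENNReal.ofReal (c ^ p) * ∫⁻ x, ‖f x‖ₑ ^ p ∂mu a := by
  rw [← lintegral_const_mul' _ _ ENNReal.ofReal_ne_top]
  refine lintegral_congr fun x => ?_
  rw [enorm_mul, ENNReal.mul_rpow_of_nonneg _ _ hp, ← ofReal_norm, Complex.norm_real,
    Real.norm_of_nonneg hc, ENNReal.ofReal_rpow_of_nonneg hc hp]

/-- The dispersive estimate in `L^p`, in dual form. -/
lemma exists_enorm_form_le {a : ℝ} (ha : 0 ≤ a) {p : ℝ} (hp : 1 < p) (hp2 : p < 2) :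
    ∃ C : ℝ, 0 ≤ C ∧ ∀ t : ℝ, t ≠ 0 → ∀ f g : ℝ → ℂ, Dec a f → Dec a g →
      ‖form a t f g‖ₑ ≤ ENNReal.ofReal (C * |t| ^ (-((a + 1) / 2 * (2 / p - 1)))) *
        (∫⁻ x, ‖f x‖ₑ ^ p ∂mu a) ^ (1 / p) * (∫⁻ x, ‖g x‖ₑ ^ p ∂mu a) ^ (1 / p) := by
  have hk := kernBound_nonneg ha
  have hp0 : 0 < p := by linarith
  have h2p : 0 < 2 - p := by linarith
  refine ⟨(2 / p + 1 / (2 - p)) * (kernBound a + 1) ^ (2 / p - 1), by positivity,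
    fun t ht f g hf hg => ?_⟩
  have htop := hf.lintegral_rpow_lt_top ha hp.le
  have htop' := hg.lintegral_rpow_lt_top ha hp.le
  set X := ∫⁻ x, ‖f x‖ₑ ^ p ∂mu a with hX
  set Y := ∫⁻ x, ‖g x‖ₑ ^ p ∂mu a with hY
  rcases eq_or_ne X 0 with hX0 | hX0
  · rw [form_eq_zero_of_left a t (ae_eq_zero_of_lintegral_rpow hf.1 hp0 hX0)]; simp
  rcases eq_or_ne Y 0 with hY0 | hY0
  · rw [form_eq_zero_of_right a t (ae_eq_zero_of_lintegral_rpow hg.1 hp0 hY0)]; simp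
  obtain ⟨x, hx, hXx⟩ : ∃ x : ℝ, 0 < x ∧ X = ENNReal.ofReal x :=
    ⟨X.toReal, ENNReal.toReal_pos hX0 htop.ne, (ENNReal.ofReal_toReal htop.ne).symm⟩
  obtain ⟨y, hy, hYy⟩ : ∃ y : ℝ, 0 < y ∧ Y = ENNReal.ofReal y :=
    ⟨Y.toReal, ENNReal.toReal_pos hY0 htop'.ne, (ENNReal.ofReal_toReal htop'.ne).symm⟩
  have ht' : 0 < |t| := abs_pos.2 ht
  set B : ℝ := (kernBound a + 1) * |t| ^ (-((a + 1) / 2)) with hB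
  have hB0 : 0 < B := by positivity
  have hdB : decay a t ≤ B := by
    unfold decay
    rw [hB]; gcongr; linarith
  set c : ℝ := (x * B) ^ (1 / p) with hc
  set d : ℝ := (y * B) ^ (1 / p) with hd
  have hc0 : 0 < c := by positivity
  have hd0 : 0 < d := by positivity
  have hcp : c⁻¹ ^ p * x = 1 / B := by
    rw [Real.inv_rpow hc0.le, hc, ← Real.rpow_mul (by positivity), one_div_mul_cancel hp0.ne',
      Real.rpow_one]
    field_simp
  have hdp : d⁻¹ ^ p * y = 1 / B := by
    rw [Real.inv_rpow hd0.le, hd, ← Real.rpow_mul (by positivity), one_div_mul_cancel hp0.ne',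
      Real.rpow_one]
    field_simp
  have decmul : ∀ {h : ℝ → ℂ} {e : ℝ}, 0 ≤ e → Dec a h → Dec a (fun x => (e : ℂ) * h x) :=
    fun {h e} he hh => hh.mono (measurable_const.mul hh.1) he fun x => by
      rw [norm_mul, Complex.norm_real, Real.norm_of_nonneg he]
  have key := enorm_form_le_aux ha ht (decmul (inv_nonneg.2 hc0.le) hf)
    (decmul (inv_nonneg.2 hd0.le) hg) hp hp2
  rw [lintegral_const_mul_rpow (inv_nonneg.2 hc0.le) hp0.le,
    lintegral_const_mul_rpow (inv_nonneg.2 hd0.le) hp0.le, ← hX, ← hY, hXx, hYy,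
    ← ENNReal.ofReal_mul (p := c⁻¹ ^ p) (by positivity),
    ← ENNReal.ofReal_mul (p := d⁻¹ ^ p) (by positivity), hcp, hdp,
    ← ENNReal.ofReal_mul (p := 1 / p) (by positivity),
    ← ENNReal.ofReal_mul (p := 1 / (2 - p)) (by positivity)] at key
  have hone : ENNReal.ofReal (decay a t) * ENNReal.ofReal (1 / B) ≤ 1 := by
    calc _ ≤ ENNReal.ofReal B * ENNReal.ofReal (1 / B) := by gcongr
      _ = 1 := by
        rw [← ENNReal.ofReal_mul hB0.le, mul_one_div_cancel hB0.ne', ENNReal.ofReal_one]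
  have key2 : ‖form a t (fun x => ((c⁻¹ : ℝ) : ℂ) * f x) (fun x => ((d⁻¹ : ℝ) : ℂ) * g x)‖ₑ ≤
      ENNReal.ofReal ((2 / p + 1 / (2 - p)) / B) := by
    refine key.trans ?_
    calc _ ≤ (1 + 1) * ENNReal.ofReal (1 / p * (1 / B)) +
        ENNReal.ofReal (1 / (2 - p) * (1 / B)) := by gcongr
      _ = ENNReal.ofReal ((2 / p + 1 / (2 - p)) / B) := by
        rw [one_add_one_eq_two, ← ENNReal.ofReal_ofNat 2, ← ENNReal.ofReal_mul (by norm_num),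
          ← ENNReal.ofReal_add (by positivity) (by positivity)]
        congr 1; ring
  have hform : form a t f g = ((c * d : ℝ) : ℂ) *
      form a t (fun x => ((c⁻¹ : ℝ) : ℂ) * f x) (fun x => ((d⁻¹ : ℝ) : ℂ) * g x) := by
    rw [form_const_mul, ← mul_assoc, ← Complex.ofReal_mul]
    have : c * d * (c⁻¹ * d⁻¹) = 1 := by field_simp
    rw [this]; simp
  rw [hform, enorm_mul, ← ofReal_norm, Complex.norm_real, Real.norm_of_nonneg (by positivity),
    hXx, hYy, ENNReal.ofReal_rpow_of_pos hx, ENNReal.ofReal_rpow_of_pos hy,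
    ← ENNReal.ofReal_mul (by positivity), ← ENNReal.ofReal_mul (by positivity)]
  refine (mul_le_mul_right key2 _).trans ?_
  rw [← ENNReal.ofReal_mul (by positivity)]
  refine ENNReal.ofReal_le_ofReal (le_of_eq ?_)
  have hBB : B ^ (1 / p) * B ^ (1 / p) / B = (kernBound a + 1) ^ (2 / p - 1) *
      |t| ^ (-((a + 1) / 2 * (2 / p - 1))) := by
    rw [← Real.rpow_add hB0, ← Real.rpow_sub_one hB0.ne', hB, Real.mul_rpow (by positivity)
      (by positivity), ← Real.rpow_mul ht'.le]
    congr 2 <;> ring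
  rw [hc, hd, Real.mul_rpow hx.le hB0.le, Real.mul_rpow hy.le hB0.le]
  calc _ = (2 / p + 1 / (2 - p)) * (B ^ (1 / p) * B ^ (1 / p) / B) * x ^ (1 / p) * y ^ (1 / p) := by
        ring
    _ = _ := by rw [hBB]; ring

lemma lintegral_comp_abs (h : ℝ → ℝ≥0∞) : ∫⁻ t : ℝ, h |t| = 2 * ∫⁻ t in Ioi (0 : ℝ), h t := by
  have h1 : ∫⁻ t in Ioi (0 : ℝ), h |t| = ∫⁻ t in Ioi (0 : ℝ), h t :=
    setLIntegral_congr_fun measurableSet_Ioi fun t ht => by simp only [abs_of_pos (mem_Ioi.1 ht)]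
  have h2 : ∫⁻ t in Iic (0 : ℝ), h |t| = ∫⁻ t in Ioi (0 : ℝ), h t := by
    rw [setLIntegral_congr Iio_ae_eq_Iic.symm, ← h1]
    have := (Measure.measurePreserving_neg (volume : Measure ℝ)).setLIntegral_comp_preimage_emb
      (MeasurableEquiv.neg ℝ).measurableEmbedding (fun t => h |t|) (Iio 0)
    rw [← this]
    simp
  rw [← lintegral_add_compl _ (measurableSet_Ioi (a := (0 : ℝ))), compl_Ioi, h1, h2, two_mul]

lemma lintegral_near {α : ℝ} (hα : α < 1) {R : ℝ} (hR : 0 ≤ R) :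
    ∫⁻ t : ℝ, (if |t| < R then ENNReal.ofReal (|t| ^ (-α)) else 0) =
      2 * ENNReal.ofReal (R ^ (1 - α) / (1 - α)) := by
  rw [lintegral_comp_abs (fun t => if t < R then ENNReal.ofReal (t ^ (-α)) else 0),
    lintegral_rpow_Ioi_ite (by linarith) hR, neg_add_eq_sub]

lemma lintegral_far {α : ℝ} (hα : 0 < α) {R : ℝ} (hR : 0 < R) :
    ∫⁻ t : ℝ, (if |t| < R then 0 else ENNReal.ofReal (|t| ^ (-α))) ^ (2 / α) =
      2 * ENNReal.ofReal R⁻¹ := by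
  rw [lintegral_comp_abs (fun t => (if t < R then 0 else ENNReal.ofReal (t ^ (-α))) ^ (2 / α))]
  congr 1
  have e : ∀ t ∈ Ioi (0 : ℝ), (if t < R then 0 else ENNReal.ofReal (t ^ (-α))) ^ (2 / α) =
      (Ici R).indicator (fun t => ENNReal.ofReal (t ^ (-2 : ℝ))) t := fun t ht => by
    have ht : 0 < t := ht
    by_cases h : t < R
    · simp [h, hα]
    · rw [if_neg h, indicator_of_mem (mem_Ici.2 (not_lt.1 h)),
        ENNReal.ofReal_rpow_of_nonneg (by positivity) (by positivity), ← Real.rpow_mul ht.le]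
      congr 2
      field_simp
  rw [setLIntegral_congr_fun measurableSet_Ioi e, setLIntegral_indicator measurableSet_Ici,
    inter_eq_left.2 (Ici_subset_Ioi.2 hR), setLIntegral_congr Ioi_ae_eq_Ici.symm,
    ← ofReal_integral_eq_lintegral_ofReal (integrableOn_Ioi_rpow_of_lt (by norm_num) hR),
    integral_Ioi_rpow_of_lt (by norm_num) hR]
  · congr 1
    norm_num [Real.rpow_neg_one]
  · filter_upwards [ae_restrict_mem measurableSet_Ioi] with t ht
    exact Real.rpow_nonneg (hR.trans ht).le _

lemma lintegral_riesz_min_le {α : ℝ} (hα : 0 < α) (hα1 : α < 1) {g : ℝ → ℝ≥0∞} (hg : Measurable g)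
    (hg1 : ∫⁻ t, g t ^ (2 / (2 - α)) ≤ 1) (s : ℝ) (c : ℝ≥0∞) :
    c * ∫⁻ t, ENNReal.ofReal (|t - s| ^ (-α)) * min (g t) c ≤
      ENNReal.ofReal (2 / (1 - α) + 2 ^ (α / 2)) * c ^ (2 / (2 - α)) := by
  have h1α : 0 < 1 - α := by linarith
  have h2α : 0 < 2 - α := by linarith
  rcases eq_or_ne c 0 with rfl | hc0
  · simp
  rcases eq_or_ne c ∞ with rfl | hct
  · rw [ENNReal.top_rpow_of_pos (by positivity), ENNReal.mul_top]
    · exact le_top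
    · simp only [ne_eq, ENNReal.ofReal_eq_zero, not_le]; positivity
  obtain ⟨l, hl, rfl⟩ : ∃ l : ℝ, 0 < l ∧ c = ENNReal.ofReal l :=
    ⟨c.toReal, ENNReal.toReal_pos hc0 hct, (ENNReal.ofReal_toReal hct).symm⟩
  set p := 2 / (2 - α) with hp
  have hp0 : 0 < p := by positivity
  set R : ℝ := l ^ (-p) with hR
  have hR0 : 0 < R := by positivity
  have hconj : (2 / α).HolderConjugate p := by
    rw [Real.holderConjugate_iff]
    refine ⟨by rw [lt_div_iff₀ hα]; linarith, ?_⟩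
    rw [hp]; field_simp; ring
  set kn : ℝ → ℝ≥0∞ := fun t => if |t| < R then ENNReal.ofReal (|t| ^ (-α)) else 0 with hkn
  set kf : ℝ → ℝ≥0∞ := fun t => if |t| < R then 0 else ENNReal.ofReal (|t| ^ (-α)) with hkf
  have hmpow : Measurable fun t : ℝ => ENNReal.ofReal (|t| ^ (-α)) :=
    (measurable_norm.pow_const (-α)).ennreal_ofReal
  have hset : MeasurableSet {t : ℝ | |t| < R} := measurableSet_lt measurable_norm measurable_const
  have hmn : Measurable kn := Measurable.ite hset hmpow measurable_const
  have hmf : Measurable kf := Measurable.ite hset measurable_const hmpow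
  have hsplit : ∀ t, ENNReal.ofReal (|t - s| ^ (-α)) * min (g t) (ENNReal.ofReal l) ≤
      kn (t - s) * ENNReal.ofReal l + kf (t - s) * g t := fun t => by
    simp only [hkn, hkf]
    split_ifs
    · rw [zero_mul, add_zero]; gcongr; exact min_le_right _ _
    · rw [zero_mul, zero_add]; gcongr; exact min_le_left _ _
  have hnear : ∫⁻ t, kn (t - s) = ENNReal.ofReal (2 * (R ^ (1 - α) / (1 - α))) := by
    rw [lintegral_sub_right_eq_self kn s, hkn, lintegral_near hα1 hR0.le, ENNReal.ofReal_mul two_pos.le,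
      ENNReal.ofReal_ofNat]
  have hfar : ∫⁻ t, kf (t - s) * g t ≤ ENNReal.ofReal ((2 * R⁻¹) ^ (α / 2)) := by
    refine (ENNReal.lintegral_mul_le_Lp_mul_Lq volume hconj
      (hmf.comp (measurable_id.sub_const s)).aemeasurable hg.aemeasurable).trans ?_
    have : ∫⁻ t, kf (t - s) ^ (2 / α) = ENNReal.ofReal (2 * R⁻¹) := by
      rw [lintegral_sub_right_eq_self (fun t => kf t ^ (2 / α)) s, hkf, lintegral_far hα hR0,
        ENNReal.ofReal_mul two_pos.le, ENNReal.ofReal_ofNat]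
    simp only [Function.comp_def, id_eq]
    rw [this, ENNReal.ofReal_rpow_of_pos (by positivity), one_div_div]
    calc _ ≤ ENNReal.ofReal ((2 * R⁻¹) ^ (α / 2)) * 1 ^ (1 / p) := by gcongr
      _ = _ := by simp
  calc _ ≤ ENNReal.ofReal l * ∫⁻ t, (kn (t - s) * ENNReal.ofReal l + kf (t - s) * g t) := by
        gcongr with t; exact hsplit t
    _ = ENNReal.ofReal l * ((∫⁻ t, kn (t - s)) * ENNReal.ofReal l + ∫⁻ t, kf (t - s) * g t) := by
        have hmn' : Measurable fun t => kn (t - s) := hmn.comp (measurable_id.sub_const s)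
        rw [lintegral_add_left (hmn'.mul_const _), lintegral_mul_const _ hmn']
    _ ≤ ENNReal.ofReal l * (ENNReal.ofReal (2 * (R ^ (1 - α) / (1 - α))) * ENNReal.ofReal l +
          ENNReal.ofReal ((2 * R⁻¹) ^ (α / 2))) := by rw [hnear]; gcongr
    _ = _ := by
      rw [ENNReal.ofReal_rpow_of_pos hl, ← ENNReal.ofReal_mul (by positivity),
        ← ENNReal.ofReal_add (by positivity) (by positivity), ← ENNReal.ofReal_mul hl.le,
        ← ENNReal.ofReal_mul (by positivity)]
      congr 1
      have e1 : l * (R ^ (1 - α) * l) = l ^ p := by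
        rw [hR, ← Real.rpow_mul hl.le]
        have : l * (l ^ (-p * (1 - α)) * l) = l ^ (-p * (1 - α) + 1 + 1) := by
          rw [Real.rpow_add_one hl.ne', Real.rpow_add_one hl.ne']; ring
        rw [this]; congr 1
        rw [hp]; field_simp; ring
      have e2 : l * (R⁻¹) ^ (α / 2) = l ^ p := by
        rw [hR, ← Real.rpow_neg hl.le, ← Real.rpow_mul hl.le, mul_comm, ← Real.rpow_add_one hl.ne']
        congr 1
        rw [hp]; field_simp; ring
      rw [Real.mul_rpow two_pos.le (by positivity)]
      calc _ = 2 / (1 - α) * (l * (R ^ (1 - α) * l)) + 2 ^ (α / 2) * (l * (R⁻¹) ^ (α / 2)) := by ring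
        _ = _ := by rw [e1, e2]; ring

lemma hls_normalized {α : ℝ} (hα : 0 < α) (hα1 : α < 1) {f g : ℝ → ℝ≥0∞} (hf : Measurable f)
    (hg : Measurable g) (hf1 : ∫⁻ t, f t ^ (2 / (2 - α)) ≤ 1)
    (hg1 : ∫⁻ t, g t ^ (2 / (2 - α)) ≤ 1) :
    ∫⁻ t, ∫⁻ s, ENNReal.ofReal (|t - s| ^ (-α)) * f s * g t ≤
      2 * ENNReal.ofReal (2 / (1 - α) + 2 ^ (α / 2)) := by
  set k : ℝ × ℝ → ℝ≥0∞ := fun q => ENNReal.ofReal (|q.1 - q.2| ^ (-α)) with hk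
  have hkm : Measurable k :=
    ((measurable_fst.sub measurable_snd).norm.pow_const (-α)).ennreal_ofReal
  have hmin : ∀ u v : ℝ≥0∞, u * v ≤ u * min v u + v * min u v := fun u v => by
    rcases le_total u v with h | h
    · rw [min_eq_left h, mul_comm u v]; exact le_add_self
    · rw [min_eq_left h]; exact le_self_add
  have hfm : Measurable fun q : ℝ × ℝ => f q.2 := hf.comp measurable_snd
  have hgm : Measurable fun q : ℝ × ℝ => g q.1 := hg.comp measurable_fst
  have hm1 : Measurable fun q : ℝ × ℝ => f q.2 * (k q * min (g q.1) (f q.2)) :=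
    hfm.mul (hkm.mul (hgm.min hfm))
  have h1 : ∫⁻ t, ∫⁻ s, f s * (k (t, s) * min (g t) (f s)) ≤
      ENNReal.ofReal (2 / (1 - α) + 2 ^ (α / 2)) := by
    rw [lintegral_lintegral_swap hm1.aemeasurable]
    calc _ ≤ ∫⁻ s, ENNReal.ofReal (2 / (1 - α) + 2 ^ (α / 2)) * f s ^ (2 / (2 - α)) := by
          refine lintegral_mono fun s => ?_
          rw [lintegral_const_mul]
          · exact lintegral_riesz_min_le hα hα1 hg hg1 s (f s)
          · exact (hkm.comp (f := fun t : ℝ => (t, s)) (by fun_prop)).mul (hg.min measurable_const)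
      _ ≤ _ := by
        rw [lintegral_const_mul _ (hf.pow_const _)]
        exact mul_le_of_le_one_right' hf1
  have h2 : ∫⁻ t, ∫⁻ s, g t * (k (t, s) * min (f s) (g t)) ≤
      ENNReal.ofReal (2 / (1 - α) + 2 ^ (α / 2)) := by
    calc _ ≤ ∫⁻ t, ENNReal.ofReal (2 / (1 - α) + 2 ^ (α / 2)) * g t ^ (2 / (2 - α)) := by
          refine lintegral_mono fun t => ?_
          rw [lintegral_const_mul]
          · simp only [hk, abs_sub_comm t]
            exact lintegral_riesz_min_le hα hα1 hf hf1 t (g t)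
          · exact (hkm.comp (f := fun s : ℝ => (t, s)) (by fun_prop)).mul (hf.min measurable_const)
      _ ≤ _ := by
        rw [lintegral_const_mul _ (hg.pow_const _)]
        exact mul_le_of_le_one_right' hg1
  calc _ ≤ ∫⁻ t, ∫⁻ s, (f s * (k (t, s) * min (g t) (f s)) + g t * (k (t, s) * min (f s) (g t))) := by
        refine lintegral_mono fun t => lintegral_mono fun s => ?_
        calc _ = k (t, s) * (f s * g t) := by simp only [hk]; ring
          _ ≤ k (t, s) * (f s * min (g t) (f s) + g t * min (f s) (g t)) := by
            gcongr; exact hmin _ _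
          _ = _ := by ring
    _ = (∫⁻ t, ∫⁻ s, f s * (k (t, s) * min (g t) (f s))) +
        ∫⁻ t, ∫⁻ s, g t * (k (t, s) * min (f s) (g t)) := by
      rw [← lintegral_add_left hm1.lintegral_prod_right']
      refine lintegral_congr fun t => ?_
      exact lintegral_add_left (hm1.comp (f := fun s : ℝ => (t, s)) (by fun_prop)) _
    _ ≤ _ := by rw [two_mul]; exact add_le_add h1 h2

/-- The Hardy–Littlewood–Sobolev inequality on the line, in the diagonal case. -/
lemma hls {α : ℝ} (hα : 0 < α) (hα1 : α < 1) {f g : ℝ → ℝ≥0∞} (hf : Measurable f)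
    (hg : Measurable g) :
    ∫⁻ t, ∫⁻ s, ENNReal.ofReal (|t - s| ^ (-α)) * f s * g t ≤
      2 * ENNReal.ofReal (2 / (1 - α) + 2 ^ (α / 2)) *
        (∫⁻ s, f s ^ (2 / (2 - α))) ^ ((2 - α) / 2) *
        (∫⁻ t, g t ^ (2 / (2 - α))) ^ ((2 - α) / 2) := by
  have h1α : 0 < 1 - α := by linarith
  have h2α : 0 < 2 - α := by linarith
  set p := 2 / (2 - α) with hp
  have hp0 : 0 < p := by positivity
  have hpi : (2 - α) / 2 = 1 / p := by rw [hp, one_div_div]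
  rw [hpi]
  set K := 2 * ENNReal.ofReal (2 / (1 - α) + 2 ^ (α / 2)) with hK
  have hK0 : K ≠ 0 := by
    refine mul_ne_zero two_ne_zero ?_
    simp only [ne_eq, ENNReal.ofReal_eq_zero, not_le]; positivity
  set X := (∫⁻ s, f s ^ p) ^ (1 / p) with hX
  set Y := (∫⁻ s, g s ^ p) ^ (1 / p) with hY
  have zero_of : ∀ {h : ℝ → ℝ≥0∞}, Measurable h → (∫⁻ s, h s ^ p) ^ (1 / p) = 0 → h =ᵐ[volume] 0 := by
    intro h hh h0
    have h0' : ∫⁻ s, h s ^ p = 0 := by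
      simpa [ENNReal.rpow_eq_zero_iff, hp0, hp0.not_gt] using h0
    rw [lintegral_eq_zero_iff (hh.pow_const p)] at h0'
    filter_upwards [h0'] with x hx
    simpa [hp0, hp0.not_gt] using hx
  rcases eq_or_ne X 0 with hX0 | hX0
  · have hz := zero_of hf hX0
    have : ∀ t, ∫⁻ s, ENNReal.ofReal (|t - s| ^ (-α)) * f s * g t = 0 := fun t => by
      rw [lintegral_congr_ae (g := fun _ => 0) (by filter_upwards [hz] with s hs; simp [hs])]
      simp
    simp [this]
  rcases eq_or_ne Y 0 with hY0 | hY0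
  · have hz := zero_of hg hY0
    rw [lintegral_congr_ae (g := fun _ => 0) (by filter_upwards [hz] with s hs; simp [hs])]
    simp
  rcases eq_or_ne X ∞ with hXt | hXt
  · rw [hXt, ENNReal.mul_top hK0, ENNReal.top_mul hY0]; exact le_top
  rcases eq_or_ne Y ∞ with hYt | hYt
  · rw [hYt, ENNReal.mul_top (mul_ne_zero hK0 hX0)]; exact le_top
  have norm1 : ∀ {h : ℝ → ℝ≥0∞} {Z : ℝ≥0∞}, Measurable h → Z = (∫⁻ s, h s ^ p) ^ (1 / p) → Z ≠ 0 →
      Z ≠ ∞ → ∫⁻ s, (Z⁻¹ * h s) ^ p ≤ 1 := by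
    intro h Z hh hZ hZ0 hZt
    have : ∫⁻ s, h s ^ p = Z ^ p := by
      rw [hZ, ← ENNReal.rpow_mul, one_div_mul_cancel hp0.ne', ENNReal.rpow_one]
    simp_rw [ENNReal.mul_rpow_of_nonneg _ _ hp0.le]
    rw [lintegral_const_mul _ (hh.pow_const p), this, ENNReal.inv_rpow,
      ENNReal.inv_mul_cancel (by simp [hZ0, hZt]) (by simp [hZt, hZ0])]
  have key := hls_normalized hα hα1 (hf.const_mul X⁻¹) (hg.const_mul Y⁻¹)
    (norm1 hf hX hX0 hXt) (norm1 hg hY hY0 hYt)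
  calc _ = ∫⁻ t, ∫⁻ s, (X * Y) *
        (ENNReal.ofReal (|t - s| ^ (-α)) * (X⁻¹ * f s) * (Y⁻¹ * g t)) := by
        refine lintegral_congr fun t => lintegral_congr fun s => ?_
        calc _ = (X * X⁻¹) * (Y * Y⁻¹) * (ENNReal.ofReal (|t - s| ^ (-α)) * f s * g t) := by
              rw [ENNReal.mul_inv_cancel hX0 hXt, ENNReal.mul_inv_cancel hY0 hYt]; simp
          _ = _ := by ring
    _ = (X * Y) * ∫⁻ t, ∫⁻ s, ENNReal.ofReal (|t - s| ^ (-α)) * (X⁻¹ * f s) * (Y⁻¹ * g t) := by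
      have hXY : X * Y ≠ ∞ := ENNReal.mul_ne_top hXt hYt
      rw [← lintegral_const_mul' _ _ hXY]
      exact lintegral_congr fun t => lintegral_const_mul' _ _ hXY
    _ ≤ (X * Y) * K := by gcongr
    _ = _ := by ring

/-- Jointly measurable functions of time and space with fixed polynomial decay. -/
structure Test (a : ℝ) (F : ℝ → ℝ → ℂ) : Prop where
  meas : Measurable fun p : ℝ × ℝ => F p.1 p.2
  bound : ∃ M : ℝ, ∀ s x, ‖F s x‖ ≤ M * (1 + s ^ 2)⁻¹ * (wt a x)⁻¹

/-- The mixed space-time norm, with values in `[0, ∞]`. -/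
noncomputable def nrm (a q r : ℝ) (u : ℝ → ℝ → ℂ) : ℝ≥0∞ :=
  (∫⁻ t, (∫⁻ x, ‖u t x‖ₑ ^ r ∂mu a) ^ (q / r)) ^ (1 / q)

lemma two_lt_of_admissible {a q r : ℝ} (ha : 0 ≤ a) (h : Admissible a q r) : 2 < q := by
  obtain ⟨hr, h1, h2⟩ := h
  have hr0 : 0 < r := by linarith
  have e : (a + 1) * (1 / 2 - 1 / r) = (a + 1) * (r - 2) / (2 * r) := by field_simp
  rw [e] at h2
  have hpos : 0 < 2 / q := by rw [h2]; have : 0 < r - 2 := by linarith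
                              positivity
  have hq : 0 < q := by
    by_contra hq
    exact absurd hpos (not_lt.2 (div_nonpos_of_nonneg_of_nonpos two_pos.le (not_lt.1 hq)))
  have hlt : 2 / q < 1 := by
    rw [h2, div_lt_one (by positivity)]
    rcases le_or_gt a 1 with ha1 | ha1
    · nlinarith
    · have := h1 ha1
      rw [lt_div_iff₀ (by linarith)] at this
      nlinarith
  rwa [div_lt_one hq] at hlt

lemma Test.dec {a : ℝ} {F : ℝ → ℝ → ℂ} (hF : Test a F) (s : ℝ) : Dec a (F s) := by
  obtain ⟨M, hM⟩ := hF.bound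
  exact ⟨hF.meas.comp (f := fun x : ℝ => (s, x)) (by fun_prop), _, hM s⟩

lemma measurable_eLpNorm_two {a : ℝ} {F : ℝ → ℝ → ℂ}
    (hF : Measurable fun p : ℝ × ℝ => F p.1 p.2) :
    Measurable fun s => eLpNorm (F s) 2 (mu a) := by
  simp_rw [eLpNorm_eq_lintegral_rpow_enorm_toReal two_ne_zero ENNReal.ofNat_ne_top]
  exact (Measurable.lintegral_prod_right' (hF.enorm.pow_const _)).pow_const _

lemma Test.eLpNorm_two_le {a : ℝ} (ha : 0 ≤ a) {F : ℝ → ℝ → ℂ} (hF : Test a F) :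
    ∃ M : ℝ, ∀ s, eLpNorm (F s) 2 (mu a) ≤ ENNReal.ofReal (M * (1 + s ^ 2)⁻¹) := by
  obtain ⟨M, hM⟩ := hF.bound
  have hM0 : 0 ≤ M := by
    have := (norm_nonneg _).trans (hM 0 0)
    refine nonneg_of_mul_nonneg_left (b := (1 + (0 : ℝ) ^ 2)⁻¹) ?_ (by positivity)
    exact nonneg_of_mul_nonneg_left this (inv_pos.2 (wt_pos a 0))
  have hw : Dec a (fun x => (((wt a x)⁻¹ : ℝ) : ℂ)) := by
    refine ⟨Complex.measurable_ofReal.comp (measurable_wt a).inv, 1, fun x => ?_⟩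
    rw [Complex.norm_real, Real.norm_of_nonneg (inv_nonneg.2 (wt_pos a x).le), one_mul]
  set c := eLpNorm (fun x => (((wt a x)⁻¹ : ℝ) : ℂ)) 2 (mu a) with hc
  have hct : c ≠ ∞ := (hw.memLp ha).2.ne
  refine ⟨M * c.toReal, fun s => ?_⟩
  have hs : (0 : ℝ) ≤ M * (1 + s ^ 2)⁻¹ := by positivity
  refine (eLpNorm_le_mul_eLpNorm_of_ae_le_mul (c := M * (1 + s ^ 2)⁻¹)
    (g := fun x => (((wt a x)⁻¹ : ℝ) : ℂ)) (Eventually.of_forall fun x => ?_) 2).trans_eq ?_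
  · rw [Complex.norm_real, Real.norm_of_nonneg (inv_nonneg.2 (wt_pos a x).le)]; exact hM s x
  · rw [← hc, mul_right_comm, ENNReal.ofReal_mul hs, ENNReal.ofReal_toReal hct]

lemma Test.lintegral_eLpNorm_two_lt_top {a : ℝ} (ha : 0 ≤ a) {F : ℝ → ℝ → ℂ} (hF : Test a F) :
    ∫⁻ s, eLpNorm (F s) 2 (mu a) < ∞ := by
  obtain ⟨M, hM⟩ := hF.eLpNorm_two_le ha
  exact (lintegral_mono hM).trans_lt (integrable_inv_one_add_sq.const_mul M).lintegral_lt_top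

lemma measurable_evol_param {a : ℝ} (ha : 0 ≤ a) {F : ℝ → ℝ → ℂ}
    (hF : Measurable fun p : ℝ × ℝ => F p.1 p.2) :
    Measurable fun p : ℝ × ℝ × ℝ => evol a p.1 (F p.2.1) p.2.2 := by
  have h : Measurable fun p : (ℝ × ℝ × ℝ) × ℝ => kern a p.1.1 p.1.2.2 p.2 * F p.1.2.1 p.2 :=
    ((measurable_kern ha).comp (f := fun p : (ℝ × ℝ × ℝ) × ℝ => (p.1.1, p.1.2.2, p.2))
      (by fun_prop)).mul (hF.comp (f := fun p : (ℝ × ℝ × ℝ) × ℝ => (p.1.2.1, p.2)) (by fun_prop))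
  exact (h.stronglyMeasurable.integral_prod_right (ν := mu a)).measurable

lemma measurable_form_param {a : ℝ} (ha : 0 ≤ a) {F G : ℝ → ℝ → ℂ}
    (hF : Measurable fun p : ℝ × ℝ => F p.1 p.2) (hG : Measurable fun p : ℝ × ℝ => G p.1 p.2) :
    Measurable fun p : ℝ × ℝ => form a (p.1 - p.2) (F p.2) (G p.1) := by
  have h : Measurable fun p : (ℝ × ℝ) × ℝ =>
      evol a (p.1.1 - p.1.2) (F p.1.2) p.2 * (starRingEnd ℂ) (G p.1.1 p.2) :=
    ((measurable_evol_param ha hF).comp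
      (f := fun p : (ℝ × ℝ) × ℝ => (p.1.1 - p.1.2, p.1.2, p.2)) (by fun_prop)).mul
      (Complex.continuous_conj.measurable.comp
        (hG.comp (f := fun p : (ℝ × ℝ) × ℝ => (p.1.1, p.2)) (by fun_prop)))
  exact (h.stronglyMeasurable.integral_prod_right (ν := mu a)).measurable

lemma ae_ne_real (t : ℝ) : ∀ᵐ s : ℝ, s ≠ t := by
  simp [ae_iff]

/-- The bilinear estimate for the pair `(q', r')`. -/
lemma exists_lintegral_form_le {a q r : ℝ} (ha : 0 ≤ a) (h : Admissible a q r) :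
    ∃ C : ℝ≥0∞, C ≠ ∞ ∧ ∀ F G : ℝ → ℝ → ℂ, Test a F → Test a G →
      ∫⁻ t, ∫⁻ s, ‖form a (t - s) (F s) (G t)‖ₑ ≤
        C * nrm a (q / (q - 1)) (r / (r - 1)) F * nrm a (q / (q - 1)) (r / (r - 1)) G := by
  have hq := two_lt_of_admissible ha h
  obtain ⟨hr, -, h2⟩ := h
  have hr1 : 0 < r - 1 := by linarith
  have hq1 : 0 < q - 1 := by linarith
  set p := r / (r - 1) with hp
  have hp1 : 1 < p := by rw [hp, one_lt_div hr1]; linarith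
  have hp2 : p < 2 := by rw [hp, div_lt_iff₀ hr1]; linarith
  obtain ⟨C, hC0, hC⟩ := exists_enorm_form_le ha hp1 hp2
  have hexp : (a + 1) / 2 * (2 / p - 1) = 2 / q := by
    rw [h2, hp]; field_simp; ring
  have hα : 0 < 2 / q := by positivity
  have hα1 : 2 / q < 1 := by rw [div_lt_one (by linarith)]; exact hq
  have hq' : 2 / (2 - 2 / q) = q / (q - 1) := by
    have : 2 - 2 / q = 2 * (q - 1) / q := by field_simp
    rw [this]; field_simp
  have hq'' : (2 - 2 / q) / 2 = 1 / (q / (q - 1)) := by rw [one_div_div]; field_simp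
  refine ⟨ENNReal.ofReal C * (2 * ENNReal.ofReal (2 / (1 - 2 / q) + 2 ^ (2 / q / 2))),
    by finiteness, fun F G hF hG => ?_⟩
  have hmeas : ∀ {H : ℝ → ℝ → ℂ}, Test a H →
      Measurable fun s => (∫⁻ x, ‖H s x‖ₑ ^ p ∂mu a) ^ (1 / p) := fun hH =>
    (Measurable.lintegral_prod_right' (hH.meas.enorm.pow_const _)).pow_const _
  have key := hls hα hα1 (hmeas hF) (hmeas hG)
  rw [hq', hq''] at key
  have hn : ∀ H : ℝ → ℝ → ℂ, (∫⁻ s, ((∫⁻ x, ‖H s x‖ₑ ^ p ∂mu a) ^ (1 / p)) ^ (q / (q - 1))) ^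
      (1 / (q / (q - 1))) = nrm a (q / (q - 1)) p H := fun H => by
    unfold nrm
    congr 1
    refine lintegral_congr fun s => ?_
    rw [← ENNReal.rpow_mul]; congr 1; ring
  rw [hn, hn] at key
  calc _ ≤ ∫⁻ t, ∫⁻ s, ENNReal.ofReal C * (ENNReal.ofReal (|t - s| ^ (-(2 / q))) *
        (∫⁻ x, ‖F s x‖ₑ ^ p ∂mu a) ^ (1 / p) * (∫⁻ x, ‖G t x‖ₑ ^ p ∂mu a) ^ (1 / p)) := by
        refine lintegral_mono fun t => lintegral_mono_ae ?_
        filter_upwards [ae_ne_real t] with s hs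
        have := hC (t - s) (sub_ne_zero.2 hs.symm) (F s) (G t) (hF.dec s) (hG.dec t)
        rw [hexp, ENNReal.ofReal_mul hC0] at this
        refine this.trans_eq ?_
        ring
    _ ≤ ENNReal.ofReal C * (2 * ENNReal.ofReal (2 / (1 - 2 / q) + 2 ^ (2 / q / 2)) *
          nrm a (q / (q - 1)) p F * nrm a (q / (q - 1)) p G) := by
        simp_rw [lintegral_const_mul' (ENNReal.ofReal C) _ ENNReal.ofReal_ne_top]
        gcongr
    _ = _ := by ring

/-- The Duhamel operator with a time cutoff `σ`. -/
noncomputable def duh (a : ℝ) (σ : ℝ → ℝ → ℝ) (F : ℝ → ℝ → ℂ) (t x : ℝ) : ℂ :=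
  ∫ s, (σ t s : ℂ) * evol a (t - s) (F s) x

/-- Measurable cutoffs with values in `[-1, 1]`. -/
structure Cutoff (σ : ℝ → ℝ → ℝ) : Prop where
  meas : Measurable fun p : ℝ × ℝ => σ p.1 p.2
  bound : ∀ t s, |σ t s| ≤ 1

lemma Cutoff.enorm_mul_le {σ : ℝ → ℝ → ℝ} (hσ : Cutoff σ) (t s : ℝ) (z : ℂ) :
    ‖(σ t s : ℂ) * z‖ₑ ≤ ‖z‖ₑ := by
  rw [enorm_mul]
  refine mul_le_of_le_one_left' ?_
  rw [← ofReal_norm, Complex.norm_real, ENNReal.ofReal_le_one]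
  exact hσ.bound t s

lemma evol_zero {a : ℝ} (ha : 0 ≤ a) (f : ℝ → ℂ) (x : ℝ) : evol a 0 f x = 0 := by
  simp [evol, kern_zero ha]

lemma form_symm {a : ℝ} (ha : 0 ≤ a) (t : ℝ) {f g : ℝ → ℂ} (hf : Dec a f) (hg : Dec a g) :
    form a t f g = (starRingEnd ℂ) (form a (-t) g f) := by
  rcases eq_or_ne t 0 with rfl | ht
  · simp [form, evol_zero ha]
  have h := pairing_flow ha 0 t (hg.memLp_rho ha) (hf.memLp_rho ha)
  rw [zero_sub, flow_of_ne ht, flow_of_ne (neg_ne_zero.2 ht), flow_zero] at h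
  unfold form
  rw [← h, ← integral_conj]
  refine integral_congr_ae (Eventually.of_forall fun x => ?_)
  simp [mul_comm]

lemma measurable_duh_integrand {a : ℝ} (ha : 0 ≤ a) {σ : ℝ → ℝ → ℝ} (hσ : Cutoff σ)
    {F : ℝ → ℝ → ℂ} (hF : Measurable fun p : ℝ × ℝ => F p.1 p.2) :
    Measurable fun p : (ℝ × ℝ) × ℝ => (σ p.1.1 p.2 : ℂ) * evol a (p.1.1 - p.2) (F p.2) p.1.2 :=
  (Complex.measurable_ofReal.comp
      (hσ.meas.comp (f := fun p : (ℝ × ℝ) × ℝ => (p.1.1, p.2)) (by fun_prop))).mul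
    ((measurable_evol_param ha hF).comp
      (f := fun p : (ℝ × ℝ) × ℝ => (p.1.1 - p.2, p.2, p.1.2)) (by fun_prop))

lemma measurable_duh {a : ℝ} (ha : 0 ≤ a) {σ : ℝ → ℝ → ℝ} (hσ : Cutoff σ)
    {F : ℝ → ℝ → ℂ} (hF : Measurable fun p : ℝ × ℝ => F p.1 p.2) :
    Measurable fun p : ℝ × ℝ => duh a σ F p.1 p.2 :=
  ((measurable_duh_integrand ha hσ hF).stronglyMeasurable.integral_prod_right
    (ν := volume)).measurable

lemma integral_duh_mul_conj {a : ℝ} (ha : 0 ≤ a) {σ : ℝ → ℝ → ℝ} (hσ : Cutoff σ)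
    {F : ℝ → ℝ → ℂ} (hF : Test a F) (t : ℝ) {g : ℝ → ℂ} (hg : Dec a g) :
    ∫ x, duh a σ F t x * (starRingEnd ℂ) (g x) ∂mu a =
      ∫ s, (σ t s : ℂ) * form a (t - s) (F s) g := by
  have hm : Measurable fun p : ℝ × ℝ =>
      (σ t p.2 : ℂ) * evol a (t - p.2) (F p.2) p.1 * (starRingEnd ℂ) (g p.1) :=
    ((measurable_duh_integrand ha hσ hF.meas).comp
      (f := fun p : ℝ × ℝ => ((t, p.1), p.2)) (by fun_prop)).mul
      (Complex.continuous_conj.measurable.comp (hg.1.comp measurable_fst))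
  have h1 : ∫ x, duh a σ F t x * (starRingEnd ℂ) (g x) ∂mu a =
      ∫ x, (∫ s, (σ t s : ℂ) * evol a (t - s) (F s) x * (starRingEnd ℂ) (g x)) ∂mu a := by
    refine integral_congr_ae (Eventually.of_forall fun x => ?_)
    simp only [duh]
    rw [integral_mul_const]
  rw [h1, integral_integral_swap]
  · refine integral_congr_ae (Eventually.of_forall fun s => ?_)
    simp only [form, mul_assoc]
    rw [integral_const_mul]
  refine ⟨hm.aestronglyMeasurable, ?_⟩
  unfold HasFiniteIntegral
  simp only [Function.uncurry]
  rw [lintegral_prod_symm _ hm.enorm.aemeasurable]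
  refine lt_of_le_of_lt (b := ∫⁻ s, eLpNorm (F s) 2 (mu a) * eLpNorm g 2 (mu a)) ?_ ?_
  · refine lintegral_mono_ae ?_
    filter_upwards [ae_ne_real t] with s hs
    refine le_trans (lintegral_mono fun x => ?_)
      (lintegral_evol_mul_le ha (sub_ne_zero.2 hs.symm) (hF.dec s) hg)
    rw [mul_assoc, ← enorm_conj (g x), ← enorm_mul]
    exact hσ.enorm_mul_le t s _
  · rw [lintegral_mul_const _ (measurable_eLpNorm_two hF.meas)]
    exact ENNReal.mul_lt_top (hF.lintegral_eLpNorm_two_lt_top ha) (hg.memLp ha).2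

lemma integral_evol_mul_conj_evol {a : ℝ} (ha : 0 ≤ a) {f g : ℝ → ℂ} (hf : Dec a f) (hg : Dec a g)
    {t s s' : ℝ} (hs : s ≠ t) (hs' : s' ≠ t) (h : s ≠ s') :
    ∫ x, evol a (t - s) f x * (starRingEnd ℂ) (evol a (t - s') g x) ∂mu a = form a (s' - s) f g := by
  have key := pairing_flow ha (t - s) (t - s') (hf.memLp_rho ha) (hg.memLp_rho ha)
  rw [flow_of_ne (sub_ne_zero.2 hs.symm), flow_of_ne (sub_ne_zero.2 hs'.symm), sub_sub_sub_cancel_left,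
    flow_of_ne (sub_ne_zero.2 h.symm)] at key
  exact key

/-- Energy estimate for the Duhamel operator. -/
lemma lintegral_duh_sq_le {a : ℝ} (ha : 0 ≤ a) {σ : ℝ → ℝ → ℝ} (hσ : Cutoff σ)
    {F : ℝ → ℝ → ℂ} (hF : Test a F) (t : ℝ) :
    ∫⁻ x, ‖duh a σ F t x‖ₑ ^ 2 ∂mu a ≤ ∫⁻ s', ∫⁻ s, ‖form a (s' - s) (F s) (F s')‖ₑ := by
  set w : ℝ → ℝ → ℂ := fun x s => (σ t s : ℂ) * evol a (t - s) (F s) x with hw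
  have hwm : Measurable fun p : ℝ × ℝ => w p.1 p.2 :=
    (measurable_duh_integrand ha hσ hF.meas).comp (f := fun p : ℝ × ℝ => ((t, p.1), p.2))
      (by fun_prop)
  set H : ℝ → ℝ × ℝ → ℂ := fun x z => (starRingEnd ℂ) (w x z.1) * w x z.2 with hH
  have hHm : Measurable fun p : ℝ × ℝ × ℝ => H p.1 p.2 :=
    (Complex.continuous_conj.measurable.comp
      (hwm.comp (f := fun p : ℝ × ℝ × ℝ => (p.1, p.2.1)) (by fun_prop))).mul
      (hwm.comp (f := fun p : ℝ × ℝ × ℝ => (p.1, p.2.2)) (by fun_prop))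
  have hpt : ∀ x, ((‖duh a σ F t x‖ ^ 2 : ℝ) : ℂ) = ∫ z, H x z := fun x => by
    rw [hH, Measure.volume_eq_prod,
      integral_prod_mul (fun s => (starRingEnd ℂ) (w x s)) (fun s => w x s), integral_conj]
    exact_mod_cast (Complex.conj_mul' (duh a σ F t x)).symm
  have hwx : ∀ s x, ‖w x s‖ₑ ≤ ‖evol a (t - s) (F s) x‖ₑ := fun s x => hσ.enorm_mul_le t s _
  have hInt : Integrable (fun p : ℝ × ℝ × ℝ => H p.1 p.2) ((mu a).prod volume) := by
    refine ⟨hHm.aestronglyMeasurable, ?_⟩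
    unfold HasFiniteIntegral
    rw [lintegral_prod_symm _ hHm.enorm.aemeasurable, Measure.volume_eq_prod,
      lintegral_prod _ (Measurable.lintegral_prod_left' hHm.enorm).aemeasurable]
    refine lt_of_le_of_lt
      (b := ∫⁻ s', ∫⁻ s, eLpNorm (F s') 2 (mu a) * eLpNorm (F s) 2 (mu a)) ?_ ?_
    · refine lintegral_mono_ae ?_
      filter_upwards [ae_ne_real t] with s' hs'
      refine lintegral_mono_ae ?_
      filter_upwards [ae_ne_real t] with s hs
      calc _ ≤ ∫⁻ x, ‖evol a (t - s') (F s') x‖ₑ * ‖evol a (t - s) (F s) x‖ₑ ∂mu a := by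
            refine lintegral_mono fun x => ?_
            simp only [hH, enorm_mul, enorm_conj]
            exact mul_le_mul' (hwx s' x) (hwx s x)
        _ ≤ _ := by
          refine (lintegral_mul_le_eLpNorm_two
            (memLp_evol ha (sub_ne_zero.2 hs'.symm) (hF.dec s')).1
            (memLp_evol ha (sub_ne_zero.2 hs.symm) (hF.dec s)).1).trans ?_
          exact mul_le_mul' (eLpNorm_evol_le ha (sub_ne_zero.2 hs'.symm) (hF.dec s'))
            (eLpNorm_evol_le ha (sub_ne_zero.2 hs.symm) (hF.dec s))
    · simp_rw [lintegral_const_mul _ (measurable_eLpNorm_two (a := a) hF.meas)]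
      rw [lintegral_mul_const _ (measurable_eLpNorm_two hF.meas)]
      exact ENNReal.mul_lt_top (hF.lintegral_eLpNorm_two_lt_top ha)
        (hF.lintegral_eLpNorm_two_lt_top ha)
  have hInt2 : Integrable (fun x => ‖duh a σ F t x‖ ^ 2) (mu a) := by
    have h := hInt.integral_prod_left
    have e : (fun x => ∫ z, H x z) = fun x => ((‖duh a σ F t x‖ ^ 2 : ℝ) : ℂ) :=
      funext fun x => (hpt x).symm
    simp only [e] at h
    simpa only [RCLike.re_to_complex, Complex.ofReal_re] using h.re
  have h1 : ∫⁻ x, ‖duh a σ F t x‖ₑ ^ 2 ∂mu a = ‖∫ x, (∫ z, H x z) ∂mu a‖ₑ := by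
    simp_rw [← hpt]
    rw [integral_complex_ofReal, ← ofReal_norm, Complex.norm_real,
      Real.norm_of_nonneg (integral_nonneg fun x => by positivity),
      ofReal_integral_eq_lintegral_ofReal hInt2 (Eventually.of_forall fun x => by positivity)]
    refine lintegral_congr fun x => ?_
    rw [ENNReal.ofReal_pow (norm_nonneg _), ofReal_norm]
  rw [h1, integral_integral_swap hInt]
  refine (enorm_integral_le_lintegral_enorm _).trans ?_
  have hm2 : Measurable fun z : ℝ × ℝ => ∫ x, H x z ∂mu a :=
    (hHm.stronglyMeasurable.integral_prod_left (μ := mu a)).measurable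
  rw [Measure.volume_eq_prod, lintegral_prod _ hm2.enorm.aemeasurable]
  refine lintegral_mono_ae ?_
  filter_upwards [ae_ne_real t] with s' hs'
  refine lintegral_mono_ae ?_
  filter_upwards [ae_ne_real t, ae_ne_real s'] with s hs hss
  have e : ∀ x, H x (s', s) = (σ t s' : ℂ) * ((σ t s : ℂ) *
      (evol a (t - s) (F s) x * (starRingEnd ℂ) (evol a (t - s') (F s') x))) := fun x => by
    simp only [hH, hw, map_mul, Complex.conj_ofReal]; ring
  simp_rw [e]
  rw [integral_const_mul, integral_const_mul,
    integral_evol_mul_conj_evol ha (hF.dec s) (hF.dec s') hs hs' hss]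
  exact (hσ.enorm_mul_le t s' _).trans (hσ.enorm_mul_le t s _)

lemma enorm_integral_integral_ofReal {a : ℝ} {w : ℝ → ℝ → ℝ} (hw : ∀ t x, 0 ≤ w t x)
    (hm : Measurable fun p : ℝ × ℝ => w p.1 p.2)
    (hfin : ∫⁻ t, ∫⁻ x, ENNReal.ofReal (w t x) ∂mu a ≠ ∞) :
    ‖∫ t, ∫ x, (w t x : ℂ) ∂mu a‖ₑ = ∫⁻ t, ∫⁻ x, ENNReal.ofReal (w t x) ∂mu a := by
  have hA : Measurable fun t => ∫⁻ x, ENNReal.ofReal (w t x) ∂mu a :=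
    Measurable.lintegral_prod_right' hm.ennreal_ofReal
  have h1 : ∀ t, ∫ x, (w t x : ℂ) ∂mu a =
      (((∫⁻ x, ENNReal.ofReal (w t x) ∂mu a).toReal : ℝ) : ℂ) := fun t => by
    rw [integral_complex_ofReal, integral_eq_lintegral_of_nonneg_ae (Eventually.of_forall (hw t))
      (hm.comp (f := fun x : ℝ => (t, x)) (by fun_prop)).aestronglyMeasurable]
  simp_rw [h1]
  rw [integral_complex_ofReal, integral_toReal hA.aemeasurable (ae_lt_top hA hfin), ← ofReal_norm,
    Complex.norm_real, Real.norm_of_nonneg ENNReal.toReal_nonneg, ENNReal.ofReal_toReal hfin]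

lemma lintegral_wt_le_lt_top {a : ℝ} (ha : 0 ≤ a) (n : ℝ) :
    ∫⁻ x, (if wt a x ≤ n then 1 else 0) ∂mu a < ∞ := by
  refine lt_of_le_of_lt (lintegral_mono fun x => ?_)
    ((integrable_wt_inv ha).const_mul n).lintegral_lt_top
  have hw := wt_pos a x
  split_ifs with h
  · rw [← ENNReal.ofReal_one]
    refine ENNReal.ofReal_le_ofReal ?_
    rw [← div_eq_mul_inv, one_le_div hw]; exact h
  · simp

lemma rpow_le_max {e x m L : ℝ} (hm : 0 < m) (h1 : m ≤ x) (h2 : x ≤ L) :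
    x ^ e ≤ max (L ^ e) (m ^ e) := by
  rcases le_total 0 e with he | he
  · exact (Real.rpow_le_rpow (hm.le.trans h1) h2 he).trans (le_max_left _ _)
  · exact (Real.rpow_le_rpow_of_nonpos hm h1 he).trans (le_max_right _ _)

lemma le_of_le_mul_rpow {I K : ℝ≥0∞} {q : ℝ} (hq : 1 < q) (hI : I ≠ ∞)
    (h : I ≤ K * I ^ (1 / (q / (q - 1)))) : I ^ (1 / q) ≤ K := by
  have hq0 : 0 < q := by linarith
  rcases eq_or_ne I 0 with rfl | h0
  · simp [hq0]
  have e : I ^ (1 / q) * I ^ (1 / (q / (q - 1))) = I := by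
    rw [← ENNReal.rpow_add _ _ h0 hI]
    have : 1 / q + 1 / (q / (q - 1)) = 1 := by field_simp; ring
    rw [this, ENNReal.rpow_one]
  have hp0 : I ^ (1 / (q / (q - 1))) ≠ 0 := by
    simp [ENNReal.rpow_eq_zero_iff, h0, hI]
  have hpt : I ^ (1 / (q / (q - 1))) ≠ ∞ := by
    simp [ENNReal.rpow_eq_top_iff, h0, hI]
  rw [← ENNReal.mul_le_mul_iff_left hp0 hpt, e]
  exact h

lemma duality_truncated {a q r : ℝ} (ha : 0 ≤ a) (hq : 1 < q) (hr : 2 < r) {K : ℝ≥0∞}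
    {u : ℝ → ℝ → ℂ}
    (hK : ∀ G : ℝ → ℝ → ℂ, Test a G → ‖∫ t, ∫ x, u t x * (starRingEnd ℂ) (G t x) ∂mu a‖ₑ ≤
      K * nrm a (q / (q - 1)) (r / (r - 1)) G)
    {n : ℝ} (hn : 1 ≤ n) {v : ℝ → ℝ → ℂ} (hv : Measurable fun p : ℝ × ℝ => v p.1 p.2)
    (hvu : ∀ t x, v t x = 0 ∨ (v t x = u t x ∧ |t| ≤ n ∧ wt a x ≤ n ∧ ‖v t x‖ ≤ n)) :
    (∫⁻ t, if ENNReal.ofReal (1 / n) ≤ ∫⁻ x, ‖v t x‖ₑ ^ r ∂mu a then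
      (∫⁻ x, ‖v t x‖ₑ ^ r ∂mu a) ^ (q / r) else 0) ^ (1 / q) ≤ K := by
  have hn0 : 0 < n := by linarith
  have hr0 : 0 < r := by linarith
  have hr1 : 0 < r - 1 := by linarith
  have hq0 : 0 < q := by linarith
  have hq1 : 0 < q - 1 := by linarith
  set A : ℝ → ℝ≥0∞ := fun t => ∫⁻ x, ‖v t x‖ₑ ^ r ∂mu a with hA
  have hAm : Measurable A := Measurable.lintegral_prod_right' (hv.enorm.pow_const r)
  set L : ℝ≥0∞ := ENNReal.ofReal (n ^ r) * ∫⁻ x, (if wt a x ≤ n then 1 else 0) ∂mu a with hL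
  have hLt : L ≠ ∞ := ENNReal.mul_ne_top ENNReal.ofReal_ne_top (lintegral_wt_le_lt_top ha n).ne
  have hAL : ∀ t, A t ≤ L := fun t => by
    rw [hL, ← lintegral_const_mul' _ _ ENNReal.ofReal_ne_top]
    refine lintegral_mono fun x => ?_
    rcases hvu t x with h | ⟨-, -, h2, h3⟩
    · simp [h, hr0]
    · rw [if_pos h2, mul_one, ← ofReal_norm, ENNReal.ofReal_rpow_of_nonneg (norm_nonneg _) hr0.le]
      exact ENNReal.ofReal_le_ofReal (by gcongr)
  have hA0 : ∀ t, ¬ |t| ≤ n → A t = 0 := fun t ht => by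
    simp only [hA]
    rw [lintegral_congr (g := fun _ => 0) fun x => ?_]
    · simp
    · rcases hvu t x with h | ⟨-, h, -⟩
      · simp [h, hr0]
      · exact absurd h ht
  set T : Set ℝ := {t | ENNReal.ofReal (1 / n) ≤ A t} with hT
  have hTm : MeasurableSet T := measurableSet_le measurable_const hAm
  set e : ℝ := q / r - 1 with he
  set b : ℝ → ℝ := T.indicator fun t => (A t).toReal ^ e with hb
  have hbm : Measurable b := (hAm.ennreal_toReal.pow_const e).indicator hTm
  set Bm : ℝ := max (L.toReal ^ e) ((1 / n) ^ e) with hBm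
  have hBm0 : 0 ≤ Bm := le_max_of_le_right (by positivity)
  have hb0 : ∀ t, 0 ≤ b t := fun t => indicator_nonneg (fun t _ => by positivity) t
  have hbB : ∀ t, b t ≤ Bm := fun t => by
    by_cases ht : t ∈ T
    · rw [hb, indicator_of_mem ht]
      have hAt : A t ≠ ∞ := ne_top_of_le_ne_top hLt (hAL t)
      refine rpow_le_max (by positivity) ?_ (ENNReal.toReal_mono hLt (hAL t))
      exact (ENNReal.ofReal_le_iff_le_toReal hAt).1 ht
    · rw [hb, indicator_of_notMem ht]; exact hBm0
  set G : ℝ → ℝ → ℂ := fun t x => ((‖v t x‖ ^ (r - 2) * b t : ℝ) : ℂ) * v t x with hG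
  have hGn : ∀ t x, ‖G t x‖ = ‖v t x‖ ^ (r - 1) * b t := fun t x => by
    simp only [hG]
    rw [norm_mul, Complex.norm_real, Real.norm_of_nonneg (by have := hb0 t; positivity),
      mul_right_comm, ← Real.rpow_add_one' (norm_nonneg _) (by linarith)]
    congr 2; ring
  have hGT : Test a G := by
    refine ⟨?_, n ^ (r - 1) * Bm * (1 + n ^ 2) * n, fun t x => ?_⟩
    · exact (Complex.measurable_ofReal.comp ((hv.norm.pow_const _).mul
        (hbm.comp measurable_fst))).mul hv
    · have hw := wt_pos a x
      rw [hGn]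
      rcases hvu t x with h | ⟨-, h1, h2, h3⟩
      · rw [h, norm_zero, Real.zero_rpow hr1.ne', zero_mul]; positivity
      · have ht : (1 + t ^ 2) ≤ 1 + n ^ 2 := by
          have := sq_le_sq' (abs_le.1 h1).1 (abs_le.1 h1).2; linarith
        have e1 : 1 ≤ (1 + n ^ 2) * (1 + t ^ 2)⁻¹ := by
          rw [← div_eq_mul_inv, one_le_div (by positivity)]; exact ht
        have e2 : 1 ≤ n * (wt a x)⁻¹ := by rw [← div_eq_mul_inv, one_le_div hw]; exact h2
        calc ‖v t x‖ ^ (r - 1) * b t ≤ n ^ (r - 1) * Bm := by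
              gcongr
              · exact hb0 t
              · exact hbB t
          _ = n ^ (r - 1) * Bm * 1 * 1 := by ring
          _ ≤ n ^ (r - 1) * Bm * ((1 + n ^ 2) * (1 + t ^ 2)⁻¹) * (n * (wt a x)⁻¹) := by gcongr
          _ = _ := by ring
  set w : ℝ → ℝ → ℝ := fun t x => ‖v t x‖ ^ r * b t with hw
  have hw0 : ∀ t x, 0 ≤ w t x := fun t x => by have := hb0 t; positivity
  have hwm : Measurable fun p : ℝ × ℝ => w p.1 p.2 :=
    (hv.norm.pow_const _).mul (hbm.comp measurable_fst)
  have huG : ∀ t x, u t x * (starRingEnd ℂ) (G t x) = (w t x : ℂ) := fun t x => by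
    rcases hvu t x with h | ⟨h, -⟩
    · simp [hG, hw, h, Real.zero_rpow hr0.ne']
    · rw [← h]
      simp only [hG, hw, map_mul, Complex.conj_ofReal]
      rw [mul_left_comm, Complex.mul_conj']
      norm_cast
      rw [mul_right_comm, ← Real.rpow_natCast ‖v t x‖ 2, ← Real.rpow_add' (norm_nonneg _) (by
        push_cast; linarith)]
      congr 2; push_cast; ring
  set I := ∫⁻ t, if ENNReal.ofReal (1 / n) ≤ A t then A t ^ (q / r) else 0 with hI
  have hAb : ∀ t, t ∈ T → ∀ c : ℝ, ENNReal.ofReal (b t ^ c) = A t ^ (e * c) := fun t ht c => by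
    have hAt : A t ≠ ∞ := ne_top_of_le_ne_top hLt (hAL t)
    have h0 : 0 < (A t).toReal := by
      refine lt_of_lt_of_le (b := 1 / n) (by positivity) ?_
      exact (ENNReal.ofReal_le_iff_le_toReal hAt).1 ht
    rw [hb, indicator_of_mem ht, ← Real.rpow_mul h0.le, ← ENNReal.ofReal_rpow_of_pos h0,
      ENNReal.ofReal_toReal hAt]
  have hTA : ∀ t ∈ T, A t ≠ 0 ∧ A t ≠ ∞ := fun t ht => by
    refine ⟨fun h => ?_, ne_top_of_le_ne_top hLt (hAL t)⟩
    have : ENNReal.ofReal (1 / n) ≤ A t := ht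
    rw [h, nonpos_iff_eq_zero, ENNReal.ofReal_eq_zero] at this
    exact absurd this (not_le.2 (by positivity))
  have hIw : ∫⁻ t, ∫⁻ x, ENNReal.ofReal (w t x) ∂mu a = I := by
    refine lintegral_congr fun t => ?_
    have : ∀ x, ENNReal.ofReal (w t x) = ‖v t x‖ₑ ^ r * ENNReal.ofReal (b t) := fun x => by
      simp only [hw]
      rw [ENNReal.ofReal_mul (by positivity), ← ENNReal.ofReal_rpow_of_nonneg (norm_nonneg _) hr0.le,
        ofReal_norm]
    simp_rw [this]
    rw [lintegral_mul_const' _ _ ENNReal.ofReal_ne_top]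
    change A t * _ = _
    by_cases ht : t ∈ T
    · rw [if_pos (show _ ≤ _ from ht)]
      have := hAb t ht 1
      rw [Real.rpow_one, mul_one] at this
      obtain ⟨h0, htop⟩ := hTA t ht
      rw [this]
      nth_rewrite 1 [← ENNReal.rpow_one (A t)]
      rw [← ENNReal.rpow_add _ _ h0 htop]
      congr 1; rw [he]; ring
    · rw [if_neg (show ¬ ENNReal.ofReal (1 / n) ≤ A t from ht), hb, indicator_of_notMem ht]; simp
  have hnG : nrm a (q / (q - 1)) (r / (r - 1)) G = I ^ (1 / (q / (q - 1))) := by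
    unfold nrm
    congr 1
    refine lintegral_congr fun t => ?_
    have hrr : 0 < r / (r - 1) := by positivity
    have : ∀ x, ‖G t x‖ₑ ^ (r / (r - 1)) =
        ‖v t x‖ₑ ^ r * ENNReal.ofReal (b t ^ (r / (r - 1))) := fun x => by
      have hbt := hb0 t
      rw [← ofReal_norm, hGn, ENNReal.ofReal_rpow_of_nonneg (by positivity) hrr.le,
        Real.mul_rpow (by positivity) hbt, ← Real.rpow_mul (norm_nonneg _),
        ENNReal.ofReal_mul (by positivity), mul_div_cancel₀ r hr1.ne',
        ← ENNReal.ofReal_rpow_of_nonneg (norm_nonneg _) hr0.le, ofReal_norm]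
    simp_rw [this]
    rw [lintegral_mul_const' _ _ ENNReal.ofReal_ne_top]
    change (A t * _) ^ _ = _
    by_cases ht : t ∈ T
    · rw [if_pos (show _ ≤ _ from ht), hAb t ht]
      obtain ⟨h0, htop⟩ := hTA t ht
      nth_rewrite 1 [← ENNReal.rpow_one (A t)]
      rw [← ENNReal.rpow_add _ _ h0 htop, ← ENNReal.rpow_mul]
      congr 1; rw [he]; field_simp; ring
    · rw [if_neg (show ¬ ENNReal.ofReal (1 / n) ≤ A t from ht), hb, indicator_of_notMem ht,
        Real.zero_rpow hrr.ne', ENNReal.ofReal_zero,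
        mul_zero, ENNReal.zero_rpow_of_pos (by positivity)]
  have hIt : I ≠ ∞ := by
    refine (lt_of_le_of_lt (b := ∫⁻ t in Icc (-n) n, L ^ (q / r)) ?_ ?_).ne
    · rw [← lintegral_indicator measurableSet_Icc]
      refine lintegral_mono fun t => ?_
      by_cases ht : |t| ≤ n
      · rw [indicator_of_mem (show t ∈ Icc (-n) n from abs_le.1 ht)]
        split_ifs
        · exact ENNReal.rpow_le_rpow (hAL t) (by positivity)
        · simp
      · rw [hA0 t ht, ENNReal.zero_rpow_of_pos (by positivity)]; simp
    · rw [setLIntegral_const]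
      exact ENNReal.mul_lt_top (ENNReal.rpow_lt_top_of_nonneg (by positivity) hLt) (by simp)
  have key := hK G hGT
  simp_rw [huG] at key
  rw [enorm_integral_integral_ofReal hw0 hwm (by rw [hIw]; exact hIt), hIw, hnG] at key
  exact le_of_le_mul_rpow hq hIt key

open Classical in
/-- The truncation of `u` to bounded times, positions and heights. -/
noncomputable def trunc (a : ℝ) (u : ℝ → ℝ → ℂ) (n : ℝ) (t x : ℝ) : ℂ :=
  if |t| ≤ n ∧ wt a x ≤ n ∧ ‖u t x‖ ≤ n then u t x else 0

lemma measurable_trunc {a : ℝ} {u : ℝ → ℝ → ℂ} (hu : Measurable fun p : ℝ × ℝ => u p.1 p.2)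
    (n : ℝ) : Measurable fun p : ℝ × ℝ => trunc a u n p.1 p.2 := by
  refine Measurable.ite ?_ hu measurable_const
  exact (measurableSet_le measurable_fst.norm measurable_const).inter
    ((measurableSet_le ((measurable_wt a).comp measurable_snd) measurable_const).inter
      (measurableSet_le hu.norm measurable_const))

lemma enorm_trunc_mono {a : ℝ} {u : ℝ → ℝ → ℂ} {n m : ℝ} (h : n ≤ m) (t x : ℝ) :
    ‖trunc a u n t x‖ₑ ≤ ‖trunc a u m t x‖ₑ := by
  unfold trunc
  split_ifs with h1 h2
  · rfl
  · exact absurd ⟨h1.1.trans h, h1.2.1.trans h, h1.2.2.trans h⟩ h2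
  · simp
  · rfl

lemma tendsto_lintegral_trunc {a r : ℝ} (hr : 0 < r) {u : ℝ → ℝ → ℂ}
    (hu : Measurable fun p : ℝ × ℝ => u p.1 p.2) (t : ℝ) :
    Tendsto (fun n : ℕ => ∫⁻ x, ‖trunc a u (n + 1) t x‖ₑ ^ r ∂mu a) atTop
      (nhds (∫⁻ x, ‖u t x‖ₑ ^ r ∂mu a)) := by
  refine lintegral_tendsto_of_tendsto_of_monotone (fun n => ?_) ?_ ?_
  · exact ((measurable_trunc hu _).comp (f := fun x : ℝ => (t, x))
      (by fun_prop)).enorm.pow_const r |>.aemeasurable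
  · refine Eventually.of_forall fun x n m hnm => ?_
    exact ENNReal.rpow_le_rpow (enorm_trunc_mono (by gcongr) t x) hr.le
  · refine Eventually.of_forall fun x => tendsto_const_nhds.congr' ?_
    obtain ⟨N, hN⟩ := exists_nat_ge (max |t| (max (wt a x) ‖u t x‖))
    filter_upwards [eventually_ge_atTop N] with n hn
    have hn' : (N : ℝ) ≤ n + 1 := by
      have : (N : ℝ) ≤ n := by exact_mod_cast hn
      linarith
    have h := hN.trans hn'
    simp only [max_le_iff] at h
    rw [trunc, if_pos h]

/-- Duality for the mixed norm, tested against rapidly decreasing functions. -/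
lemma nrm_le_of_duality {a q r : ℝ} (ha : 0 ≤ a) (hq : 1 < q) (hr : 2 < r) {K : ℝ≥0∞}
    {u : ℝ → ℝ → ℂ} (hu : Measurable fun p : ℝ × ℝ => u p.1 p.2)
    (hK : ∀ G : ℝ → ℝ → ℂ, Test a G → ‖∫ t, ∫ x, u t x * (starRingEnd ℂ) (G t x) ∂mu a‖ₑ ≤
      K * nrm a (q / (q - 1)) (r / (r - 1)) G) : nrm a q r u ≤ K := by
  have hr0 : 0 < r := by linarith
  have hq0 : 0 < q := by linarith
  set A : ℕ → ℝ → ℝ≥0∞ := fun n t => ∫⁻ x, ‖trunc a u (n + 1) t x‖ₑ ^ r ∂mu a with hA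
  have hAm : ∀ n, Measurable (A n) := fun n =>
    Measurable.lintegral_prod_right' ((measurable_trunc hu _).enorm.pow_const r)
  set J : ℕ → ℝ → ℝ≥0∞ := fun n t =>
    if ENNReal.ofReal (1 / ((n : ℝ) + 1)) ≤ A n t then A n t ^ (q / r) else 0 with hJ
  have hJm : ∀ n, Measurable (J n) := fun n =>
    Measurable.ite (measurableSet_le measurable_const (hAm n)) ((hAm n).pow_const _)
      measurable_const
  have hJK : ∀ n, ∫⁻ t, J n t ≤ K ^ q := fun n => by
    have h := duality_truncated ha hq hr hK (n := (n : ℝ) + 1)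
      (by have : (0 : ℝ) ≤ n := n.cast_nonneg
          linarith) (measurable_trunc (a := a) hu ((n : ℝ) + 1)) (fun t x => ?_)
    · have := ENNReal.rpow_le_rpow h hq0.le
      rwa [← ENNReal.rpow_mul, one_div_mul_cancel hq0.ne', ENNReal.rpow_one] at this
    · by_cases h : |t| ≤ (n : ℝ) + 1 ∧ wt a x ≤ (n : ℝ) + 1 ∧ ‖u t x‖ ≤ (n : ℝ) + 1
      · right; rw [trunc, if_pos h]; exact ⟨rfl, h⟩
      · left; rw [trunc, if_neg h]
  have hlim : ∀ t, Tendsto (fun n => J n t) atTop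
      (nhds ((∫⁻ x, ‖u t x‖ₑ ^ r ∂mu a) ^ (q / r))) := fun t => by
    have hT : Tendsto (fun n => A n t) atTop (nhds (∫⁻ x, ‖u t x‖ₑ ^ r ∂mu a)) :=
      tendsto_lintegral_trunc hr0 hu t
    have hTp := hT.ennrpow_const (q / r)
    rcases eq_or_ne (∫⁻ x, ‖u t x‖ₑ ^ r ∂mu a) 0 with h0 | h0
    · rw [h0, ENNReal.zero_rpow_of_pos (by positivity)] at hTp ⊢
      refine tendsto_of_tendsto_of_tendsto_of_le_of_le tendsto_const_nhds hTp
        (fun n => zero_le) fun n => ?_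
      simp only [hJ]
      split_ifs
      · rfl
      · exact zero_le
    · have h1 : Tendsto (fun n : ℕ => ENNReal.ofReal (1 / ((n : ℝ) + 1))) atTop (nhds 0) := by
        rw [← ENNReal.ofReal_zero]
        exact (ENNReal.continuous_ofReal.tendsto _).comp tendsto_one_div_add_atTop_nhds_zero_nat
      refine hTp.congr' ?_
      filter_upwards [h1.eventually_lt hT (pos_iff_ne_zero.2 h0)] with n hn
      simp only [hJ]
      rw [if_pos hn.le]
  have hfin : ∫⁻ t, (∫⁻ x, ‖u t x‖ₑ ^ r ∂mu a) ^ (q / r) ≤ K ^ q := by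
    calc _ = ∫⁻ t, liminf (fun n => J n t) atTop :=
          lintegral_congr fun t => (hlim t).liminf_eq.symm
      _ ≤ liminf (fun n => ∫⁻ t, J n t) atTop := lintegral_liminf_le hJm
      _ ≤ K ^ q := by
        refine liminf_le_of_le (by isBoundedDefault) fun b hb => ?_
        obtain ⟨n, hn⟩ := hb.exists
        exact hn.trans (hJK n)
  have := ENNReal.rpow_le_rpow hfin (z := 1 / q) (by positivity)
  rwa [← ENNReal.rpow_mul, mul_one_div_cancel hq0.ne', ENNReal.rpow_one] at this

lemma exists_eLpNorm_duh_le {a q r : ℝ} (ha : 0 ≤ a) (h : Admissible a q r) :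
    ∃ C : ℝ≥0∞, C ≠ ∞ ∧ ∀ (σ : ℝ → ℝ → ℝ) (F : ℝ → ℝ → ℂ), Cutoff σ → Test a F → ∀ t,
      eLpNorm (duh a σ F t) 2 (mu a) ≤ C * nrm a (q / (q - 1)) (r / (r - 1)) F := by
  obtain ⟨C, hC, hb⟩ := exists_lintegral_form_le ha h
  refine ⟨C ^ (1 / 2 : ℝ), ENNReal.rpow_ne_top_of_nonneg (by norm_num) hC,
    fun σ F hσ hF t => ?_⟩
  rw [← ENNReal.pow_le_pow_left_iff two_ne_zero, eLpNorm_two_sq, mul_pow]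
  refine ((lintegral_duh_sq_le ha hσ hF t).trans (hb F F hF hF)).trans_eq ?_
  rw [← ENNReal.rpow_natCast (C ^ _), ← ENNReal.rpow_mul]
  norm_num
  ring

lemma enorm_integral_mul_conj_le {α : Type*} [MeasurableSpace α] {μ : Measure α} {u v : α → ℂ}
    (hu : AEStronglyMeasurable u μ) (hv : AEStronglyMeasurable v μ) :
    ‖∫ x, u x * (starRingEnd ℂ) (v x) ∂μ‖ₑ ≤ eLpNorm u 2 μ * eLpNorm v 2 μ := by
  refine (enorm_integral_le_lintegral_enorm _).trans ?_
  simp_rw [enorm_mul, enorm_conj]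
  exact lintegral_mul_le_eLpNorm_two hu hv

lemma cutoff_one : Cutoff fun _ _ => 1 := ⟨measurable_const, by simp⟩

/-- The homogeneous estimate. -/
lemma exists_nrm_evol_le {a q r : ℝ} (ha : 0 ≤ a) (h : Admissible a q r) :
    ∃ C : ℝ≥0∞, C ≠ ∞ ∧ ∀ f : ℝ → ℂ, Dec a f →
      nrm a q r (fun t x => evol a t f x) ≤ C * eLpNorm f 2 (mu a) := by
  obtain ⟨C, hC, hb⟩ := exists_eLpNorm_duh_le ha h
  refine ⟨C, hC, fun f hf => nrm_le_of_duality ha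
    (by linarith [two_lt_of_admissible ha h]) h.1 ?_ fun G hG => ?_⟩
  · exact (measurable_evol_param ha (F := fun _ => f) (hf.1.comp measurable_snd)).comp
      (f := fun p : ℝ × ℝ => (p.1, 0, p.2)) (by fun_prop)
  have e : ∫ t, ∫ x, evol a t f x * (starRingEnd ℂ) (G t x) ∂mu a =
      (starRingEnd ℂ) (∫ x, duh a (fun _ _ => 1) G 0 x * (starRingEnd ℂ) (f x) ∂mu a) := by
    rw [integral_duh_mul_conj ha cutoff_one hG 0 hf, ← integral_conj]
    refine integral_congr_ae (Eventually.of_forall fun t => ?_)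
    have := form_symm ha t hf (hG.dec t)
    simpa [form] using this
  rw [e, enorm_conj]
  refine (enorm_integral_mul_conj_le ?_ hf.1.aestronglyMeasurable).trans ?_
  · exact ((measurable_duh ha cutoff_one hG.meas).comp
      (f := fun x : ℝ => ((0 : ℝ), x)) (by fun_prop)).aestronglyMeasurable
  · refine (mul_le_mul_left (hb _ G cutoff_one hG 0) _).trans_eq ?_
    ring

/-- Bound for the space-time pairing of the Duhamel integral of `F` with `G`. -/
lemma enorm_pairing_duh_le {a : ℝ} (ha : 0 ≤ a) {σ : ℝ → ℝ → ℝ} (hσ : Cutoff σ)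
    {F G : ℝ → ℝ → ℂ} (hF : Test a F) (hG : Test a G) :
    ‖∫ t, ∫ x, duh a σ F t x * (starRingEnd ℂ) (G t x) ∂mu a‖ₑ ≤
      ∫⁻ t, ∫⁻ s, ‖form a (t - s) (F s) (G t)‖ₑ := by
  refine (enorm_integral_le_lintegral_enorm _).trans (lintegral_mono fun t => ?_)
  rw [integral_duh_mul_conj ha hσ hF t (hG.dec t)]
  exact (enorm_integral_le_lintegral_enorm _).trans (lintegral_mono fun s => hσ.enorm_mul_le t s _)

lemma exists_nrm_duh_le_self {a q r : ℝ} (ha : 0 ≤ a) (h : Admissible a q r) :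
    ∃ C : ℝ≥0∞, C ≠ ∞ ∧ ∀ (σ : ℝ → ℝ → ℝ) (F : ℝ → ℝ → ℂ), Cutoff σ → Test a F →
      nrm a q r (duh a σ F) ≤ C * nrm a (q / (q - 1)) (r / (r - 1)) F := by
  obtain ⟨C, hC, hb⟩ := exists_lintegral_form_le ha h
  exact ⟨C, hC, fun σ F hσ hF => nrm_le_of_duality ha
    (by linarith [two_lt_of_admissible ha h]) h.1 (measurable_duh ha hσ hF.meas)
    fun G hG => (enorm_pairing_duh_le ha hσ hF hG).trans (hb F G hF hG)⟩

/-- Exchanging the roles of `F` and `G` transposes the cutoff. -/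
lemma pairing_duh_symm {a : ℝ} (ha : 0 ≤ a) {σ : ℝ → ℝ → ℝ} (hσ : Cutoff σ)
    {F G : ℝ → ℝ → ℂ} (hF : Test a F) (hG : Test a G) :
    ∫ t, ∫ x, duh a σ F t x * (starRingEnd ℂ) (G t x) ∂mu a =
      (starRingEnd ℂ)
        (∫ t, ∫ x, duh a (fun t s => σ s t) G t x * (starRingEnd ℂ) (F t x) ∂mu a) := by
  have hσ' : Cutoff fun t s => σ s t := ⟨hσ.meas.comp measurable_swap, fun t s => hσ.bound s t⟩
  simp_rw [fun t => integral_duh_mul_conj ha hσ hF t (hG.dec t),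
    fun t => integral_duh_mul_conj ha hσ' hG t (hF.dec t)]
  have hm : Measurable fun p : ℝ × ℝ => (σ p.1 p.2 : ℂ) * form a (p.1 - p.2) (F p.2) (G p.1) :=
    (Complex.measurable_ofReal.comp hσ.meas).mul (measurable_form_param ha hF.meas hG.meas)
  rw [integral_integral_swap, ← integral_conj]
  · refine integral_congr_ae (Eventually.of_forall fun s => ?_)
    simp only
    rw [← integral_conj]
    refine integral_congr_ae (Eventually.of_forall fun t => ?_)
    simp only [map_mul, Complex.conj_ofReal]
    rw [form_symm ha (t - s) (hF.dec s) (hG.dec t), neg_sub]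
  · refine ⟨hm.aestronglyMeasurable, ?_⟩
    simp only [HasFiniteIntegral, Function.uncurry_def]
    rw [lintegral_prod _ hm.enorm.aemeasurable]
    refine lt_of_le_of_lt (b := ∫⁻ t, ∫⁻ s, eLpNorm (G t) 2 (mu a) * eLpNorm (F s) 2 (mu a))
      (lintegral_mono fun t => lintegral_mono_ae ?_) ?_
    · filter_upwards [ae_ne_real t] with s hs
      refine (hσ.enorm_mul_le t s _).trans ?_
      rw [mul_comm]
      exact enorm_form_le_two ha (sub_ne_zero.2 hs.symm) (hF.dec s) (hG.dec t)
    · simp_rw [lintegral_const_mul _ (measurable_eLpNorm_two hF.meas)]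
      rw [lintegral_mul_const _ (measurable_eLpNorm_two hG.meas)]
      exact ENNReal.mul_lt_top (hG.lintegral_eLpNorm_two_lt_top ha)
        (hF.lintegral_eLpNorm_two_lt_top ha)

lemma holderConjugate_div {p : ℝ} (hp : 1 < p) : p.HolderConjugate (p / (p - 1)) :=
  Real.HolderConjugate.conjExponent hp

/-- Hölder's inequality for the mixed norms. -/
lemma enorm_pairing_le_nrm {a q r : ℝ} (hq : 1 < q) (hr : 1 < r) {u v : ℝ → ℝ → ℂ}
    (hu : Measurable fun p : ℝ × ℝ => u p.1 p.2) (hv : Measurable fun p : ℝ × ℝ => v p.1 p.2) :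
    ‖∫ t, ∫ x, u t x * (starRingEnd ℂ) (v t x) ∂mu a‖ₑ ≤
      nrm a q r u * nrm a (q / (q - 1)) (r / (r - 1)) v := by
  have hq' := holderConjugate_div hq
  have hr' := holderConjugate_div hr
  set q' := q / (q - 1)
  set r' := r / (r - 1)
  have hsec : ∀ {w : ℝ → ℝ → ℂ}, Measurable (fun p : ℝ × ℝ => w p.1 p.2) → ∀ t, Measurable (w t) :=
    fun hw t => hw.comp (f := fun x : ℝ => (t, x)) (by fun_prop)
  have hM : ∀ {w : ℝ → ℝ → ℂ}, Measurable (fun p : ℝ × ℝ => w p.1 p.2) → ∀ p : ℝ,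
      Measurable fun t => ∫⁻ x, ‖w t x‖ₑ ^ p ∂mu a :=
    fun hw p => Measurable.lintegral_prod_right' (hw.enorm.pow_const p)
  calc _ ≤ ∫⁻ t, ∫⁻ x, ‖u t x‖ₑ * ‖v t x‖ₑ ∂mu a := by
        refine (enorm_integral_le_lintegral_enorm _).trans (lintegral_mono fun t => ?_)
        refine (enorm_integral_le_lintegral_enorm _).trans_eq (lintegral_congr fun x => ?_)
        rw [enorm_mul, enorm_conj]
    _ ≤ ∫⁻ t, (∫⁻ x, ‖u t x‖ₑ ^ r ∂mu a) ^ (1 / r) * (∫⁻ x, ‖v t x‖ₑ ^ r' ∂mu a) ^ (1 / r') :=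
        lintegral_mono fun t => ENNReal.lintegral_mul_le_Lp_mul_Lq _ hr'
          (hsec hu t).enorm.aemeasurable (hsec hv t).enorm.aemeasurable
    _ ≤ _ := by
        refine (ENNReal.lintegral_mul_le_Lp_mul_Lq _ hq' ((hM hu r).pow_const _).aemeasurable
          ((hM hv r').pow_const _).aemeasurable).trans_eq ?_
        simp only [nrm, ← ENNReal.rpow_mul, one_div_mul_eq_div]

lemma admissible_mul_eq {a q r : ℝ} (ha : 0 ≤ a) (h : Admissible a q r) :
    q * ((a + 1) * (r - 2)) = 4 * r := by
  have hq := two_lt_of_admissible ha h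
  obtain ⟨hr, -, h2⟩ := h
  have hr0 : r ≠ 0 := by linarith
  have hq0 : q ≠ 0 := by linarith
  field_simp at h2
  linarith

/-- Interpolation between the energy norm and an admissible norm. -/
lemma nrm_le_of_interpolation {a q r qt rt : ℝ} (ha : 0 ≤ a) (h : Admissible a q r)
    (ht : Admissible a qt rt) (hle : r ≤ rt) {u : ℝ → ℝ → ℂ}
    (hu : Measurable fun p : ℝ × ℝ => u p.1 p.2) {K : ℝ≥0∞}
    (h2 : ∀ t, eLpNorm (u t) 2 (mu a) ≤ K) (hK : nrm a qt rt u ≤ K) : nrm a q r u ≤ K := by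
  have hq := two_lt_of_admissible ha h
  have hqt := two_lt_of_admissible ha ht
  have e1 := admissible_mul_eq ha h
  have e2 := admissible_mul_eq ha ht
  have hr := h.1
  have hrt := ht.1
  have hrt2 : 0 < rt - 2 := by linarith
  have hr0 : 0 < r := by linarith
  have hq0 : 0 < q := by linarith
  have hqt0 : 0 < qt := by linarith
  have hrt0 : 0 < rt := by linarith
  set p := (rt - r) / (rt - 2) with hp
  have hp0 : 0 ≤ p := div_nonneg (by linarith) hrt2.le
  have hp1 : 1 - p = (r - 2) / (rt - 2) := by rw [hp]; field_simp; ring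
  have hp1' : 0 ≤ 1 - p := by rw [hp1]; exact div_nonneg (by linarith) hrt2.le
  have hexp : (1 - p) * (q / r) = qt / rt := by
    rw [hp1]
    have ha1 : (a + 1) ≠ 0 := by linarith
    field_simp
    apply mul_left_cancel₀ ha1
    have : rt * (q * ((a + 1) * (r - 2))) = r * (qt * ((a + 1) * (rt - 2))) := by
      rw [e1, e2]; ring
    linarith
  have hsum : 2 * p * (q / r) + qt = q := by
    have e : qt = (1 - p) * (q / r) * rt := by rw [hexp]; field_simp
    rw [e, hp1, hp]
    field_simp
    ring
  have hpt : ∀ t, (∫⁻ x, ‖u t x‖ₑ ^ r ∂mu a) ^ (q / r) ≤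
      K ^ (2 * p * (q / r)) * (∫⁻ x, ‖u t x‖ₑ ^ rt ∂mu a) ^ (qt / rt) := fun t => by
    have hut : Measurable (u t) := hu.comp (f := fun x : ℝ => (t, x)) (by fun_prop)
    have hH := ENNReal.lintegral_mul_norm_pow_le (μ := mu a) (f := fun x => ‖u t x‖ₑ ^ (2 : ℝ))
      (g := fun x => ‖u t x‖ₑ ^ rt) (hut.enorm.pow_const _).aemeasurable
      (hut.enorm.pow_const _).aemeasurable hp0 hp1' (by ring)
    have e : ∀ x, ‖u t x‖ₑ ^ r = (‖u t x‖ₑ ^ (2 : ℝ)) ^ p * (‖u t x‖ₑ ^ rt) ^ (1 - p) := fun x => by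
      rw [← ENNReal.rpow_mul, ← ENNReal.rpow_mul, ← ENNReal.rpow_add_of_nonneg _ _ (by positivity)
        (by positivity)]
      congr 1
      rw [hp1, hp]
      field_simp
      ring
    have hE : ∫⁻ x, ‖u t x‖ₑ ^ (2 : ℝ) ∂mu a ≤ K ^ (2 : ℝ) := by
      have := pow_le_pow_left' (h2 t) 2
      rw [eLpNorm_two_sq] at this
      exact_mod_cast this
    calc _ ≤ ((∫⁻ x, ‖u t x‖ₑ ^ (2 : ℝ) ∂mu a) ^ p *
          (∫⁻ x, ‖u t x‖ₑ ^ rt ∂mu a) ^ (1 - p)) ^ (q / r) := by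
          simp_rw [e]
          exact ENNReal.rpow_le_rpow hH (by positivity)
      _ ≤ ((K ^ (2 : ℝ)) ^ p * (∫⁻ x, ‖u t x‖ₑ ^ rt ∂mu a) ^ (1 - p)) ^ (q / r) := by
          gcongr
      _ = _ := by
          rw [ENNReal.mul_rpow_of_nonneg _ _ (by positivity), ← ENNReal.rpow_mul,
            ← ENNReal.rpow_mul, ← ENNReal.rpow_mul, hexp, mul_assoc 2 p]
  have hKq : ∫⁻ t, (∫⁻ x, ‖u t x‖ₑ ^ rt ∂mu a) ^ (qt / rt) ≤ K ^ qt := by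
    have := ENNReal.rpow_le_rpow hK hqt0.le
    rwa [nrm, ← ENNReal.rpow_mul, one_div_mul_cancel hqt0.ne', ENNReal.rpow_one] at this
  calc nrm a q r u ≤ (K ^ q) ^ (1 / q) := by
        refine ENNReal.rpow_le_rpow ?_ (by positivity)
        refine (lintegral_mono hpt).trans ?_
        rw [lintegral_const_mul _ ((Measurable.lintegral_prod_right'
          (hu.enorm.pow_const rt)).pow_const _)]
        refine (mul_le_mul_right hKq _).trans_eq ?_
        rw [← ENNReal.rpow_add_of_nonneg _ _ (by positivity) (by positivity), hsum]
    _ = K := by rw [← ENNReal.rpow_mul, mul_one_div_cancel hq0.ne', ENNReal.rpow_one]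

lemma exists_nrm_duh_le_of_le {a q r qt rt : ℝ} (ha : 0 ≤ a) (h : Admissible a q r)
    (ht : Admissible a qt rt) (hle : r ≤ rt) :
    ∃ C : ℝ≥0∞, C ≠ ∞ ∧ ∀ (σ : ℝ → ℝ → ℝ) (F : ℝ → ℝ → ℂ), Cutoff σ → Test a F →
      nrm a q r (duh a σ F) ≤ C * nrm a (qt / (qt - 1)) (rt / (rt - 1)) F := by
  obtain ⟨C₁, hC₁, hb₁⟩ := exists_eLpNorm_duh_le ha ht
  obtain ⟨C₂, hC₂, hb₂⟩ := exists_nrm_duh_le_self ha ht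
  refine ⟨max C₁ C₂, by simp [hC₁, hC₂], fun σ F hσ hF => nrm_le_of_interpolation ha h ht hle
    (measurable_duh ha hσ hF.meas) (fun t => ?_) ?_⟩
  · exact (hb₁ σ F hσ hF t).trans (mul_le_mul_left (le_max_left _ _) _)
  · exact (hb₂ σ F hσ hF).trans (mul_le_mul_left (le_max_right _ _) _)

/-- The inhomogeneous estimate for two admissible pairs. -/
lemma exists_nrm_duh_le {a q r qt rt : ℝ} (ha : 0 ≤ a) (h : Admissible a q r)
    (ht : Admissible a qt rt) :
    ∃ C : ℝ≥0∞, C ≠ ∞ ∧ ∀ (σ : ℝ → ℝ → ℝ) (F : ℝ → ℝ → ℂ), Cutoff σ → Test a F →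
      nrm a q r (duh a σ F) ≤ C * nrm a (qt / (qt - 1)) (rt / (rt - 1)) F := by
  rcases le_total r rt with hle | hle
  · exact exists_nrm_duh_le_of_le ha h ht hle
  have hq := two_lt_of_admissible ha h
  have hqt := two_lt_of_admissible ha ht
  obtain ⟨C, hC, hb⟩ := exists_nrm_duh_le_of_le ha ht h hle
  refine ⟨C, hC, fun σ F hσ hF => nrm_le_of_duality ha (by linarith) h.1
    (measurable_duh ha hσ hF.meas) fun G hG => ?_⟩
  have hσ' : Cutoff fun t s => σ s t := ⟨hσ.meas.comp measurable_swap, fun t s => hσ.bound s t⟩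
  rw [pairing_duh_symm ha hσ hF hG, enorm_conj]
  refine (enorm_pairing_le_nrm (q := qt) (r := rt) (by linarith) (by linarith [ht.1])
    (measurable_duh ha hσ' hG.meas) hF.meas).trans ?_
  refine (mul_le_mul_left (hb _ G hσ' hG) _).trans_eq ?_
  ring

lemma nrm_add_le {a q r : ℝ} (hq : 1 ≤ q) (hr : 1 ≤ r) {u v : ℝ → ℝ → ℂ}
    (hu : Measurable fun p : ℝ × ℝ => u p.1 p.2) (hv : Measurable fun p : ℝ × ℝ => v p.1 p.2) :
    nrm a q r (fun t x => u t x + v t x) ≤ nrm a q r u + nrm a q r v := by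
  have hsec : ∀ {w : ℝ → ℝ → ℂ}, Measurable (fun p : ℝ × ℝ => w p.1 p.2) → ∀ t, Measurable (w t) :=
    fun hw t => hw.comp (f := fun x : ℝ => (t, x)) (by fun_prop)
  have hM : ∀ {w : ℝ → ℝ → ℂ}, Measurable (fun p : ℝ × ℝ => w p.1 p.2) →
      Measurable fun t => (∫⁻ x, ‖w t x‖ₑ ^ r ∂mu a) ^ (1 / r) :=
    fun hw => (Measurable.lintegral_prod_right' (hw.enorm.pow_const r)).pow_const _
  have e : ∀ w : ℝ → ℝ → ℂ, nrm a q r w =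
      (∫⁻ t, ((∫⁻ x, ‖w t x‖ₑ ^ r ∂mu a) ^ (1 / r)) ^ q) ^ (1 / q) := fun w => by
    simp only [nrm, ← ENNReal.rpow_mul, one_div_mul_eq_div]
  rw [e, e, e]
  refine le_trans ?_ (ENNReal.lintegral_Lp_add_le (hM hu).aemeasurable (hM hv).aemeasurable hq)
  refine ENNReal.rpow_le_rpow (lintegral_mono fun t => ENNReal.rpow_le_rpow ?_ (by positivity))
    (by positivity)
  refine le_trans ?_ (ENNReal.lintegral_Lp_add_le (hsec hu t).enorm.aemeasurable
    (hsec hv t).enorm.aemeasurable hr)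
  refine ENNReal.rpow_le_rpow (lintegral_mono fun x => ENNReal.rpow_le_rpow ?_ (by positivity))
    (by positivity)
  exact enorm_add_le _ _

lemma lintegral_enorm_rpow_mu {a r : ℝ} (hr : 0 < r) (f : ℝ → ℂ) :
    ∫⁻ x in Ioi (0 : ℝ), ‖‖f x‖ ^ r * x ^ a‖ₑ = ∫⁻ x, ‖f x‖ₑ ^ r ∂mu a := by
  rw [lintegral_mu]
  refine setLIntegral_congr_fun measurableSet_Ioi fun x hx => ?_
  have hx' : (0 : ℝ) ≤ x ^ a := Real.rpow_nonneg (le_of_lt hx) _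
  rw [enorm_mul, Real.enorm_rpow_of_nonneg (norm_nonneg _) hr.le, enorm_norm, mul_comm,
    Real.enorm_of_nonneg hx']

lemma integral_norm_rpow_nonneg (a r : ℝ) (f : ℝ → ℂ) :
    0 ≤ ∫ x in Ioi (0 : ℝ), ‖f x‖ ^ r * x ^ a :=
  setIntegral_nonneg measurableSet_Ioi fun x hx =>
    mul_nonneg (by positivity) (Real.rpow_nonneg (le_of_lt hx) _)

lemma LrA_nonneg (a r : ℝ) (f : ℝ → ℂ) : 0 ≤ LrA a r f :=
  Real.rpow_nonneg (integral_norm_rpow_nonneg a r f) _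

lemma mixedNorm_nonneg (a q r : ℝ) (u : ℝ → ℝ → ℂ) : 0 ≤ mixedNorm a q r u :=
  Real.rpow_nonneg (integral_nonneg fun _ => Real.rpow_nonneg (LrA_nonneg a r _) _) _

lemma enorm_LrA_le {a r : ℝ} (hr : 0 < r) (f : ℝ → ℂ) :
    ‖LrA a r f‖ₑ ≤ (∫⁻ x, ‖f x‖ₑ ^ r ∂mu a) ^ (1 / r) := by
  rw [LrA, Real.enorm_rpow_of_nonneg (integral_norm_rpow_nonneg a r f) (by positivity),
    ← lintegral_enorm_rpow_mu hr]
  exact ENNReal.rpow_le_rpow (enorm_integral_le_lintegral_enorm _) (by positivity)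

lemma enorm_integral_eq_of_nonneg {α : Type*} [MeasurableSpace α] {μ : Measure α} {g : α → ℝ}
    (hg : AEStronglyMeasurable g μ) (h0 : 0 ≤ᵐ[μ] g) (hfin : ∫⁻ x, ‖g x‖ₑ ∂μ < ∞) :
    ‖∫ x, g x ∂μ‖ₑ = ∫⁻ x, ‖g x‖ₑ ∂μ := by
  rw [Real.enorm_of_nonneg (integral_nonneg_of_ae h0),
    ofReal_integral_eq_lintegral_ofReal ⟨hg, hfin⟩ h0]
  refine lintegral_congr_ae ?_
  filter_upwards [h0] with x hx
  rw [Real.enorm_of_nonneg hx]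

lemma enorm_LrA_eq {a r : ℝ} (hr : 0 < r) {f : ℝ → ℂ} (hf : Measurable f)
    (hfin : ∫⁻ x, ‖f x‖ₑ ^ r ∂mu a < ∞) :
    ‖LrA a r f‖ₑ = (∫⁻ x, ‖f x‖ₑ ^ r ∂mu a) ^ (1 / r) := by
  rw [LrA, Real.enorm_rpow_of_nonneg (integral_norm_rpow_nonneg a r f) (by positivity),
    ← lintegral_enorm_rpow_mu hr, enorm_integral_eq_of_nonneg]
  · exact ((hf.norm.pow_const r).mul (measurable_id.pow_const a)).aestronglyMeasurable
  · filter_upwards [ae_restrict_mem measurableSet_Ioi] with x hx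
    exact mul_nonneg (by positivity) (Real.rpow_nonneg (le_of_lt hx) _)
  · rwa [lintegral_enorm_rpow_mu hr]

lemma enorm_mixedNorm_le {a q r : ℝ} (hq : 0 < q) (hr : 0 < r) (u : ℝ → ℝ → ℂ) :
    ‖mixedNorm a q r u‖ₑ ≤ nrm a q r (fun t x => u x t) := by
  rw [mixedNorm, Real.enorm_rpow_of_nonneg (integral_nonneg fun _ =>
    Real.rpow_nonneg (LrA_nonneg a r _) _) (by positivity)]
  refine ENNReal.rpow_le_rpow ((enorm_integral_le_lintegral_enorm _).trans
    (lintegral_mono fun t => ?_)) (by positivity)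
  rw [Real.enorm_rpow_of_nonneg (LrA_nonneg a r _) hq.le]
  refine (ENNReal.rpow_le_rpow (enorm_LrA_le hr _) hq.le).trans_eq ?_
  rw [← ENNReal.rpow_mul, one_div_mul_eq_div]

lemma Test.nrm_integrand_lt_top {a q r : ℝ} (ha : 0 ≤ a) (hq : 1 ≤ q) (hr : 1 ≤ r)
    {F : ℝ → ℝ → ℂ} (hF : Test a F) :
    ∫⁻ t, (∫⁻ x, ‖F t x‖ₑ ^ r ∂mu a) ^ (q / r) < ∞ := by
  obtain ⟨M, hM⟩ := hF.bound
  have hr0 : 0 < r := by linarith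
  have hq0 : 0 < q := by linarith
  set w : ℝ → ℂ := fun x => ((M * (wt a x)⁻¹ : ℝ) : ℂ) with hw
  have hwd : Dec a w := by
    refine ⟨Complex.measurable_ofReal.comp ((measurable_wt a).inv.const_mul M), |M|, fun x => ?_⟩
    rw [hw, Complex.norm_real, norm_mul, Real.norm_eq_abs, norm_inv,
      Real.norm_of_nonneg (wt_pos a x).le]
  have hwf := hwd.lintegral_rpow_lt_top ha hr
  set W := ∫⁻ x, ‖w x‖ₑ ^ r ∂mu a with hW
  have hpt : ∀ t, (∫⁻ x, ‖F t x‖ₑ ^ r ∂mu a) ^ (q / r) ≤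
      ENNReal.ofReal ((1 + t ^ 2)⁻¹) * W ^ (q / r) := fun t => by
    set c := ENNReal.ofReal ((1 + t ^ 2)⁻¹) with hc
    have hc1 : c ≤ 1 := by
      rw [hc, ENNReal.ofReal_le_one]
      exact inv_le_one_of_one_le₀ (by nlinarith [sq_nonneg t])
    have h1 : ∀ x, ‖F t x‖ₑ ≤ c * ‖w x‖ₑ := fun x => by
      rw [← ofReal_norm (F t x), ← ofReal_norm (w x), hc, ← ENNReal.ofReal_mul (by positivity)]
      refine ENNReal.ofReal_le_ofReal ((hM t x).trans ?_)
      rw [hw, Complex.norm_real]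
      have := le_abs_self (M * (wt a x)⁻¹)
      rw [Real.norm_eq_abs, mul_right_comm, mul_comm]
      exact mul_le_mul_of_nonneg_left this (by positivity)
    calc _ ≤ (∫⁻ x, c ^ r * ‖w x‖ₑ ^ r ∂mu a) ^ (q / r) := by
          refine ENNReal.rpow_le_rpow (lintegral_mono fun x => ?_) (by positivity)
          rw [← ENNReal.mul_rpow_of_nonneg _ _ hr0.le]
          exact ENNReal.rpow_le_rpow (h1 x) hr0.le
      _ = c ^ q * W ^ (q / r) := by
          rw [lintegral_const_mul _ (hwd.1.enorm.pow_const r),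
            ENNReal.mul_rpow_of_nonneg _ _ (by positivity), ← ENNReal.rpow_mul,
            mul_div_cancel₀ _ hr0.ne']
      _ ≤ _ := by
          gcongr
          exact ENNReal.rpow_le_self_of_le_one hc1 hq
  refine (lintegral_mono hpt).trans_lt ?_
  rw [lintegral_mul_const _ (by fun_prop)]
  exact ENNReal.mul_lt_top integrable_inv_one_add_sq.lintegral_lt_top
    (ENNReal.rpow_lt_top_of_nonneg (by positivity) hwf.ne)

lemma Test.enorm_mixedNorm_eq {a q r : ℝ} (ha : 0 ≤ a) (hq : 1 ≤ q) (hr : 1 ≤ r)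
    {F : ℝ → ℝ → ℂ} (hF : Test a F) :
    ‖mixedNorm a q r (fun x t => F t x)‖ₑ = nrm a q r F := by
  have hr0 : 0 < r := by linarith
  have hq0 : 0 < q := by linarith
  have e : ∀ t, ‖LrA a r (F t) ^ q‖ₑ = (∫⁻ x, ‖F t x‖ₑ ^ r ∂mu a) ^ (q / r) := fun t => by
    rw [Real.enorm_rpow_of_nonneg (LrA_nonneg a r _) hq0.le, enorm_LrA_eq hr0 (hF.dec t).1
      ((hF.dec t).lintegral_rpow_lt_top ha hr), ← ENNReal.rpow_mul, one_div_mul_eq_div]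
  have hmeas : Measurable fun t => LrA a r (F t) := by
    unfold LrA
    refine Measurable.pow_const ?_ _
    exact (StronglyMeasurable.integral_prod_right (ν := volume.restrict (Ioi (0 : ℝ)))
      (f := fun t x => ‖F t x‖ ^ r * x ^ a)
      (((hF.meas.norm.pow_const r).mul (measurable_snd.pow_const a)).stronglyMeasurable)).measurable
  rw [mixedNorm, Real.enorm_rpow_of_nonneg (integral_nonneg fun _ =>
    Real.rpow_nonneg (LrA_nonneg a r _) _) (by positivity), enorm_integral_eq_of_nonneg]
  · simp only [e, nrm]
  · exact (hmeas.pow_const q).aestronglyMeasurable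
  · exact Eventually.of_forall fun t => Real.rpow_nonneg (LrA_nonneg a r _) _
  · simp only [e]
    exact hF.nrm_integrand_lt_top ha hq hr

lemma norm_indicator_le_of_pos {f : ℝ → ℂ} {M b x : ℝ} (hM : 0 ≤ M * b)
    (h : 0 < x → ‖f x‖ ≤ M * b) : ‖(Ioi (0 : ℝ)).indicator f x‖ ≤ M * b := by
  by_cases hx : x ∈ Ioi (0 : ℝ)
  · rw [indicator_of_mem hx]; exact h hx
  · rwa [indicator_of_notMem hx, norm_zero]

lemma measurable_indicator_of_continuousOn {α : Type*} [TopologicalSpace α] [MeasurableSpace α]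
    [OpensMeasurableSpace α] {s : Set α} (hs : MeasurableSet s) {f : α → ℂ}
    (hf : ContinuousOn f s) : Measurable (s.indicator f) := by
  classical
  rw [← piecewise_eq_indicator]
  exact hf.measurable_piecewise continuousOn_const hs

lemma dec_indicator_of_sPlus {φ : ℝ → ℂ} (hφ : SPlus φ) (a : ℝ) :
    Dec a ((Ioi (0 : ℝ)).indicator φ) := by
  obtain ⟨C₀, h₀⟩ := hφ.2 0 0
  obtain ⟨C₁, h₁⟩ := hφ.2 (2 * (⌈a⌉₊ + 1)) 0
  have hC : 0 ≤ C₀ + C₁ :=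
    add_nonneg ((norm_nonneg _).trans (h₀ 1 one_pos)) ((norm_nonneg _).trans (h₁ 1 one_pos))
  refine ⟨?_, C₀ + C₁, fun x => norm_indicator_le_of_pos
    (mul_nonneg hC (inv_pos.2 (wt_pos a x)).le) fun hx => ?_⟩
  · exact measurable_indicator_of_continuousOn measurableSet_Ioi hφ.1.continuousOn
  · rw [← div_eq_mul_inv, le_div_iff₀ (wt_pos a x), wt]
    have e0 := h₀ x hx
    have e1 := h₁ x hx
    simp only [pow_zero, one_mul, DIter, norm_mul, norm_pow, Complex.norm_real,
      Real.norm_of_nonneg hx.le] at e0 e1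
    linarith

lemma test_indicator_of_sPlusT {F : ℝ → ℝ → ℂ} (hF : SPlusT F) (a : ℝ) :
    Test a (fun s => (Ioi (0 : ℝ)).indicator fun y => F y s) := by
  set N := ⌈a⌉₊ + 1 with hN
  obtain ⟨C, hC⟩ := hF.2 (2 * (N + 1))
  have hb : ∀ x > (0 : ℝ), ∀ t : ℝ, (1 + x ^ 2 + t ^ 2) ^ (N + 1) * ‖F x t‖ ≤ C := fun x hx t => by
    have := hC 0 0 (by simp) x hx t
    rw [show ((2 * (N + 1) : ℕ) : ℝ) / 2 = ((N + 1 : ℕ) : ℝ) by push_cast; ring,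
      Real.rpow_natCast] at this
    simpa [DxIter, DtIter] using this
  have hC0 : 0 ≤ C := le_trans (by positivity) (hb 1 one_pos 0)
  refine ⟨?_, 2 * C, fun s x => norm_indicator_le_of_pos
    (mul_nonneg (by positivity) (inv_pos.2 (wt_pos a x)).le) fun hx => ?_⟩
  · have e : (fun p : ℝ × ℝ => (Ioi (0 : ℝ)).indicator (fun y => F y p.1) p.2) =
        (Ioi (0 : ℝ) ×ˢ univ).indicator (fun p : ℝ × ℝ => F p.1 p.2) ∘ Prod.swap := by
      ext p
      by_cases hp : 0 < p.2 <;> simp [indicator, hp]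
    rw [e]
    refine Measurable.comp ?_ measurable_swap
    exact measurable_indicator_of_continuousOn (measurableSet_Ioi.prod MeasurableSet.univ)
      hF.1.continuousOn
  · have hs : 0 < 1 + s ^ 2 := by positivity
    rw [← div_eq_mul_inv, ← div_eq_mul_inv, le_div_iff₀ (wt_pos a x), le_div_iff₀ hs]
    set B := 1 + x ^ 2 + s ^ 2 with hB
    have hB1 : 1 ≤ B := by nlinarith [sq_nonneg x, sq_nonneg s]
    have hw : wt a x ≤ 2 * B ^ N := by
      rw [wt, ← hN, pow_mul]
      have h1 : (x ^ 2) ^ N ≤ B ^ N :=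
        pow_le_pow_left₀ (sq_nonneg x) (by nlinarith [sq_nonneg s]) N
      have h2 : 1 ≤ B ^ N := one_le_pow₀ hB1
      linarith
    have hs' : 1 + s ^ 2 ≤ B := by nlinarith [sq_nonneg x]
    calc ‖F x s‖ * wt a x * (1 + s ^ 2) ≤ ‖F x s‖ * (2 * B ^ N) * B := by
          gcongr
      _ = 2 * (B ^ (N + 1) * ‖F x s‖) := by ring
      _ ≤ 2 * C := by linarith [hb x hx s]

lemma setIntegral_Skernel_eq_evol {a : ℝ} (ha : 0 ≤ a) {x : ℝ} (hx : 0 < x) (t : ℝ) (f : ℝ → ℂ) :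
    ∫ y in Ioi (0 : ℝ), Skernel a x y t * f y * ((y ^ a : ℝ) : ℂ) =
      evol a t ((Ioi (0 : ℝ)).indicator f) x := by
  rw [evol, integral_mu]
  refine setIntegral_congr_fun measurableSet_Ioi fun y hy => ?_
  simp only [indicator_of_mem hy]
  rw [Skernel_eq_kern ha hx hy, Complex.real_smul]
  ring

/-- The cutoff that turns the whole-line Duhamel integral into the one from `0` to `t`. -/
noncomputable def orient (t s : ℝ) : ℝ :=
  (if 0 < s ∧ s ≤ t then 1 else 0) - (if t < s ∧ s ≤ 0 then 1 else 0)

lemma cutoff_orient : Cutoff orient := by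
  constructor
  · refine Measurable.sub (Measurable.ite ?_ measurable_const measurable_const)
      (Measurable.ite ?_ measurable_const measurable_const)
    · exact (measurableSet_lt measurable_const measurable_snd).inter
        (measurableSet_le measurable_snd measurable_fst)
    · exact (measurableSet_lt measurable_fst measurable_snd).inter
        (measurableSet_le measurable_snd measurable_const)
  · intro t s
    unfold orient
    split_ifs <;> norm_num

lemma intervalIntegral_eq_orient (t : ℝ) (f : ℝ → ℂ) :
    ∫ s in (0 : ℝ)..t, f s = ∫ s, (orient t s : ℂ) * f s := by
  rcases le_total 0 t with ht | ht
  · rw [intervalIntegral.integral_of_le ht, ← integral_indicator measurableSet_Ioc]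
    refine integral_congr_ae (Eventually.of_forall fun s => ?_)
    have h2 : ¬ (t < s ∧ s ≤ 0) := fun h => by linarith [h.1, h.2]
    by_cases h : 0 < s ∧ s ≤ t <;> simp [indicator, orient, h, h2]
  · rw [intervalIntegral.integral_of_ge ht, ← integral_indicator measurableSet_Ioc, ← integral_neg]
    refine integral_congr_ae (Eventually.of_forall fun s => ?_)
    have h2 : ¬ (0 < s ∧ s ≤ t) := fun h => by linarith [h.1, h.2]
    by_cases h : t < s ∧ s ≤ 0 <;> simp [indicator, orient, h, h2]

lemma LrA_congr {a r : ℝ} {f g : ℝ → ℂ} (h : ∀ x > 0, f x = g x) : LrA a r f = LrA a r g := by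
  unfold LrA
  rw [setIntegral_congr_fun measurableSet_Ioi fun x hx => by rw [h x hx]]

lemma mixedNorm_congr {a q r : ℝ} {u v : ℝ → ℝ → ℂ} (h : ∀ x > 0, ∀ t, u x t = v x t) :
    mixedNorm a q r u = mixedNorm a q r v := by
  unfold mixedNorm
  simp_rw [fun t => LrA_congr (a := a) (r := r) fun x hx => h x hx t]

lemma Dec.enorm_LrA_two_eq {a : ℝ} (ha : 0 ≤ a) {f : ℝ → ℂ} (hf : Dec a f) :
    ‖LrA a 2 f‖ₑ = eLpNorm f 2 (mu a) := by
  rw [enorm_LrA_eq two_pos hf.1 (hf.lintegral_rpow_lt_top ha one_le_two),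
    eLpNorm_eq_lintegral_rpow_enorm_toReal two_ne_zero ENNReal.ofNat_ne_top]
  simp

end Strichartz

open Strichartz

/-- Strichartz estimate with two different admissible pairs: for `a ≥ 0` and `a`-admissible
pairs `(q,r)` and `(q̃,r̃)`, `‖u‖_{L^q_t L^r_a} ≤ C(‖φ‖_{L²_a} + ‖F‖_{L^{q̃'}_t L^{r̃'}_a})`. -/
theorem strichartz_estimate_two_pairs (a q r qt rt : ℝ) (ha : 0 ≤ a)
    (hadm : Admissible a q r) (hadmt : Admissible a qt rt) :
    ∃ C > (0:ℝ), ∀ φ : ℝ → ℂ, SPlus φ → ∀ F : ℝ → ℝ → ℂ, SPlusT F →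
      mixedNorm a q r (fun x t =>
          Sop a t φ x +
            ∫ s in (0:ℝ)..t, ∫ y in Ioi (0:ℝ),
              Skernel a x y (t - s) * F y s * ((y ^ a : ℝ) : ℂ)) ≤
        C * (LrA a 2 φ + mixedNorm a (qt / (qt - 1)) (rt / (rt - 1)) F) := by
  have hq := two_lt_of_admissible ha hadm
  have hqt := two_lt_of_admissible ha hadmt
  have hr := hadm.1
  have hrt := hadmt.1
  obtain ⟨C₁, hC₁, hb₁⟩ := exists_nrm_evol_le ha hadm
  obtain ⟨C₂, hC₂, hb₂⟩ := exists_nrm_duh_le ha hadm hadmt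
  have hCt : max C₁ C₂ ≠ ⊤ := by simp [hC₁, hC₂]
  refine ⟨(max C₁ C₂).toReal + 1, by positivity, fun φ hφ F hF => ?_⟩
  set f : ℝ → ℂ := (Ioi (0 : ℝ)).indicator φ with hf
  set G : ℝ → ℝ → ℂ := fun s => (Ioi (0 : ℝ)).indicator fun y => F y s with hG
  have hfd : Dec a f := dec_indicator_of_sPlus hφ a
  have hGt : Test a G := test_indicator_of_sPlusT hF a
  have hu : ∀ x > (0 : ℝ), ∀ t, Sop a t φ x + ∫ s in (0:ℝ)..t, ∫ y in Ioi (0:ℝ),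
      Skernel a x y (t - s) * F y s * ((y ^ a : ℝ) : ℂ) = evol a t f x + duh a orient G t x := by
    intro x hx t
    rw [Sop, setIntegral_Skernel_eq_evol ha hx, intervalIntegral_eq_orient, duh]
    simp_rw [fun s => setIntegral_Skernel_eq_evol ha hx (t - s) fun y => F y s]
    rfl
  rw [mixedNorm_congr hu,
    LrA_congr (g := f) fun x hx => (indicator_of_mem (show x ∈ Ioi 0 from hx) φ).symm,
    mixedNorm_congr (u := F) (v := fun x t => G t x) fun x hx t =>
      (indicator_of_mem (show x ∈ Ioi 0 from hx) fun y => F y t).symm]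
  have hconj : ∀ p : ℝ, 2 < p → 1 ≤ p / (p - 1) := fun p hp => by
    rw [le_div_iff₀ (by linarith)]; linarith
  have key : ‖mixedNorm a q r fun x t => evol a t f x + duh a orient G t x‖ₑ ≤ max C₁ C₂ *
      (‖LrA a 2 f‖ₑ + ‖mixedNorm a (qt / (qt - 1)) (rt / (rt - 1)) fun x t => G t x‖ₑ) := by
    rw [hfd.enorm_LrA_two_eq ha, hGt.enorm_mixedNorm_eq ha (hconj qt hqt) (hconj rt hrt), mul_add]
    refine (enorm_mixedNorm_le (by linarith) (by linarith) _).trans ?_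
    refine (nrm_add_le (u := fun t x => evol a t f x) (by linarith) (by linarith) ?_
      (measurable_duh ha cutoff_orient hGt.meas)).trans (add_le_add ?_ ?_)
    · exact (measurable_evol_param ha (F := fun _ => f) (hfd.1.comp measurable_snd)).comp
        (f := fun p : ℝ × ℝ => (p.1, 0, p.2)) (by fun_prop)
    · exact (hb₁ f hfd).trans (mul_le_mul_left (le_max_left _ _) _)
    · exact (hb₂ _ G cutoff_orient hGt).trans (mul_le_mul_left (le_max_right _ _) _)
  have hL := LrA_nonneg a 2 f
  have hM := mixedNorm_nonneg a (qt / (qt - 1)) (rt / (rt - 1)) fun x t => G t x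
  rw [Real.enorm_of_nonneg (mixedNorm_nonneg _ _ _ _), Real.enorm_of_nonneg hL,
    Real.enorm_of_nonneg hM, ← ENNReal.ofReal_add hL hM, ← ENNReal.ofReal_toReal hCt,
    ← ENNReal.ofReal_mul ENNReal.toReal_nonneg, ENNReal.ofReal_le_ofReal_iff (by positivity)] at key
  refine key.trans (mul_le_mul_of_nonneg_right (by linarith) (by positivity))
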